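/- arXiv:1209.5813 — 6 statements merged into one kernel-verified Lean document; each statement's English description precedes it below -/
import Mathlib

section
/- Let φ : 𝔾_{a(r)} → U be a homomorphism of affine group schemes with comorphism φ* : k[U] → k[t]/(t^{p^r}). Let λ ≠ 0 be a T-weight and x ∈ k[U]_λ, and write φ*(x) = a₁t + a₂t² + ⋯ + a_{p^r−1}t^{p^r−1} with a_i ∈ k. If φ*(x) ≠ 0 and m is the largest integer with a_m ≠ 0, then m ≤ |ht_J(λ)|·p^{r−1}. -/
/-!
STATEMENT 2 (Lemma 2.4, `degree`):  `G` reductive over an algebraically closed field `k`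
of good characteristic `p`, `P` a parabolic with unipotent radical `U`.  We work with the
coordinate Hopf algebra `k[U] = k[Y_{α₁},…,Y_{α_n}]`, modelled as `MvPolynomial ι k` where
`ι` indexes the roots `Φ⁺ \ Φ_J⁺` of `U`; the generator `X i = Y_{α_i}` has `T`-weight
`-α_i`, so the weight space `k[U]_λ` is the weighted-homogeneous submodule for the weight
function `i ↦ -root i`.  The comultiplication `comul` of `k[U]` satisfies the counit laws
and the `T`-equivariance property (2) of the paper, recorded as hypotheses.  `𝔾_{a(r)}`
has coordinate algebra `k[t]/(t^{p^r})`, with comultiplication `ΔQ` and counit `εQ`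
induced from those of `k[t]`, and `ψ = φ*` is the comorphism of a group scheme
homomorphism `φ : 𝔾_{a(r)} → U`, i.e. a `k`-algebra map that is compatible with the
comultiplications and counits.

Claim: if `λ ≠ 0`, `x ∈ k[U]_λ`, and `φ*(x) = a₁ t + ⋯ + a_{p^r-1} t^{p^r-1} ≠ 0`
(write `q` for this representative of degree `< p^r`) and `m` is the largest index with
`a_m ≠ 0` (i.e. `m = q.natDegree`), then `m ≤ |ht_J(λ)| ⬝ p^{r-1}`.
-/

noncomputable section

open Polynomial MvPolynomial TensorProduct
open scoped TensorProduct

namespace Stmt2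

variable (k : Type) [Field k]

/-- The comultiplication of `k[t]`: `Δ t = t ⊗ 1 + 1 ⊗ t`. -/
def gaComul : Polynomial k →ₐ[k] Polynomial k ⊗[k] Polynomial k :=
  Polynomial.aeval (Polynomial.X ⊗ₜ[k] (1 : Polynomial k) + (1 : Polynomial k) ⊗ₜ[k] Polynomial.X)

/-- The counit of `k[t]`: evaluation at `0`. -/
def gaCounit : Polynomial k →ₐ[k] k := Polynomial.aeval 0

/-- The Hopf ideal `(t^m)` of `k[t]`. -/
def gaI (m : ℕ) : Ideal (Polynomial k) := Ideal.span {Polynomial.X ^ m}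

/-- The canonical projection `π : k[t] → k[t]/(t^m)`. -/
def gaπ (m : ℕ) : Polynomial k →ₐ[k] Polynomial k ⧸ gaI k m :=
  Ideal.Quotient.mkₐ k (gaI k m)

variable (ι Λ : Type) [AddCommGroup Λ]

/-- The `T`-weight space `k[U]_λ`:  `k[U] = k[Y_{α₁},…,Y_{α_n}]` with `Y_{α_i}` of weight
`-α_i`, so `k[U]_λ` is spanned by the monomials of total weight `λ` for the weight
function `i ↦ -root i`. -/
def wtSub (root : ι → Λ) (lam : Λ) : Submodule k (MvPolynomial ι k) :=
  MvPolynomial.weightedHomogeneousSubmodule k (fun i => - root i) lam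

/-- The counit (augmentation) of `k[U]`: evaluation at the identity of `U`, i.e. at the
point all of whose root coordinates are `0`. -/
def uCounit : MvPolynomial ι k →ₐ[k] k := MvPolynomial.aeval (fun _ : ι => (0 : k))

/-!
Grade `k[U]` by `n = -ht_J`, which is at least the degree of every monomial. By induction on `n`,
the coefficients of `φ*(x)` at `t^m` with `m > n * p^(r-1)` vanish: write `m = p^(r-1) + j` and
pair `Δ(φ*(x))` with the coefficient functional at `t^(p^(r-1)) ⊗ t^j`. On the `k[t]` side this
gives `m.choose (p^(r-1))` times the coefficient at `t^m`, and the binomial coefficient is nonzero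
in `k` by the theorem of Lucas. On the `k[U]` side it gives a sum of products of the coefficient of
`φ*(y)` at `t^(p^(r-1))` with that of `φ*(z)` at `t^j`, where the degrees of `y` and `z` add up to
`n`. Either `y` has degree `0`, so `φ*(y)` is constant, or `z` has degree at most `n - 1`, and
`j > (n - 1) * p^(r-1)`.
-/

section Lucas

theorem choose_prime_pow_modEq_div {p : ℕ} (hp : p.Prime) (s n : ℕ) :
    n.choose (p ^ s) ≡ n / p ^ s [MOD p] := by
  have : Fact p.Prime := ⟨hp⟩
  induction s generalizing n with
  | zero => simpa using Nat.ModEq.refl n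
  | succ s ih =>
    calc n.choose (p ^ (s + 1))
        ≡ (n % p).choose (p ^ (s + 1) % p) * (n / p).choose (p ^ (s + 1) / p) [MOD p] :=
          Choose.choose_modEq_choose_mod_mul_choose_div_nat
      _ = (n / p).choose (p ^ s) := by simp [pow_succ, hp.pos]
      _ ≡ n / p / p ^ s [MOD p] := ih (n / p)
      _ = n / p ^ (s + 1) := by rw [Nat.div_div_eq_div_mul, pow_succ']

theorem cast_choose_prime_pow_ne_zero (R : Type*) [AddMonoidWithOne R] {p : ℕ} [CharP R p]
    (hp : p.Prime) {s m : ℕ} (hsm : p ^ s ≤ m) (hm : m < p ^ (s + 1)) :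
    (m.choose (p ^ s) : R) ≠ 0 := by
  have hpos : 0 < m / p ^ s := Nat.div_pos hsm (pow_pos hp.pos s)
  have hlt : m / p ^ s < p := Nat.div_lt_of_lt_mul (by rwa [← pow_succ])
  rw [Ne, CharP.cast_eq_zero_iff R p, (choose_prime_pow_modEq_div hp s m).dvd_iff dvd_rfl]
  exact Nat.not_dvd_of_pos_of_lt hpos hlt

end Lucas

section Coefficients

variable {k} (N : ℕ)

/-- The representative of degree `< N` of an element of `k[t]/(t^N)`, as a `k`-linear map. -/
def gaRep : (Polynomial k ⧸ gaI k N) →ₗ[k] Polynomial k :=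
  AdjoinRoot.modByMonicHom (Polynomial.monic_X_pow N)

/-- The coefficient of `t^i` of an element of `k[t]/(t^N)`; it is `0` for `i ≥ N`. -/
def gaCoeff (i : ℕ) : Module.Dual k (Polynomial k ⧸ gaI k N) :=
  Polynomial.lcoeff k i ∘ₗ gaRep N

variable {N}

theorem gaRep_gaπ (f : Polynomial k) : gaRep N (gaπ k N f) = f %ₘ Polynomial.X ^ N :=
  rfl

theorem gaCoeff_apply (i : ℕ) (y : Polynomial k ⧸ gaI k N) :
    gaCoeff N i y = (gaRep N y).coeff i :=
  rfl

theorem gaπ_surjective : Function.Surjective (gaπ k N) :=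
  Ideal.Quotient.mk_surjective

theorem gaRep_gaπ_of_mem_degreeLT {q : Polynomial k} (hq : q ∈ Polynomial.degreeLT k N) :
    gaRep N (gaπ k N q) = q := by
  rw [gaRep_gaπ, Polynomial.modByMonic_eq_self_iff (Polynomial.monic_X_pow N),
    Polynomial.degree_X_pow]
  exact Polynomial.mem_degreeLT.1 hq

theorem gaCoeff_gaπ {i : ℕ} (hi : i < N) (f : Polynomial k) :
    gaCoeff N i (gaπ k N f) = f.coeff i := by
  rw [gaCoeff_apply, gaRep_gaπ, Polynomial.modByMonic_eq_sub_mul_div, Polynomial.coeff_sub,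
    Polynomial.coeff_X_pow_mul', if_neg hi.not_ge, sub_zero]

theorem gaCoeff_of_le {i : ℕ} (hi : N ≤ i) (y : Polynomial k ⧸ gaI k N) : gaCoeff N i y = 0 := by
  obtain ⟨f, rfl⟩ := gaπ_surjective y
  refine Polynomial.coeff_eq_zero_of_degree_lt ?_
  calc (f %ₘ Polynomial.X ^ N).degree < (Polynomial.X ^ N : Polynomial k).degree :=
        Polynomial.degree_modByMonic_lt f (Polynomial.monic_X_pow N)
    _ ≤ i := by rw [Polynomial.degree_X_pow]; exact_mod_cast hi

theorem natDegree_gaRep_of_mem_bot {y : Polynomial k ⧸ gaI k N}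
    (hy : y ∈ (⊥ : Subalgebra k (Polynomial k ⧸ gaI k N))) : (gaRep N y).natDegree = 0 := by
  obtain ⟨a, rfl⟩ := Algebra.mem_bot.1 hy
  have hrep : gaRep N (algebraMap k _ a) = Polynomial.C a %ₘ Polynomial.X ^ N := rfl
  have hle := Polynomial.natDegree_modByMonic_le_left (p := Polynomial.C a)
    (q := (Polynomial.X ^ N : Polynomial k))
  rwa [Polynomial.natDegree_C, Nat.le_zero, ← hrep] at hle

end Coefficients

section Comultiplication

variable {k}

theorem gaComul_X_pow (n : ℕ) :
    gaComul k (Polynomial.X ^ n) = ∑ uv ∈ Finset.HasAntidiagonal.antidiagonal n,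
      n.choose uv.1 • ((Polynomial.X ^ uv.1) ⊗ₜ[k] (Polynomial.X ^ uv.2)) := by
  rw [map_pow, gaComul, Polynomial.aeval_X, (Commute.all _ _).add_pow']
  simp only [Algebra.TensorProduct.tmul_pow, Algebra.TensorProduct.tmul_mul_tmul, one_pow,
    mul_one, one_mul]

theorem dualDistrib_lcoeff_gaComul (i j : ℕ) (f : Polynomial k) :
    dualDistrib k _ _ (Polynomial.lcoeff k i ⊗ₜ Polynomial.lcoeff k j) (gaComul k f) =
      (i + j).choose i * f.coeff (i + j) := by
  induction f using Polynomial.induction_on' with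
  | add f g hf hg => simp only [map_add, hf, hg, Polynomial.coeff_add, mul_add]
  | monomial n a =>
    have hterm (uv : ℕ × ℕ) :
        dualDistrib k _ _ (Polynomial.lcoeff k i ⊗ₜ Polynomial.lcoeff k j)
          (n.choose uv.1 • ((Polynomial.X ^ uv.1) ⊗ₜ[k] (Polynomial.X ^ uv.2))) =
        if uv = (i, j) then (n.choose i : k) else 0 := by
      rw [map_nsmul, dualDistrib_apply]
      simp only [Polynomial.lcoeff_apply, Polynomial.coeff_X_pow]
      grind
    rw [← Polynomial.C_mul_X_pow_eq_monomial, ← Polynomial.smul_eq_C_mul, map_smul, map_smul,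
      gaComul_X_pow, map_sum, Finset.sum_congr rfl fun uv _ => hterm uv, Finset.sum_ite_eq',
      Polynomial.coeff_smul, Polynomial.coeff_X_pow]
    obtain rfl | hij := eq_or_ne (i + j) n
    · simp [mul_comm]
    · simp [hij]

theorem dualDistrib_gaCoeff_comul {N : ℕ}
    {ΔQ : (Polynomial k ⧸ gaI k N) →ₐ[k] (Polynomial k ⧸ gaI k N) ⊗[k] (Polynomial k ⧸ gaI k N)}
    (hΔQ : ΔQ.comp (gaπ k N) = (Algebra.TensorProduct.map (gaπ k N) (gaπ k N)).comp (gaComul k))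
    {i j : ℕ} (hij : i + j < N) (y : Polynomial k ⧸ gaI k N) :
    dualDistrib k _ _ (gaCoeff N i ⊗ₜ gaCoeff N j) (ΔQ y) =
      (i + j).choose i * gaCoeff N (i + j) y := by
  obtain ⟨f, rfl⟩ := gaπ_surjective y
  have hpull : dualDistrib k _ _ (gaCoeff N i ⊗ₜ gaCoeff N j) ∘ₗ
      (Algebra.TensorProduct.map (gaπ k N) (gaπ k N)).toLinearMap =
      dualDistrib k _ _ (Polynomial.lcoeff k i ⊗ₜ Polynomial.lcoeff k j) :=
    TensorProduct.ext' fun f g => by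
      simp [gaCoeff_gaπ (show i < N by lia), gaCoeff_gaπ (show j < N by lia)]
  calc dualDistrib k _ _ (gaCoeff N i ⊗ₜ gaCoeff N j) (ΔQ (gaπ k N f))
      = dualDistrib k _ _ (gaCoeff N i ⊗ₜ gaCoeff N j)
          (Algebra.TensorProduct.map (gaπ k N) (gaπ k N) (gaComul k f)) :=
        congrArg _ (DFunLike.congr_fun hΔQ f)
    _ = dualDistrib k _ _ (Polynomial.lcoeff k i ⊗ₜ Polynomial.lcoeff k j) (gaComul k f) :=
        LinearMap.congr_fun hpull _
    _ = (i + j).choose i * gaCoeff N (i + j) (gaπ k N f) := by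
        rw [dualDistrib_lcoeff_gaComul, gaCoeff_gaπ hij]

end Comultiplication

section GradedCoalgebra

theorem linearMap_apply_eq_zero_of_mem_iSup_range_map {R A M ι : Type*} [CommSemiring R]
    [AddCommMonoid A] [Module R A] [AddCommMonoid M] [Module R M]
    {W : ι → Submodule R A} {S : ι × ι → Prop} {L : A ⊗[R] A →ₗ[R] M}
    (hL : ∀ a b, S (a, b) → ∀ y ∈ W a, ∀ z ∈ W b, L (y ⊗ₜ z) = 0) {w : A ⊗[R] A}
    (hw : w ∈ ⨆ (ab : ι × ι) (_ : S ab),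
      LinearMap.range (TensorProduct.map (W ab.1).subtype (W ab.2).subtype)) :
    L w = 0 := by
  refine (iSup₂_le fun ab hab => ?_ : _ ≤ LinearMap.ker L) hw
  rw [LinearMap.range_le_ker_iff]
  exact TensorProduct.ext' fun y z => hL ab.1 ab.2 hab y y.2 z z.2

variable {k} {A ι : Type*} [AddCommMonoid A] [Module k A]

theorem choose_mul_gaCoeff_add_eq_zero {N : ℕ}
    {ΔQ : (Polynomial k ⧸ gaI k N) →ₐ[k] (Polynomial k ⧸ gaI k N) ⊗[k] (Polynomial k ⧸ gaI k N)}
    (hΔQ : ΔQ.comp (gaπ k N) = (Algebra.TensorProduct.map (gaπ k N) (gaπ k N)).comp (gaComul k))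
    {comul : A →ₗ[k] A ⊗[k] A} {ψ : A →ₗ[k] Polynomial k ⧸ gaI k N}
    (hψ : TensorProduct.map ψ ψ ∘ₗ comul = ΔQ.toLinearMap ∘ₗ ψ)
    {W : ι → Submodule k A} {S : ι × ι → Prop} {x : A}
    (hx : comul x ∈ ⨆ (ab : ι × ι) (_ : S ab),
      LinearMap.range (TensorProduct.map (W ab.1).subtype (W ab.2).subtype))
    {i j : ℕ} (hij : i + j < N)
    (hvanish : ∀ a b, S (a, b) → ∀ y ∈ W a, ∀ z ∈ W b,
      gaCoeff N i (ψ y) * gaCoeff N j (ψ z) = 0) :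
    ((i + j).choose i : k) * gaCoeff N (i + j) (ψ x) = 0 :=
  calc ((i + j).choose i : k) * gaCoeff N (i + j) (ψ x)
      = dualDistrib k _ _ (gaCoeff N i ⊗ₜ gaCoeff N j) (ΔQ (ψ x)) :=
        (dualDistrib_gaCoeff_comul hΔQ hij (ψ x)).symm
    _ = (dualDistrib k _ _ (gaCoeff N i ⊗ₜ gaCoeff N j) ∘ₗ TensorProduct.map ψ ψ) (comul x) :=
        congrArg _ (LinearMap.congr_fun hψ x).symm
    _ = 0 := linearMap_apply_eq_zero_of_mem_iSup_range_map hvanish hx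

theorem natDegree_gaRep_le_height_mul_pow {p s : ℕ} (hp : p.Prime) [CharP k p]
    {ΔQ : (Polynomial k ⧸ gaI k (p ^ (s + 1))) →ₐ[k]
      (Polynomial k ⧸ gaI k (p ^ (s + 1))) ⊗[k] (Polynomial k ⧸ gaI k (p ^ (s + 1)))}
    (hΔQ : ΔQ.comp (gaπ k (p ^ (s + 1))) =
      (Algebra.TensorProduct.map (gaπ k (p ^ (s + 1))) (gaπ k (p ^ (s + 1)))).comp (gaComul k))
    {W : ι → Submodule k A} {height : ι → ℕ} {comul : A →ₗ[k] A ⊗[k] A}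
    (hcomul : ∀ a, ∀ x ∈ W a, comul x ∈ ⨆ (bc : ι × ι) (_ : height bc.1 + height bc.2 ≤ height a),
      LinearMap.range (TensorProduct.map (W bc.1).subtype (W bc.2).subtype))
    {ψ : A →ₗ[k] Polynomial k ⧸ gaI k (p ^ (s + 1))}
    (hψ : TensorProduct.map ψ ψ ∘ₗ comul = ΔQ.toLinearMap ∘ₗ ψ)
    (hψ_const : ∀ a, height a = 0 → ∀ x ∈ W a, ψ x ∈ (⊥ : Subalgebra k _))
    (a : ι) {x : A} (hx : x ∈ W a) :
    (gaRep _ (ψ x)).natDegree ≤ height a * p ^ s := by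
  induction hn : height a using Nat.strong_induction_on generalizing a x with
  | _ n ih =>
  obtain rfl | hpos := Nat.eq_zero_or_pos n
  · exact (natDegree_gaRep_of_mem_bot (hψ_const a hn x hx)).le.trans (Nat.zero_le _)
  refine Polynomial.natDegree_le_iff_coeff_eq_zero.2 fun m hm => ?_
  rw [← gaCoeff_apply]
  obtain hle | hlt := le_or_gt (p ^ (s + 1)) m
  · exact gaCoeff_of_le hle _
  obtain ⟨j, rfl⟩ := Nat.exists_eq_add_of_le ((Nat.le_mul_of_pos_left _ hpos).trans hm.le)
  suffices hvanish : ∀ b c, height b + height c ≤ height a → ∀ y ∈ W b, ∀ z ∈ W c,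
      gaCoeff _ (p ^ s) (ψ y) * gaCoeff _ j (ψ z) = 0 from
    (mul_eq_zero.1 (choose_mul_gaCoeff_add_eq_zero hΔQ hψ (hcomul a x hx) hlt hvanish)).resolve_left
      (cast_choose_prime_pow_ne_zero k hp (Nat.le_add_right _ _) hlt)
  intro b c hbc y hy z hz
  obtain hb | hb := Nat.eq_zero_or_pos (height b)
  · have hdeg := ih 0 hpos b hy hb
    rw [gaCoeff_apply, Polynomial.coeff_eq_zero_of_natDegree_lt, zero_mul]
    exact hdeg.trans_lt (by simpa using pow_pos hp.pos s)
  · have hdeg := ih (height c) (by lia) c hz rfl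
    rw [gaCoeff_apply _ (ψ z), Polynomial.coeff_eq_zero_of_natDegree_lt, mul_zero]
    have hmul : (height c + 1) * p ^ s ≤ n * p ^ s := Nat.mul_le_mul_right _ (by lia)
    lia

end GradedCoalgebra

section Weights

variable {k ι Λ} {root : ι → Λ} {htJ : Λ →+ ℤ}

theorem degree_le_neg_htJ_weight (hroot : ∀ i, 1 ≤ htJ (root i)) (d : ι →₀ ℕ) :
    (d.degree : ℤ) ≤ -htJ (Finsupp.weight (fun i => -root i) d) := by
  have hweight : -htJ (Finsupp.weight (fun i => -root i) d) =
      ∑ i ∈ d.support, (d i : ℤ) * htJ (root i) := by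
    simp [Finsupp.weight_apply, Finsupp.sum]
  rw [hweight, Finsupp.degree_apply, Nat.cast_sum]
  exact Finset.sum_le_sum fun i _ => le_mul_of_one_le_right (Int.natCast_nonneg _) (hroot i)

theorem degree_le_neg_htJ_of_mem_wtSub (hroot : ∀ i, 1 ≤ htJ (root i)) {lam : Λ}
    {x : MvPolynomial ι k} (hx : x ∈ wtSub k ι Λ root lam) {d : ι →₀ ℕ} (hd : d ∈ x.support) :
    (d.degree : ℤ) ≤ -htJ lam := by
  have hlam : Finsupp.weight (fun i => -root i) d = lam := hx (MvPolynomial.mem_support_iff.1 hd)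
  exact hlam ▸ degree_le_neg_htJ_weight hroot d

theorem htJ_nonpos_of_mem_wtSub (hroot : ∀ i, 1 ≤ htJ (root i)) {lam : Λ} {x : MvPolynomial ι k}
    (hx : x ∈ wtSub k ι Λ root lam) (hx0 : x ≠ 0) : htJ lam ≤ 0 := by
  obtain ⟨d, hd⟩ := MvPolynomial.support_nonempty.2 hx0
  have := degree_le_neg_htJ_of_mem_wtSub hroot hx hd
  lia

theorem mem_bot_of_mem_wtSub_of_htJ_eq_zero (hroot : ∀ i, 1 ≤ htJ (root i)) {lam : Λ}
    (hlam : htJ lam = 0) {x : MvPolynomial ι k} (hx : x ∈ wtSub k ι Λ root lam) :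
    x ∈ (⊥ : Subalgebra k (MvPolynomial ι k)) := by
  have hdeg : x.totalDegree = 0 := by
    refine Nat.le_zero.1 (Finset.sup_le fun d hd => ?_)
    change d.degree ≤ 0
    have := degree_le_neg_htJ_of_mem_wtSub hroot hx hd
    lia
  rw [MvPolynomial.totalDegree_eq_zero_iff_eq_C.1 hdeg]
  exact Subalgebra.algebraMap_mem _ _

theorem iSup_range_map_wtSub_le (hroot : ∀ i, 1 ≤ htJ (root i)) (lam : Λ) :
    ⨆ (pr : Λ × Λ) (_ : pr.1 + pr.2 = lam), LinearMap.range (TensorProduct.map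
        (wtSub k ι Λ root pr.1).subtype (wtSub k ι Λ root pr.2).subtype) ≤
      ⨆ (pr : Λ × Λ) (_ : (htJ pr.1).natAbs + (htJ pr.2).natAbs ≤ (htJ lam).natAbs),
        LinearMap.range (TensorProduct.map
          (wtSub k ι Λ root pr.1).subtype (wtSub k ι Λ root pr.2).subtype) := by
  refine iSup₂_le fun pr hpr => ?_
  rw [TensorProduct.range_map_eq_span_tmul, Submodule.span_le]
  rintro _ ⟨y, z, rfl⟩
  obtain hy | hy := eq_or_ne (y : MvPolynomial ι k) 0
  · simp [hy]
  obtain hz | hz := eq_or_ne (z : MvPolynomial ι k) 0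
  · simp [hz]
  have hsum : htJ pr.1 + htJ pr.2 = htJ lam := by rw [← map_add, hpr]
  have hy_ht := htJ_nonpos_of_mem_wtSub hroot y.2 hy
  have hz_ht := htJ_nonpos_of_mem_wtSub hroot z.2 hz
  exact Submodule.mem_iSup_of_mem pr (Submodule.mem_iSup_of_mem (by lia) ⟨y ⊗ₜ z, rfl⟩)

end Weights

theorem stmt_2_general {k : Type} [Field k] {ι Λ : Type} [AddCommGroup Λ]
    {p s : ℕ} (hp : p.Prime) [CharP k p]
    (root : ι → Λ) (htJ : Λ →+ ℤ) (hroot : ∀ i, 1 ≤ htJ (root i))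
    (comul : MvPolynomial ι k →ₐ[k] MvPolynomial ι k ⊗[k] MvPolynomial ι k)
    (hwt : ∀ (lam : Λ), ∀ x ∈ wtSub k ι Λ root lam,
        comul x ∈ ⨆ (pr : Λ × Λ) (_ : pr.1 + pr.2 = lam),
          LinearMap.range (TensorProduct.map (wtSub k ι Λ root pr.1).subtype
            (wtSub k ι Λ root pr.2).subtype))
    (ΔQ : (Polynomial k ⧸ gaI k (p ^ (s + 1))) →ₐ[k]
        (Polynomial k ⧸ gaI k (p ^ (s + 1))) ⊗[k] (Polynomial k ⧸ gaI k (p ^ (s + 1))))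
    (hΔQ : ΔQ.comp (gaπ k (p ^ (s + 1))) =
        (Algebra.TensorProduct.map (gaπ k (p ^ (s + 1))) (gaπ k (p ^ (s + 1)))).comp (gaComul k))
    (ψ : MvPolynomial ι k →ₐ[k] Polynomial k ⧸ gaI k (p ^ (s + 1)))
    (hψΔ : (Algebra.TensorProduct.map ψ ψ).comp comul = ΔQ.comp ψ)
    (lam : Λ) (x : MvPolynomial ι k) (hx : x ∈ wtSub k ι Λ root lam)
    (q : Polynomial k) (hq : q ∈ Polynomial.degreeLT k (p ^ (s + 1)))
    (hπq : gaπ k (p ^ (s + 1)) q = ψ x) :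
    q.natDegree ≤ (htJ lam).natAbs * p ^ s := by
  rw [← gaRep_gaπ_of_mem_degreeLT hq, hπq]
  refine natDegree_gaRep_le_height_mul_pow hp hΔQ (W := wtSub k ι Λ root)
    (height := fun lam => (htJ lam).natAbs) (comul := comul.toLinearMap) (ψ := ψ.toLinearMap)
    (fun lam x hx => iSup_range_map_wtSub_le hroot lam (hwt lam x hx))
    (congrArg AlgHom.toLinearMap hψΔ) (fun lam hlam x hx => ?_) lam hx
  obtain ⟨a, rfl⟩ := Algebra.mem_bot.1
    (mem_bot_of_mem_wtSub_of_htJ_eq_zero hroot (Int.natAbs_eq_zero.1 hlam) hx)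
  exact Algebra.mem_bot.2 ⟨a, (ψ.commutes a).symm⟩

theorem stmt_2 [IsAlgClosed k] (p r : ℕ) (hp : p.Prime) [CharP k p] (hr : 1 ≤ r)
    [Fintype ι]
    -- the roots `α_i` of `U`, and the function `ht_J`, positive on roots of `U`
    (root : ι → Λ) (htJ : Λ →+ ℤ) (hroot : ∀ i, 1 ≤ htJ (root i))
    -- the comultiplication of `k[U]`, its counit laws ...
    (comul : MvPolynomial ι k →ₐ[k] MvPolynomial ι k ⊗[k] MvPolynomial ι k)
    (hcul : ∀ f, (TensorProduct.lid k (MvPolynomial ι k))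
        ((TensorProduct.map (uCounit k ι).toLinearMap
          (LinearMap.id : MvPolynomial ι k →ₗ[k] MvPolynomial ι k)) (comul f)) = f)
    (hcur : ∀ f, (TensorProduct.rid k (MvPolynomial ι k))
        ((TensorProduct.map (LinearMap.id : MvPolynomial ι k →ₗ[k] MvPolynomial ι k)
          (uCounit k ι).toLinearMap) (comul f)) = f)
    -- ... and its `T`-equivariance: `Δ(k[U]_λ) ⊆ Σ_{λ₁+λ₂=λ} k[U]_{λ₁} ⊗ k[U]_{λ₂}`
    (hwt : ∀ (lam : Λ), ∀ x ∈ wtSub k ι Λ root lam,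
        comul x ∈ ⨆ (pr : Λ × Λ) (_ : pr.1 + pr.2 = lam),
          LinearMap.range (TensorProduct.map (wtSub k ι Λ root pr.1).subtype
            (wtSub k ι Λ root pr.2).subtype))
    -- the induced comultiplication and counit of `k[t]/(t^{p^r})`
    (ΔQ : (Polynomial k ⧸ gaI k (p ^ r)) →ₐ[k]
        (Polynomial k ⧸ gaI k (p ^ r)) ⊗[k] (Polynomial k ⧸ gaI k (p ^ r)))
    (hΔQ : ΔQ.comp (gaπ k (p ^ r)) =
        (Algebra.TensorProduct.map (gaπ k (p ^ r)) (gaπ k (p ^ r))).comp (gaComul k))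
    (εQ : (Polynomial k ⧸ gaI k (p ^ r)) →ₐ[k] k)
    (hεQ : εQ.comp (gaπ k (p ^ r)) = gaCounit k)
    -- `ψ = φ*` is the comorphism of `φ : 𝔾_{a(r)} → U`: an algebra map compatible with
    -- comultiplication and counit
    (ψ : MvPolynomial ι k →ₐ[k] Polynomial k ⧸ gaI k (p ^ r))
    (hψΔ : (Algebra.TensorProduct.map ψ ψ).comp comul = ΔQ.comp ψ)
    (hψε : εQ.comp ψ = uCounit k ι)
    -- the data of the claim
    (lam : Λ) (hlam : lam ≠ 0) (x : MvPolynomial ι k) (hx : x ∈ wtSub k ι Λ root lam)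
    (q : Polynomial k) (hq : q ∈ Polynomial.degreeLT k (p ^ r))
    (hπq : gaπ k (p ^ r) q = ψ x) (hq0 : q ≠ 0) :
    q.natDegree ≤ (htJ lam).natAbs * p ^ (r - 1) := by
  obtain ⟨s, rfl⟩ := Nat.exists_eq_add_of_le' hr
  exact stmt_2_general hp root htJ hroot comul hwt ΔQ hΔQ ψ hψΔ lam x hx q hq hπq

end Stmt2
end
end

section
/- Let φ : 𝔾_{a(r)} → U be a homomorphism of affine group schemes with comorphism φ* : k[U] → k[t]/(t^{p^r}), and let φ*_Y : k[U] → k[t] be the lift of φ* with respect to the algebra generators Y = {Y_{α₁},…,Y_{α_n}}. Then for every T-weight λ and every x ∈ k[U]_λ, the polynomial φ*_Y(x) ∈ k[t] has degree at most |ht_J(λ)|·p^{r−1}. -/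
/-!
STATEMENT 3 (consequence of Lemma 2.4 recorded in the proof of Lemma 2.6): with the same
setting as Statement 2, let `φ*_Y : k[U] → k[t]` be the lift of the comorphism
`φ* : k[U] → k[t]/(t^{p^r})` with respect to the algebra generators
`Y = {Y_{α₁},…,Y_{α_n}}`, i.e. the `k`-algebra homomorphism `L` sending each generator
`X i = Y_{α_i}` to the unique polynomial of degree `< p^r` representing `φ*(X i)`.
Then for every weight `λ` and every `x ∈ k[U]_λ`, the polynomial `L x` has degree at
most `|ht_J(λ)| ⬝ p^{r-1}`.
-/


noncomputable section

open Polynomial MvPolynomial TensorProduct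
open scoped TensorProduct

namespace Stmt3

variable (k : Type) [Field k]

/-- The comultiplication of `k[t]`: `Δ t = t ⊗ 1 + 1 ⊗ t`. -/
def gaComul : Polynomial k →ₐ[k] Polynomial k ⊗[k] Polynomial k :=
  Polynomial.aeval (Polynomial.X ⊗ₜ[k] (1 : Polynomial k) + (1 : Polynomial k) ⊗ₜ[k] Polynomial.X)

/-- The counit of `k[t]`: evaluation at `0`. -/
def gaCounit : Polynomial k →ₐ[k] k := Polynomial.aeval 0

/-- The Hopf ideal `(t^m)` of `k[t]`. -/
def gaI (m : ℕ) : Ideal (Polynomial k) := Ideal.span {Polynomial.X ^ m}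

/-- The canonical projection `π : k[t] → k[t]/(t^m)`. -/
def gaπ (m : ℕ) : Polynomial k →ₐ[k] Polynomial k ⧸ gaI k m :=
  Ideal.Quotient.mkₐ k (gaI k m)

variable (ι Λ : Type) [AddCommGroup Λ]

/-- The `T`-weight space `k[U]_λ`:  `k[U] = k[Y_{α₁},…,Y_{α_n}]` with `Y_{α_i}` of weight
`-α_i`, so `k[U]_λ` is spanned by the monomials of total weight `λ` for the weight
function `i ↦ -root i`. -/
def wtSub (root : ι → Λ) (lam : Λ) : Submodule k (MvPolynomial ι k) :=
  MvPolynomial.weightedHomogeneousSubmodule k (fun i => - root i) lam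

/-- The counit (augmentation) of `k[U]`: evaluation at the identity of `U`, i.e. at the
point all of whose root coordinates are `0`. -/
def uCounit : MvPolynomial ι k →ₐ[k] k := MvPolynomial.aeval (fun _ : ι => (0 : k))

/-!
Reading off the coefficient of `t^a ⊗ t^b` in `Δ (t^n)` gives `(a + b).choose a` if `n = a + b` and
`0` otherwise. Take `a = q = p^(r-1)`: by Lucas, `(q + b).choose q ≡ ⌊(q + b) / q⌋ mod p` is
invertible in characteristic `p` as long as `q + b < p^r`, so the `(q + b)`-th coefficient of
`φ*(x)` vanishes as soon as the coefficient of `t^q ⊗ t^b` in `(φ* ⊗ φ*)(Δ x)` does.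

Give `x ∈ k[U]_λ` the degree `n = -ht_J(λ)`. If `q + b > n q`, every component `u ⊗ v` of `Δ x`
contributes zero: either `u` has degree at most `0` and is constant, or `v` has degree at most
`n - 1` and induction applies because `b > (n - 1) q`. Applied to the generators `Y_α`, this bounds
the degrees of their lifts, and degrees add up along monomials.
-/

section Lucas

theorem choose_prime_pow_modEq_div (p : ℕ) [Fact p.Prime] (m n : ℕ) :
    n.choose (p ^ m) ≡ n / p ^ m [MOD p] := by
  have hp : p.Prime := Fact.out
  have low_digits : ∏ i ∈ Finset.range m, (n / p ^ i % p).choose (p ^ m / p ^ i % p) = 1 := by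
    refine Finset.prod_eq_one fun i hi => ?_
    have hi : i < m := Finset.mem_range.1 hi
    have digit_eq_zero : p ^ m / p ^ i % p = 0 := by
      rw [Nat.pow_div hi.le hp.pos]
      exact Nat.mod_eq_zero_of_dvd (dvd_pow_self p (Nat.sub_ne_zero_of_lt hi))
    rw [digit_eq_zero, Nat.choose_zero_right]
  have lucas := Choose.choose_modEq_choose_mul_prod_range_choose (n := n) (k := p ^ m) (p := p) m
  rw [low_digits, Nat.div_self (pow_pos hp.pos m), Nat.choose_one_right] at lucas
  rw [← Int.natCast_modEq_iff]
  simpa only [Nat.cast_one, mul_one] using lucas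

theorem isUnit_choose_prime_pow {R : Type*} [Ring R] {p : ℕ} (hp : p.Prime) [CharP R p]
    {m n : ℕ} (hmn : p ^ m ≤ n) (hn : n < p ^ (m + 1)) :
    IsUnit ((n.choose (p ^ m) : ℕ) : R) := by
  have : Fact p.Prime := ⟨hp⟩
  have hpos : 0 < p ^ m := pow_pos hp.pos m
  have quot_pos : 0 < n / p ^ m := Nat.div_pos hmn hpos
  have quot_lt : n / p ^ m < p := by rwa [Nat.div_lt_iff_lt_mul hpos, ← pow_succ']
  rw [CharP.isUnit_natCast_iff hp, (choose_prime_pow_modEq_div p m n).dvd_iff dvd_rfl]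
  exact Nat.not_dvd_of_pos_of_lt quot_pos quot_lt

end Lucas

section TruncatedPolynomials

/-- The truncated polynomial ring `R[t]/(t^N)`. For `N = p^r` in characteristic `p` it is the
coordinate algebra of `𝔾_{a(r)}`. -/
abbrev TruncPoly (R : Type*) [CommRing R] (N : ℕ) : Type _ :=
  R[X] ⧸ Ideal.span {(Polynomial.X : R[X]) ^ N}

variable {R : Type*} [CommRing R] {N a b j : ℕ}

variable (R N) in
/-- The projection `R[t] → R[t]/(t^N)`; over a field it unfolds to `gaπ`. -/
def truncProj : R[X] →ₐ[R] TruncPoly R N :=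
  Ideal.Quotient.mkₐ R _

theorem truncProj_surjective : Function.Surjective (truncProj R N) :=
  Ideal.Quotient.mkₐ_surjective R _

/-- The `j`-th coefficient of a truncated polynomial, well defined for `j < N`. -/
def truncCoeff (hj : j < N) : TruncPoly R N →ₗ[R] R :=
  ((Ideal.span {(Polynomial.X : R[X]) ^ N}).restrictScalars R).liftQ (Polynomial.lcoeff R j)
    fun _ hf => Polynomial.X_pow_dvd_iff.1 (Ideal.mem_span_singleton.1 hf) j hj

theorem truncCoeff_truncProj (hj : j < N) (f : R[X]) :
    truncCoeff hj (truncProj R N f) = f.coeff j :=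
  rfl

theorem truncCoeff_comp_truncProj (hj : j < N) :
    truncCoeff hj ∘ₗ (truncProj R N).toLinearMap = Polynomial.lcoeff R j :=
  rfl

theorem truncCoeff_of_mem_bot (hj : j < N) (hj₀ : j ≠ 0) {z : TruncPoly R N}
    (hz : z ∈ (⊥ : Subalgebra R (TruncPoly R N))) : truncCoeff hj z = 0 := by
  obtain ⟨c, rfl⟩ := Algebra.mem_bot.1 hz
  rw [← AlgHom.commutes (truncProj R N), truncCoeff_truncProj, Polynomial.algebraMap_eq,
    Polynomial.coeff_C_of_ne_zero hj₀]

variable (R) in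
/-- The comultiplication `t ↦ t ⊗ 1 + 1 ⊗ t` of the additive group over `R`; over a field it
unfolds to `gaComul`. -/
def additiveComul : R[X] →ₐ[R] R[X] ⊗[R] R[X] :=
  Polynomial.aeval (Polynomial.X ⊗ₜ[R] (1 : R[X]) + (1 : R[X]) ⊗ₜ[R] Polynomial.X)

theorem additiveComul_X_pow (n : ℕ) :
    additiveComul R (Polynomial.X ^ n) = ∑ ij ∈ Finset.HasAntidiagonal.antidiagonal n,
      n.choose ij.1 • (((Polynomial.X : R[X]) ^ ij.1) ⊗ₜ[R] ((Polynomial.X : R[X]) ^ ij.2)) := by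
  rw [map_pow, additiveComul, Polynomial.aeval_X, (Commute.all _ _).add_pow']
  simp only [Algebra.TensorProduct.tmul_pow, one_pow, Algebra.TensorProduct.tmul_mul_tmul,
    mul_one, one_mul]

theorem map_lcoeff_additiveComul (a b : ℕ) (f : R[X]) :
    LinearMap.mul' R R (TensorProduct.map (Polynomial.lcoeff R a) (Polynomial.lcoeff R b)
      (additiveComul R f)) = (a + b).choose a * f.coeff (a + b) := by
  induction f using Polynomial.induction_on' with
  | add f g hf hg => simp only [map_add, hf, hg, Polynomial.coeff_add, mul_add]
  | monomial n c =>
    rw [← Polynomial.C_mul_X_pow_eq_monomial, ← Polynomial.smul_eq_C_mul, map_smul,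
      additiveComul_X_pow]
    simp only [map_smul, map_sum, map_nsmul, TensorProduct.map_tmul, LinearMap.mul'_apply,
      Polynomial.lcoeff_apply, Polynomial.coeff_smul, Polynomial.coeff_X_pow]
    have summand_eq (ij : ℕ × ℕ) :
        n.choose ij.1 • ((if a = ij.1 then (1 : R) else 0) * if b = ij.2 then 1 else 0) =
          if (a, b) = ij then (n.choose a : R) else 0 := by
      grind
    simp only [summand_eq, Finset.sum_ite_eq, Finset.HasAntidiagonal.mem_antidiagonal]
    split_ifs with hn
    · simp [hn, mul_comm]
    · simp

/-- A comultiplication on `R[t]/(t^N)` induced by that of the additive group. -/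
def IsTruncComul (ΔQ : TruncPoly R N →ₐ[R] TruncPoly R N ⊗[R] TruncPoly R N) : Prop :=
  ΔQ.comp (truncProj R N) =
    (Algebra.TensorProduct.map (truncProj R N) (truncProj R N)).comp (additiveComul R)

theorem IsTruncComul.map_truncCoeff
    {ΔQ : TruncPoly R N →ₐ[R] TruncPoly R N ⊗[R] TruncPoly R N} (hΔQ : IsTruncComul ΔQ)
    (ha : a < N) (hb : b < N) (hab : a + b < N) (z : TruncPoly R N) :
    LinearMap.mul' R R (TensorProduct.map (truncCoeff ha) (truncCoeff hb) (ΔQ z)) =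
      (a + b).choose a * truncCoeff hab z := by
  obtain ⟨f, rfl⟩ := truncProj_surjective z
  have comul_proj : ΔQ (truncProj R N f) =
      TensorProduct.map (truncProj R N).toLinearMap (truncProj R N).toLinearMap
        (additiveComul R f) :=
    DFunLike.congr_fun hΔQ f
  rw [comul_proj, ← LinearMap.comp_apply (TensorProduct.map _ _), ← TensorProduct.map_comp,
    truncCoeff_comp_truncProj, truncCoeff_comp_truncProj, map_lcoeff_additiveComul,
    truncCoeff_truncProj]

end TruncatedPolynomials

section GradedComul

variable {R A M : Type*} [CommRing R] [AddCommMonoid A] [Module R A] [AddMonoid M]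
  {𝒜 : M → Submodule R A} {comul : A →ₗ[R] A ⊗[R] A}

/-- `comul` is compatible with the family `𝒜`: it sends `𝒜 m` into the span of the images of
`𝒜 μ ⊗ 𝒜 ν` with `μ + ν = m`. -/
def IsGradedComul (𝒜 : M → Submodule R A) (comul : A →ₗ[R] A ⊗[R] A) : Prop :=
  ∀ m, ∀ x ∈ 𝒜 m, comul x ∈ ⨆ (μν : M × M) (_ : μν.1 + μν.2 = m),
    LinearMap.range (TensorProduct.map (𝒜 μν.1).subtype (𝒜 μν.2).subtype)

theorem IsGradedComul.map_eq_zero (hcomul : IsGradedComul 𝒜 comul) {f g : A →ₗ[R] R} {m : M}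
    (hfg : ∀ μ ν, μ + ν = m → (∀ u ∈ 𝒜 μ, f u = 0) ∨ ∀ v ∈ 𝒜 ν, g v = 0)
    {x : A} (hx : x ∈ 𝒜 m) : TensorProduct.map f g (comul x) = 0 := by
  refine LinearMap.mem_ker.1 ((iSup₂_le fun μν hμν => ?_ :
    _ ≤ LinearMap.ker (TensorProduct.map f g)) (hcomul m x hx))
  rw [LinearMap.range_le_ker_iff, ← TensorProduct.map_comp]
  rcases hfg μν.1 μν.2 hμν with hf | hg
  · have f_restrict : f ∘ₗ (𝒜 μν.1).subtype = 0 := LinearMap.ext fun u => hf u u.2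
    rw [f_restrict, TensorProduct.map_zero_left]
  · have g_restrict : g ∘ₗ (𝒜 μν.2).subtype = 0 := LinearMap.ext fun v => hg v v.2
    rw [g_restrict, TensorProduct.map_zero_right]

theorem truncCoeff_eq_zero_of_isGradedComul {N q : ℕ} (hq : 0 < q)
    (hchoose : ∀ n, q ≤ n → n < N → IsUnit ((n.choose q : ℕ) : R))
    (hcomul : IsGradedComul 𝒜 comul) (δ : M →+ ℤ)
    {ΔQ : TruncPoly R N →ₐ[R] TruncPoly R N ⊗[R] TruncPoly R N} (hΔQ : IsTruncComul ΔQ)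
    {ψ : A →ₗ[R] TruncPoly R N} (hψ : TensorProduct.map ψ ψ ∘ₗ comul = ΔQ.toLinearMap ∘ₗ ψ)
    (hconst : ∀ m, δ m ≤ 0 → ∀ x ∈ 𝒜 m, ψ x ∈ (⊥ : Subalgebra R (TruncPoly R N)))
    {m : M} {x : A} (hx : x ∈ 𝒜 m) {j : ℕ} (hj : j < N) (hmj : (δ m).toNat * q < j) :
    truncCoeff hj (ψ x) = 0 := by
  induction hn : (δ m).toNat using Nat.strong_induction_on generalizing m x j with
  | _ n ih =>
  subst hn
  rcases le_or_gt (δ m) 0 with hm | hm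
  · exact truncCoeff_of_mem_bot hj (by omega) (hconst m hm x hx)
  obtain ⟨b, rfl⟩ : ∃ b, j = q + b :=
    Nat.exists_eq_add_of_le ((Nat.le_mul_of_pos_left q (by omega)).trans hmj.le)
  have hqN : q < N := by omega
  have hbN : b < N := by omega
  have map_comul_eq_zero :
      TensorProduct.map (truncCoeff hqN ∘ₗ ψ) (truncCoeff hbN ∘ₗ ψ) (comul x) = 0 := by
    refine hcomul.map_eq_zero (fun μ ν hμν => ?_) hx
    rcases le_or_gt (δ μ) 0 with hμ | hμ
    · exact .inl fun u hu => truncCoeff_of_mem_bot hqN hq.ne' (hconst μ hμ u hu)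
    · have δ_add : δ μ + δ ν = δ m := by rw [← map_add, hμν]
      have hν : (δ ν).toNat + 1 ≤ (δ m).toNat := by omega
      have hνb : (δ ν).toNat * q < b := by nlinarith
      exact .inr fun v hv => ih _ hν hv hbN hνb rfl
  have choose_mul_eq_zero : ((q + b).choose q : R) * truncCoeff hj (ψ x) = 0 := by
    rw [← hΔQ.map_truncCoeff hqN hbN hj, ← AlgHom.toLinearMap_apply ΔQ,
      ← LinearMap.comp_apply ΔQ.toLinearMap, ← hψ, LinearMap.comp_apply,
      ← LinearMap.comp_apply (TensorProduct.map _ _), ← TensorProduct.map_comp,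
      map_comul_eq_zero, map_zero]
  exact (hchoose _ (Nat.le_add_right q b) hj).mul_right_eq_zero.1 choose_mul_eq_zero

end GradedComul

section WeightedHomogeneous

variable {R σ M : Type*} [CommSemiring R] [AddCommMonoid M] {x : MvPolynomial σ R}

theorem weight_toNat {w : σ → M} {δ : M →+ ℤ} (hw : ∀ i, 0 ≤ δ (w i)) (d : σ →₀ ℕ) :
    Finsupp.weight (fun i => (δ (w i)).toNat) d = (δ (Finsupp.weight w d)).toNat := by
  have cast_weight : (Finsupp.weight (fun i => (δ (w i)).toNat) d : ℤ) =
      δ (Finsupp.weight w d) := by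
    simp only [Finsupp.weight_apply, Finsupp.sum, map_sum, map_nsmul, Nat.cast_sum, smul_eq_mul,
      nsmul_eq_mul, Nat.cast_mul, Int.toNat_of_nonneg (hw _)]
  rw [← cast_weight, Int.toNat_natCast]

theorem isWeightedHomogeneous_toNat {w : σ → M} {δ : M →+ ℤ} (hw : ∀ i, 0 ≤ δ (w i)) {m : M}
    (hx : IsWeightedHomogeneous w x m) :
    IsWeightedHomogeneous (fun i => (δ (w i)).toNat) x (δ m).toNat := fun d hd => by
  rw [weight_toNat hw, hx hd]

theorem eq_C_of_isWeightedHomogeneous_zero {w : σ → ℕ} (hw : ∀ i, w i ≠ 0)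
    (hx : IsWeightedHomogeneous w x 0) : x = MvPolynomial.C (x.coeff 0) := by
  rw [← weightedHomogeneousComponent_zero x hw, hx.weightedHomogeneousComponent_same]

theorem algHom_mem_bot_of_isWeightedHomogeneous {B : Type*} [Semiring B] [Algebra R B]
    (ψ : MvPolynomial σ R →ₐ[R] B) {w : σ → M} {δ : M →+ ℤ} (hw : ∀ i, 0 < δ (w i)) {m : M}
    (hm : δ m ≤ 0) (hx : IsWeightedHomogeneous w x m) : ψ x ∈ (⊥ : Subalgebra R B) := by
  have hx₀ := isWeightedHomogeneous_toNat (fun i => (hw i).le) hx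
  rw [Int.toNat_of_nonpos hm] at hx₀
  rw [eq_C_of_isWeightedHomogeneous_zero (fun i => (Int.pos_iff_toNat_pos.1 (hw i)).ne') hx₀]
  exact Algebra.mem_bot.2 ⟨_, (ψ.commutes _).symm⟩

theorem natDegree_algHom_le_of_isWeightedHomogeneous {w : σ → ℕ} {n q : ℕ}
    (L : MvPolynomial σ R →ₐ[R] R[X])
    (hL : ∀ i, (L (MvPolynomial.X i)).natDegree ≤ w i * q) (hx : IsWeightedHomogeneous w x n) :
    (L x).natDegree ≤ n * q := by
  induction hx using IsWeightedHomogeneous.induction_on with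
  | zero => simp
  | add x y _ _ hx hy =>
    rw [map_add]
    exact Polynomial.natDegree_add_le_of_degree_le hx hy
  | monomial d c hd =>
    have hmonomial : L (MvPolynomial.monomial d c) =
        Polynomial.C c * ∏ i ∈ d.support, L (MvPolynomial.X i) ^ d i := by
      rw [MvPolynomial.monomial_eq, map_mul, ← MvPolynomial.algebraMap_eq, AlgHom.commutes,
        Polynomial.algebraMap_eq, Finsupp.prod, map_prod]
      simp only [map_pow]
    calc (L (MvPolynomial.monomial d c)).natDegree
        ≤ ∑ i ∈ d.support, (L (MvPolynomial.X i) ^ d i).natDegree := by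
          rw [hmonomial]
          exact (Polynomial.natDegree_C_mul_le _ _).trans (Polynomial.natDegree_prod_le _ _)
      _ ≤ ∑ i ∈ d.support, d i * (w i * q) :=
          Finset.sum_le_sum fun i _ => Polynomial.natDegree_pow_le_of_le (d i) (hL i)
      _ = n * q := by
          rw [← hd, Finsupp.weight_apply, Finsupp.sum, Finset.sum_mul]
          simp only [smul_eq_mul, mul_assoc]

end WeightedHomogeneous

theorem stmt_3_general {R σ M : Type*} [CommRing R] [AddCommMonoid M] {p r : ℕ}
    (hp : p.Prime) [CharP R p] (hr : 1 ≤ r) {w : σ → M} {δ : M →+ ℤ} (hw : ∀ i, 0 < δ (w i))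
    {comul : MvPolynomial σ R →ₐ[R] MvPolynomial σ R ⊗[R] MvPolynomial σ R}
    (hcomul : IsGradedComul (weightedHomogeneousSubmodule R w) comul.toLinearMap)
    {ΔQ : TruncPoly R (p ^ r) →ₐ[R] TruncPoly R (p ^ r) ⊗[R] TruncPoly R (p ^ r)}
    (hΔQ : IsTruncComul ΔQ) {ψ : MvPolynomial σ R →ₐ[R] TruncPoly R (p ^ r)}
    (hψ : (Algebra.TensorProduct.map ψ ψ).comp comul = ΔQ.comp ψ)
    {L : MvPolynomial σ R →ₐ[R] R[X]}
    (hL : ∀ i, L (MvPolynomial.X i) ∈ Polynomial.degreeLT R (p ^ r) ∧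
      truncProj R (p ^ r) (L (MvPolynomial.X i)) = ψ (MvPolynomial.X i))
    {m : M} {x : MvPolynomial σ R} (hx : IsWeightedHomogeneous w x m) :
    (L x).degree ≤ ((δ m).natAbs * p ^ (r - 1) : ℕ) := by
  obtain ⟨s, rfl⟩ := Nat.exists_eq_add_of_le' hr
  have hconst : ∀ m, δ m ≤ 0 → ∀ x ∈ weightedHomogeneousSubmodule R w m,
      ψ x ∈ (⊥ : Subalgebra R (TruncPoly R (p ^ (s + 1)))) := fun m hm x hx =>
    algHom_mem_bot_of_isWeightedHomogeneous ψ hw hm hx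
  have natDegree_generator_le (i : σ) :
      (L (MvPolynomial.X i)).natDegree ≤ (δ (w i)).toNat * p ^ s := by
    refine Polynomial.natDegree_le_iff_coeff_eq_zero.2 fun j hj => ?_
    rcases lt_or_ge j (p ^ (s + 1)) with hjN | hjN
    · rw [← truncCoeff_truncProj hjN, (hL i).2]
      exact truncCoeff_eq_zero_of_isGradedComul (pow_pos hp.pos s)
        (fun n => isUnit_choose_prime_pow hp) hcomul δ hΔQ
        (congrArg AlgHom.toLinearMap hψ) hconst (isWeightedHomogeneous_X R w i) hjN hj
    · exact Polynomial.coeff_eq_zero_of_degree_lt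
        ((Polynomial.mem_degreeLT.1 (hL i).1).trans_le (by exact_mod_cast hjN))
  have natDegree_le : (L x).natDegree ≤ (δ m).toNat * p ^ s :=
    natDegree_algHom_le_of_isWeightedHomogeneous L natDegree_generator_le
      (isWeightedHomogeneous_toNat (fun i => (hw i).le) hx)
  exact Polynomial.degree_le_of_natDegree_le
    (natDegree_le.trans (Nat.mul_le_mul_right _ (by omega)))

theorem stmt_3 [IsAlgClosed k] (p r : ℕ) (hp : p.Prime) [CharP k p] (hr : 1 ≤ r)
    [Fintype ι]
    (root : ι → Λ) (htJ : Λ →+ ℤ) (hroot : ∀ i, 1 ≤ htJ (root i))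
    (comul : MvPolynomial ι k →ₐ[k] MvPolynomial ι k ⊗[k] MvPolynomial ι k)
    (hcul : ∀ f, (TensorProduct.lid k (MvPolynomial ι k))
        ((TensorProduct.map (uCounit k ι).toLinearMap
          (LinearMap.id : MvPolynomial ι k →ₗ[k] MvPolynomial ι k)) (comul f)) = f)
    (hcur : ∀ f, (TensorProduct.rid k (MvPolynomial ι k))
        ((TensorProduct.map (LinearMap.id : MvPolynomial ι k →ₗ[k] MvPolynomial ι k)
          (uCounit k ι).toLinearMap) (comul f)) = f)
    (hwt : ∀ (lam : Λ), ∀ x ∈ wtSub k ι Λ root lam,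
        comul x ∈ ⨆ (pr : Λ × Λ) (_ : pr.1 + pr.2 = lam),
          LinearMap.range (TensorProduct.map (wtSub k ι Λ root pr.1).subtype
            (wtSub k ι Λ root pr.2).subtype))
    (ΔQ : (Polynomial k ⧸ gaI k (p ^ r)) →ₐ[k]
        (Polynomial k ⧸ gaI k (p ^ r)) ⊗[k] (Polynomial k ⧸ gaI k (p ^ r)))
    (hΔQ : ΔQ.comp (gaπ k (p ^ r)) =
        (Algebra.TensorProduct.map (gaπ k (p ^ r)) (gaπ k (p ^ r))).comp (gaComul k))
    (εQ : (Polynomial k ⧸ gaI k (p ^ r)) →ₐ[k] k)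
    (hεQ : εQ.comp (gaπ k (p ^ r)) = gaCounit k)
    (ψ : MvPolynomial ι k →ₐ[k] Polynomial k ⧸ gaI k (p ^ r))
    (hψΔ : (Algebra.TensorProduct.map ψ ψ).comp comul = ΔQ.comp ψ)
    (hψε : εQ.comp ψ = uCounit k ι)
    -- `L = φ*_Y` is the lift of `φ*` with respect to the generators `Y`:
    (L : MvPolynomial ι k →ₐ[k] Polynomial k)
    (hL : ∀ i : ι, L (MvPolynomial.X i) ∈ Polynomial.degreeLT k (p ^ r) ∧
        gaπ k (p ^ r) (L (MvPolynomial.X i)) = ψ (MvPolynomial.X i)) :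
    -- conclusion: on each weight space the lift has degree at most `|ht_J(λ)| ⬝ p^{r-1}`
    ∀ (lam : Λ), ∀ x ∈ wtSub k ι Λ root lam,
      (L x).degree ≤ (((htJ lam).natAbs * p ^ (r - 1) : ℕ) : WithBot ℕ) := by
  intro lam x hx
  simpa using stmt_3_general hp hr (δ := -htJ) (by simpa [Int.lt_iff_add_one_le] using hroot)
    hwt hΔQ hψΔ hL hx

end Stmt3
end
end

section
/- Assume p is greater than the nilpotence class of U, and let k[U]_{<p} := Σ_{|ht_J(λ)|<p} k[U]_λ. Let φ : 𝔾_{a(r)} → U be a homomorphism of affine group schemes with comorphism φ* : k[U] → k[t]/(t^{p^r}). Then the lift φ*_Y : k[U] → k[t] satisfies φ*_Y(x) = V ∩ π_r^{-1}(φ*(x)) for every x ∈ k[U]_{<p}, where V ⊆ k[t] is the subspace of polynomials of degree less than p^r. In particular, if X = {x₁,…,x_n} is any other subset of k[U]_{<p} on which k[U] is free as a k-algebra, then φ*_X = φ*_Y. -/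
/-!
STATEMENT 4 (Lemma 2.6, `changes`): same setting as Statement 2, and assume in addition
that `p` is greater than the nilpotence class of `U`; since the nilpotence class of `U`
equals the maximum of `ht_J(α)` over the roots `α` of `U`, this is the hypothesis
`ht_J(α_i) < p` for every `i`.  Let `k[U]_{<p} = Σ_{|ht_J(λ)|<p} k[U]_λ`, and let
`L = φ*_Y` be the lift of `φ*` with respect to the generators `Y`.  Then for every
`x ∈ k[U]_{<p}` the value `L x` is the unique polynomial of degree `< p^r` (i.e. the
element of `V ∩ π_r⁻¹(φ*(x))`) representing `φ*(x)`; in particular, for any other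
subset `X ⊆ k[U]_{<p}` on which `k[U]` is free as a `k`-algebra, the lift `φ*_X`
(characterised by sending each member of `X` to its degree `< p^r` representative)
coincides with `φ*_Y`.
-/

noncomputable section

open Polynomial MvPolynomial TensorProduct
open scoped TensorProduct

namespace Stmt4

variable (k : Type) [Field k]

/-- The comultiplication of `k[t]`: `Δ t = t ⊗ 1 + 1 ⊗ t`. -/
def gaComul : Polynomial k →ₐ[k] Polynomial k ⊗[k] Polynomial k :=
  Polynomial.aeval (Polynomial.X ⊗ₜ[k] (1 : Polynomial k) + (1 : Polynomial k) ⊗ₜ[k] Polynomial.X)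

/-- The counit of `k[t]`: evaluation at `0`. -/
def gaCounit : Polynomial k →ₐ[k] k := Polynomial.aeval 0

/-- The Hopf ideal `(t^m)` of `k[t]`. -/
def gaI (m : ℕ) : Ideal (Polynomial k) := Ideal.span {Polynomial.X ^ m}

/-- The canonical projection `π : k[t] → k[t]/(t^m)`. -/
def gaπ (m : ℕ) : Polynomial k →ₐ[k] Polynomial k ⧸ gaI k m :=
  Ideal.Quotient.mkₐ k (gaI k m)

variable (ι Λ : Type) [AddCommGroup Λ]

/-- The `T`-weight space `k[U]_λ`:  `k[U] = k[Y_{α₁},…,Y_{α_n}]` with `Y_{α_i}` of weight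
`-α_i`, so `k[U]_λ` is spanned by the monomials of total weight `λ` for the weight
function `i ↦ -root i`. -/
def wtSub (root : ι → Λ) (lam : Λ) : Submodule k (MvPolynomial ι k) :=
  MvPolynomial.weightedHomogeneousSubmodule k (fun i => - root i) lam

/-- The counit (augmentation) of `k[U]`: evaluation at the identity of `U`, i.e. at the
point all of whose root coordinates are `0`. -/
def uCounit : MvPolynomial ι k →ₐ[k] k := MvPolynomial.aeval (fun _ : ι => (0 : k))

/-- The subspace `k[U]_{<p} = Σ_{|ht_J(λ)| < p} k[U]_λ`. -/
def uLt (root : ι → Λ) (htJ : Λ →+ ℤ) (p : ℕ) : Submodule k (MvPolynomial ι k) :=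
  ⨆ (lam : Λ) (_ : (htJ lam).natAbs < p), wtSub k ι Λ root lam

/-!
Filter `k[U]` by height: `F d` is spanned by the weight spaces `k[U]_λ` with `-ht_J(λ) ≤ d`.
Since the roots of `U` have positive height, `F 0` consists of the constants, and since the
comultiplication preserves weights, `Δ (F (d + 1)) ⊆ F 0 ⊗ k[U] + k[U] ⊗ F d`.

Write `q = p ^ (r - 1)`. For `q ≤ n < p ^ r` the binomial coefficient `n.choose q` is nonzero
in `k`, so the coefficient of `t ^ n` in an element of `k[t]/(t ^ (p ^ r))` can be read off its
comultiplication as the coefficient of `t ^ q ⊗ t ^ (n - q)`. Induction on `d` then shows that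
`φ*` maps `F d` to elements represented in degree at most `d * q`. In particular
`φ*_Y (Y_α)` has degree at most `ht_J(α) * q`, so by multiplicativity `φ*_Y` sends a weight
vector of height less than `p` to a polynomial of degree less than `p * q = p ^ r`.
-/

lemma not_dvd_choose_prime_pow {p : ℕ} (hp : p.Prime) :
    ∀ {s n : ℕ}, p ^ s ≤ n → n < p ^ (s + 1) → ¬ p ∣ n.choose (p ^ s)
  | 0, n, hle, hlt => by
    rw [pow_zero, Nat.choose_one_right]
    exact Nat.not_dvd_of_pos_of_lt (hle.trans_lt' (by simp)) (by simpa using hlt)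
  | s + 1, n, hle, hlt => by
    have : Fact p.Prime := ⟨hp⟩
    have lucas : n.choose (p ^ (s + 1)) ≡ (n / p).choose (p ^ s) [MOD p] := by
      simpa [pow_succ, hp.pos] using
        Choose.choose_modEq_choose_mod_mul_choose_div_nat (n := n) (k := p ^ (s + 1)) (p := p)
    rw [lucas.dvd_iff dvd_rfl]
    refine not_dvd_choose_prime_pow hp ?_ ?_
    · rwa [Nat.le_div_iff_mul_le hp.pos, ← pow_succ]
    · rwa [Nat.div_lt_iff_lt_mul hp.pos, ← pow_succ]

section TruncatedPolynomials

variable {k}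

lemma mem_degreeLT_of_natDegree_lt {R : Type*} [Semiring R] {f : Polynomial R} {m : ℕ}
    (h : f.natDegree < m) : f ∈ Polynomial.degreeLT R m :=
  Polynomial.mem_degreeLT.2 <|
    Polynomial.degree_le_natDegree.trans_lt (WithBot.coe_lt_coe.2 h)

variable (k) in
/-- The linear section of `gaπ` sending each element of `k[t]/(t^m)` to its unique
representative of degree less than `m`. -/
def gaRep (m : ℕ) : (Polynomial k ⧸ gaI k m) →ₗ[k] Polynomial k :=
  AdjoinRoot.modByMonicHom (Polynomial.monic_X_pow m)

variable {m : ℕ}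

lemma gaRep_gaπ (f : Polynomial k) : gaRep k m (gaπ k m f) = f %ₘ Polynomial.X ^ m :=
  AdjoinRoot.modByMonicHom_mk (Polynomial.monic_X_pow m) f

lemma gaπ_surjective : Function.Surjective (gaπ k m) :=
  Ideal.Quotient.mkₐ_surjective k (gaI k m)

lemma degree_gaRep_lt (y : Polynomial k ⧸ gaI k m) : (gaRep k m y).degree < m := by
  obtain ⟨f, rfl⟩ := gaπ_surjective y
  rw [gaRep_gaπ, ← Polynomial.degree_X_pow (R := k) m]
  exact Polynomial.degree_modByMonic_lt f (Polynomial.monic_X_pow m)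

lemma gaRep_gaπ_of_mem_degreeLT {f : Polynomial k} (hf : f ∈ Polynomial.degreeLT k m) :
    gaRep k m (gaπ k m f) = f := by
  rw [gaRep_gaπ, Polynomial.modByMonic_eq_self_iff (Polynomial.monic_X_pow m),
    Polynomial.degree_X_pow]
  exact Polynomial.mem_degreeLT.1 hf

lemma natDegree_gaRep_algebraMap (c : k) :
    (gaRep k m (algebraMap k (Polynomial k ⧸ gaI k m) c)).natDegree = 0 := by
  rw [← (gaπ k m).commutes, gaRep_gaπ, Polynomial.algebraMap_eq]
  exact Nat.eq_zero_of_le_zero <|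
    Polynomial.natDegree_modByMonic_le_left.trans (Polynomial.natDegree_C c).le

variable (k) in
/-- The coefficient of `t^n` as a functional on `k[t]/(t^m)`; it vanishes for `n ≥ m`. -/
def gaCoeff (m n : ℕ) : (Polynomial k ⧸ gaI k m) →ₗ[k] k :=
  Polynomial.lcoeff k n ∘ₗ gaRep k m

lemma gaCoeff_eq_zero_of_natDegree_lt {y : Polynomial k ⧸ gaI k m} {n : ℕ}
    (h : (gaRep k m y).natDegree < n) : gaCoeff k m n y = 0 :=
  Polynomial.coeff_eq_zero_of_natDegree_lt h

lemma natDegree_gaRep_le_of_gaCoeff_eq_zero {y : Polynomial k ⧸ gaI k m} {N : ℕ}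
    (h : ∀ n, N < n → n < m → gaCoeff k m n y = 0) : (gaRep k m y).natDegree ≤ N := by
  rw [Polynomial.natDegree_le_iff_coeff_eq_zero]
  intro n hNn
  rcases lt_or_ge n m with hnm | hmn
  · exact h n hNn hnm
  · exact Polynomial.coeff_eq_zero_of_degree_lt <|
      (degree_gaRep_lt y).trans_le (by exact_mod_cast hmn)

lemma gaCoeff_gaπ {n : ℕ} (hn : n < m) (f : Polynomial k) :
    gaCoeff k m n (gaπ k m f) = f.coeff n := by
  have hdvd : Polynomial.X ^ m ∣ f - f %ₘ Polynomial.X ^ m :=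
    ⟨f /ₘ Polynomial.X ^ m, by rw [Polynomial.modByMonic_eq_sub_mul_div, sub_sub_cancel]⟩
  have hcoeff := Polynomial.X_pow_dvd_iff.1 hdvd n hn
  rw [Polynomial.coeff_sub, sub_eq_zero] at hcoeff
  rw [hcoeff, ← gaRep_gaπ]
  rfl

end TruncatedPolynomials

section Comultiplication

variable {k}

lemma mul'_map_lcoeff_gaComul (a b : ℕ) (f : Polynomial k) :
    LinearMap.mul' k k
        (TensorProduct.map (Polynomial.lcoeff k a) (Polynomial.lcoeff k b) (gaComul k f)) =
      ((a + b).choose a : k) * f.coeff (a + b) := by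
  suffices h : LinearMap.mul' k k ∘ₗ
      TensorProduct.map (Polynomial.lcoeff k a) (Polynomial.lcoeff k b) ∘ₗ
        (gaComul k).toLinearMap = ((a + b).choose a : k) • Polynomial.lcoeff k (a + b) from
    LinearMap.congr_fun h f
  ext n
  have hterm (ij : ℕ × ℕ) :
      LinearMap.mul' k k (TensorProduct.map (Polynomial.lcoeff k a) (Polynomial.lcoeff k b)
        ((Polynomial.X ^ ij.1) ⊗ₜ[k] (Polynomial.X ^ ij.2))) =
      if ij = (a, b) then 1 else 0 := by
    simp [Polynomial.coeff_X_pow, Prod.ext_iff, eq_comm (a := a), eq_comm (a := b), ← ite_and,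
      and_comm]
  have hbinom : gaComul k (Polynomial.X ^ n) = ∑ ij ∈ Finset.HasAntidiagonal.antidiagonal n,
      n.choose ij.1 • ((Polynomial.X ^ ij.1) ⊗ₜ[k] (Polynomial.X ^ ij.2)) := by
    rw [map_pow, gaComul, Polynomial.aeval_X, Commute.add_pow' (.all _ _)]
    simp only [Algebra.TensorProduct.tmul_pow, Algebra.TensorProduct.tmul_mul_tmul, one_pow,
      one_mul, mul_one]
  simp only [LinearMap.comp_apply, AlgHom.toLinearMap_apply, LinearMap.smul_apply,
    Polynomial.lcoeff_apply, Polynomial.monomial_one_right_eq_X_pow, hbinom, map_sum, map_nsmul,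
    hterm, Polynomial.coeff_X_pow]
  by_cases hn : a + b = n <;> simp [hn, Finset.sum_ite_eq']

lemma mul'_map_gaCoeff_comul {m : ℕ}
    {ΔQ : (Polynomial k ⧸ gaI k m) →ₐ[k] (Polynomial k ⧸ gaI k m) ⊗[k] (Polynomial k ⧸ gaI k m)}
    (hΔQ : ΔQ.comp (gaπ k m) =
      (Algebra.TensorProduct.map (gaπ k m) (gaπ k m)).comp (gaComul k))
    {a b : ℕ} (hab : a + b < m) (y : Polynomial k ⧸ gaI k m) :
    LinearMap.mul' k k (TensorProduct.map (gaCoeff k m a) (gaCoeff k m b) (ΔQ y)) =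
      ((a + b).choose a : k) * gaCoeff k m (a + b) y := by
  obtain ⟨f, rfl⟩ := gaπ_surjective y
  have hcoeff {n : ℕ} (hn : n < m) :
      gaCoeff k m n ∘ₗ (gaπ k m).toLinearMap = Polynomial.lcoeff k n :=
    LinearMap.ext (gaCoeff_gaπ hn)
  have hmap : TensorProduct.map (gaCoeff k m a) (gaCoeff k m b) ∘ₗ
      TensorProduct.map (gaπ k m).toLinearMap (gaπ k m).toLinearMap =
        TensorProduct.map (Polynomial.lcoeff k a) (Polynomial.lcoeff k b) := by
    rw [← TensorProduct.map_comp, hcoeff (by omega), hcoeff (by omega)]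
  rw [gaCoeff_gaπ hab, ← mul'_map_lcoeff_gaComul, ← hmap]
  exact congrArg _ (congrArg _ (DFunLike.congr_fun hΔQ f))

lemma mul'_map_eq_zero_of_mem_sup {R M : Type*} [CommSemiring R]
    [AddCommMonoid M] [Module R M] {F₁ F₂ : Submodule R M} {c₁ c₂ : M →ₗ[R] R}
    (h₁ : ∀ x ∈ F₁, c₁ x = 0) (h₂ : ∀ x ∈ F₂, c₂ x = 0) {z : M ⊗[R] M}
    (hz : z ∈ LinearMap.range (TensorProduct.mapIncl F₁ ⊤) ⊔
      LinearMap.range (TensorProduct.mapIncl ⊤ F₂)) :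
    LinearMap.mul' R R (TensorProduct.map c₁ c₂ z) = 0 := by
  suffices h : _ ≤ LinearMap.ker (LinearMap.mul' R R ∘ₗ TensorProduct.map c₁ c₂) from h hz
  refine sup_le ?_ ?_ <;> rw [LinearMap.range_le_ker_iff] <;> refine TensorProduct.ext' ?_
  · rintro ⟨x, hx⟩ y
    simp [TensorProduct.mapIncl, h₁ x hx]
  · rintro x ⟨y, hy⟩
    simp [TensorProduct.mapIncl, h₂ y hy]

lemma natDegree_gaRep_le_of_mem_filtration {p s : ℕ} (hp : p.Prime) [CharP k p]
    {ΔQ : (Polynomial k ⧸ gaI k (p ^ (s + 1))) →ₐ[k]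
      (Polynomial k ⧸ gaI k (p ^ (s + 1))) ⊗[k] (Polynomial k ⧸ gaI k (p ^ (s + 1)))}
    (hΔQ : ΔQ.comp (gaπ k (p ^ (s + 1))) =
      (Algebra.TensorProduct.map (gaπ k (p ^ (s + 1))) (gaπ k (p ^ (s + 1)))).comp (gaComul k))
    {M : Type*} [AddCommMonoid M] [Module k M] {comul : M →ₗ[k] M ⊗[k] M}
    {ψ : M →ₗ[k] Polynomial k ⧸ gaI k (p ^ (s + 1))}
    (hψ : ∀ x, TensorProduct.map ψ ψ (comul x) = ΔQ (ψ x)) {F : ℕ → Submodule k M}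
    (hF_zero : ∀ x ∈ F 0, (gaRep k (p ^ (s + 1)) (ψ x)).natDegree = 0)
    (hF_succ : ∀ d, ∀ x ∈ F (d + 1), comul x ∈
      LinearMap.range (TensorProduct.mapIncl (F 0) ⊤) ⊔
        LinearMap.range (TensorProduct.mapIncl ⊤ (F d)))
    (d : ℕ) {x : M} (hx : x ∈ F d) :
    (gaRep k (p ^ (s + 1)) (ψ x)).natDegree ≤ d * p ^ s := by
  induction d generalizing x with
  | zero => rw [hF_zero x hx, zero_mul]
  | succ d ih =>
    refine natDegree_gaRep_le_of_gaCoeff_eq_zero fun n hdn hn => ?_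
    rw [Nat.succ_mul] at hdn
    obtain ⟨b, rfl⟩ : ∃ b, n = p ^ s + b := Nat.exists_eq_add_of_le (by omega)
    have hb : d * p ^ s < b := by omega
    have hchoose : ((p ^ s + b).choose (p ^ s) : k) ≠ 0 := by
      rw [Ne, CharP.cast_eq_zero_iff k p]
      exact not_dvd_choose_prime_pow hp (Nat.le_add_right _ _) hn
    refine (mul_eq_zero.1 ?_).resolve_left hchoose
    rw [← mul'_map_gaCoeff_comul hΔQ hn, ← hψ, ← LinearMap.comp_apply (TensorProduct.map _ _),
      ← TensorProduct.map_comp]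
    refine mul'_map_eq_zero_of_mem_sup (fun y hy => ?_) (fun y hy => ?_) (hF_succ d x hx)
    · exact gaCoeff_eq_zero_of_natDegree_lt ((hF_zero y hy).trans_lt (pow_pos hp.pos s))
    · exact gaCoeff_eq_zero_of_natDegree_lt ((ih hy).trans_lt hb)

end Comultiplication

section HeightFiltration

variable {k ι Λ}

/-- The height `ht_J(α_i)` of the `i`-th root as a natural number; it is `0` if the integer
`ht_J(α_i)` is negative. -/
def rootHt (root : ι → Λ) (htJ : Λ →+ ℤ) (i : ι) : ℕ := (htJ (root i)).toNat

variable (k) in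
/-- The sum of the weight spaces `k[U]_λ` with `-ht_J(λ) ≤ d`. The sign reflects that the
coordinate functions `Y_α` have weight `-α`. -/
def uHtLE (root : ι → Λ) (htJ : Λ →+ ℤ) (d : ℕ) : Submodule k (MvPolynomial ι k) :=
  ⨆ (lam : Λ) (_ : -htJ lam ≤ d), wtSub k ι Λ root lam

variable {root : ι → Λ} {htJ : Λ →+ ℤ} {lam : Λ} {d : ℕ}

lemma wtSub_le_uHtLE (h : -htJ lam ≤ d) : wtSub k ι Λ root lam ≤ uHtLE k root htJ d :=
  le_iSup₂ (f := fun mu (_ : -htJ mu ≤ d) => wtSub k ι Λ root mu) lam h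

lemma X_mem_uHtLE (i : ι) : MvPolynomial.X i ∈ uHtLE k root htJ (rootHt root htJ i) := by
  refine wtSub_le_uHtLE (lam := -root i) ?_ (MvPolynomial.isWeightedHomogeneous_X k _ i)
  rw [map_neg, neg_neg]
  exact Int.self_le_toNat _

lemma coe_weight_rootHt (hroot : ∀ i, 0 ≤ htJ (root i)) {x : MvPolynomial ι k}
    (hx : x ∈ wtSub k ι Λ root lam) {e : ι →₀ ℕ} (he : e ∈ x.support) :
    (Finsupp.weight (rootHt root htJ) e : ℤ) = -htJ lam := by
  rw [← hx (MvPolynomial.mem_support_iff.1 he), Finsupp.weight_apply, Finsupp.weight_apply]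
  simp [Finsupp.sum, rootHt, Int.toNat_of_nonneg (hroot _)]

lemma weightedTotalDegree_rootHt_le (hroot : ∀ i, 0 ≤ htJ (root i)) {x : MvPolynomial ι k}
    (hx : x ∈ wtSub k ι Λ root lam) :
    MvPolynomial.weightedTotalDegree (rootHt root htJ) x ≤ (htJ lam).natAbs :=
  Finset.sup_le fun e he => by
    have := coe_weight_rootHt hroot hx he
    omega

lemma mem_range_algebraMap_of_mem_uHtLE_zero (hroot : ∀ i, 1 ≤ htJ (root i))
    {x : MvPolynomial ι k} (hx : x ∈ uHtLE k root htJ 0) :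
    x ∈ LinearMap.range (Algebra.linearMap k (MvPolynomial ι k)) := by
  classical
  suffices h : uHtLE k root htJ 0 ≤ _ from h hx
  refine iSup₂_le fun lam hlam y hy => ?_
  have hsupp : ∀ e ∈ y.support, e = 0 := by
    intro e he
    have hweight := coe_weight_rootHt (fun i => zero_le_one.trans (hroot i)) hy he
    have : Finsupp.NonTorsionWeight ℕ (rootHt root htJ) :=
      Finsupp.nonTorsionWeight_of ℕ _ fun i => (Int.lt_toNat.2 (hroot i)).ne'
    exact (Finsupp.weight_eq_zero_iff_eq_zero (rootHt root htJ)).1 (by omega)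
  refine ⟨y.coeff 0, ?_⟩
  ext e
  rw [Algebra.linearMap_apply, MvPolynomial.algebraMap_eq, MvPolynomial.coeff_C]
  split_ifs with he
  · rw [he]
  · exact (MvPolynomial.notMem_support_iff.1 fun hmem => he (hsupp e hmem).symm).symm

lemma comul_mem_of_mem_uHtLE_succ
    {comul : MvPolynomial ι k →ₗ[k] MvPolynomial ι k ⊗[k] MvPolynomial ι k}
    (hwt : ∀ (lam : Λ), ∀ x ∈ wtSub k ι Λ root lam,
      comul x ∈ ⨆ (pr : Λ × Λ) (_ : pr.1 + pr.2 = lam),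
        LinearMap.range (TensorProduct.map (wtSub k ι Λ root pr.1).subtype
          (wtSub k ι Λ root pr.2).subtype))
    {x : MvPolynomial ι k} (hx : x ∈ uHtLE k root htJ (d + 1)) :
    comul x ∈ LinearMap.range (TensorProduct.mapIncl (uHtLE k root htJ 0) ⊤) ⊔
      LinearMap.range (TensorProduct.mapIncl ⊤ (uHtLE k root htJ d)) := by
  suffices h : uHtLE k root htJ (d + 1) ≤
      (LinearMap.range (TensorProduct.mapIncl (uHtLE k root htJ 0) ⊤) ⊔
        LinearMap.range (TensorProduct.mapIncl ⊤ (uHtLE k root htJ d))).comap comul from h hx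
  refine iSup₂_le fun lam hlam y hy => ?_
  rw [Submodule.mem_comap]
  refine SetLike.le_def.1 (iSup₂_le ?_) (hwt lam y hy)
  rintro ⟨mu, nu⟩ hsum
  have hht : htJ mu + htJ nu = htJ lam := by rw [← map_add, hsum]
  rcases le_or_gt (-htJ mu) 0 with hmu | hmu
  · exact (TensorProduct.range_mapIncl_mono (wtSub_le_uHtLE hmu) le_top).trans le_sup_left
  · have hnu : -htJ nu ≤ d := by
      push_cast at hlam
      omega
    exact (TensorProduct.range_mapIncl_mono le_top (wtSub_le_uHtLE hnu)).trans le_sup_right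

lemma natDegree_gaRep_le_of_mem_uHtLE {p s : ℕ} (hp : p.Prime) [CharP k p]
    (hroot : ∀ i, 1 ≤ htJ (root i))
    {comul : MvPolynomial ι k →ₐ[k] MvPolynomial ι k ⊗[k] MvPolynomial ι k}
    (hwt : ∀ (lam : Λ), ∀ x ∈ wtSub k ι Λ root lam,
      comul x ∈ ⨆ (pr : Λ × Λ) (_ : pr.1 + pr.2 = lam),
        LinearMap.range (TensorProduct.map (wtSub k ι Λ root pr.1).subtype
          (wtSub k ι Λ root pr.2).subtype))
    {ΔQ : (Polynomial k ⧸ gaI k (p ^ (s + 1))) →ₐ[k]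
      (Polynomial k ⧸ gaI k (p ^ (s + 1))) ⊗[k] (Polynomial k ⧸ gaI k (p ^ (s + 1)))}
    (hΔQ : ΔQ.comp (gaπ k (p ^ (s + 1))) =
      (Algebra.TensorProduct.map (gaπ k (p ^ (s + 1))) (gaπ k (p ^ (s + 1)))).comp (gaComul k))
    {ψ : MvPolynomial ι k →ₐ[k] Polynomial k ⧸ gaI k (p ^ (s + 1))}
    (hψΔ : (Algebra.TensorProduct.map ψ ψ).comp comul = ΔQ.comp ψ)
    {x : MvPolynomial ι k} (hx : x ∈ uHtLE k root htJ d) :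
    (gaRep k (p ^ (s + 1)) (ψ x)).natDegree ≤ d * p ^ s := by
  refine natDegree_gaRep_le_of_mem_filtration hp hΔQ (comul := comul.toLinearMap)
    (ψ := ψ.toLinearMap) (DFunLike.congr_fun hψΔ) (fun y hy => ?_)
    (fun _ _ hy => comul_mem_of_mem_uHtLE_succ hwt hy) d hx
  obtain ⟨c, rfl⟩ := mem_range_algebraMap_of_mem_uHtLE_zero hroot hy
  rw [Algebra.linearMap_apply, AlgHom.toLinearMap_apply, AlgHom.commutes]
  exact natDegree_gaRep_algebraMap c

end HeightFiltration

section Lifts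

lemma natDegree_algHom_monomial_le {R σ : Type*} [CommSemiring R]
    (L : MvPolynomial σ R →ₐ[R] Polynomial R) {w : σ → ℕ} {q : ℕ}
    (hL : ∀ i, (L (MvPolynomial.X i)).natDegree ≤ w i * q) (e : σ →₀ ℕ) (c : R) :
    (L (MvPolynomial.monomial e c)).natDegree ≤ Finsupp.weight w e * q := by
  have hmonomial : L (MvPolynomial.monomial e c) =
      Polynomial.C c * ∏ i ∈ e.support, L (MvPolynomial.X i) ^ e i := by
    rw [MvPolynomial.monomial_eq, map_mul, ← MvPolynomial.algebraMap_eq, AlgHom.commutes,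
      Polynomial.algebraMap_eq, map_finsuppProd]
    simp only [Finsupp.prod, map_pow]
  calc (L (MvPolynomial.monomial e c)).natDegree
      ≤ (∏ i ∈ e.support, L (MvPolynomial.X i) ^ e i).natDegree :=
        hmonomial ▸ Polynomial.natDegree_C_mul_le _ _
    _ ≤ ∑ i ∈ e.support, (L (MvPolynomial.X i) ^ e i).natDegree :=
        Polynomial.natDegree_prod_le _ _
    _ ≤ ∑ i ∈ e.support, e i * (w i * q) := by
        gcongr with i
        exact Polynomial.natDegree_pow_le.trans (Nat.mul_le_mul_left _ (hL i))
    _ = Finsupp.weight w e * q := by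
        simp only [Finsupp.weight_apply, Finsupp.sum, Finset.sum_mul, smul_eq_mul, mul_assoc]

lemma natDegree_algHom_le_weightedTotalDegree {R σ : Type*} [CommSemiring R]
    (L : MvPolynomial σ R →ₐ[R] Polynomial R) {w : σ → ℕ} {q : ℕ}
    (hL : ∀ i, (L (MvPolynomial.X i)).natDegree ≤ w i * q) (x : MvPolynomial σ R) :
    (L x).natDegree ≤ MvPolynomial.weightedTotalDegree w x * q := by
  have hx : L x = ∑ e ∈ x.support, L (MvPolynomial.monomial e (x.coeff e)) := by
    rw [← map_sum, ← x.as_sum]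
  rw [hx]
  refine Polynomial.natDegree_sum_le_of_forall_le _ _ fun e he => ?_
  exact (natDegree_algHom_monomial_le L hL e _).trans <|
    Nat.mul_le_mul_right _ (MvPolynomial.le_weightedTotalDegree w he)

variable {k ι Λ}

lemma gaπ_lift {m : ℕ} {ψ : MvPolynomial ι k →ₐ[k] Polynomial k ⧸ gaI k m}
    {L : MvPolynomial ι k →ₐ[k] Polynomial k}
    (hL : ∀ i, gaπ k m (L (MvPolynomial.X i)) = ψ (MvPolynomial.X i)) (x : MvPolynomial ι k) :
    gaπ k m (L x) = ψ x :=
  DFunLike.congr_fun (MvPolynomial.algHom_ext (f := (gaπ k m).comp L) hL) x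

lemma algHom_mem_degreeLT_of_mem_uLt {root : ι → Λ} {htJ : Λ →+ ℤ} (hroot : ∀ i, 0 ≤ htJ (root i))
    {p q : ℕ} (hq : 0 < q) {L : MvPolynomial ι k →ₐ[k] Polynomial k}
    (hL : ∀ i, (L (MvPolynomial.X i)).natDegree ≤ rootHt root htJ i * q)
    {x : MvPolynomial ι k} (hx : x ∈ uLt k ι Λ root htJ p) :
    L x ∈ Polynomial.degreeLT k (p * q) := by
  suffices h : uLt k ι Λ root htJ p ≤ (Polynomial.degreeLT k (p * q)).comap L.toLinearMap from
    h hx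
  refine iSup₂_le fun lam hlam y hy => mem_degreeLT_of_natDegree_lt ?_
  calc (L y).natDegree
      ≤ MvPolynomial.weightedTotalDegree (rootHt root htJ) y * q :=
        natDegree_algHom_le_weightedTotalDegree L hL y
    _ ≤ (htJ lam).natAbs * q := Nat.mul_le_mul_right q (weightedTotalDegree_rootHt_le hroot hy)
    _ < p * q := Nat.mul_lt_mul_of_pos_right hlam hq

lemma lift_eq_of_surjective_aeval {m : ℕ} {ψ : MvPolynomial ι k →ₐ[k] Polynomial k ⧸ gaI k m}
    {ι' : Type*} {gens : ι' → MvPolynomial ι k}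
    (hgens : Function.Surjective
      (MvPolynomial.aeval gens : MvPolynomial ι' k →ₐ[k] MvPolynomial ι k))
    {L L' : MvPolynomial ι k →ₐ[k] Polynomial k}
    (hL : ∀ j, L (gens j) ∈ Polynomial.degreeLT k m ∧ gaπ k m (L (gens j)) = ψ (gens j))
    (hL' : ∀ j, L' (gens j) ∈ Polynomial.degreeLT k m ∧ gaπ k m (L' (gens j)) = ψ (gens j)) :
    L' = L := by
  refine (AlgHom.cancel_right hgens).1 (MvPolynomial.algHom_ext fun j => ?_)
  simp only [AlgHom.comp_apply, MvPolynomial.aeval_X]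
  rw [← gaRep_gaπ_of_mem_degreeLT (hL' j).1, (hL' j).2, ← (hL j).2,
    gaRep_gaπ_of_mem_degreeLT (hL j).1]

end Lifts

theorem stmt_4_general {p r : ℕ} (hp : p.Prime) [CharP k p] (hr : 1 ≤ r)
    {root : ι → Λ} {htJ : Λ →+ ℤ} (hroot : ∀ i, 1 ≤ htJ (root i))
    {comul : MvPolynomial ι k →ₐ[k] MvPolynomial ι k ⊗[k] MvPolynomial ι k}
    (hwt : ∀ (lam : Λ), ∀ x ∈ wtSub k ι Λ root lam,
      comul x ∈ ⨆ (pr : Λ × Λ) (_ : pr.1 + pr.2 = lam),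
        LinearMap.range (TensorProduct.map (wtSub k ι Λ root pr.1).subtype
          (wtSub k ι Λ root pr.2).subtype))
    {ΔQ : (Polynomial k ⧸ gaI k (p ^ r)) →ₐ[k]
      (Polynomial k ⧸ gaI k (p ^ r)) ⊗[k] (Polynomial k ⧸ gaI k (p ^ r))}
    (hΔQ : ΔQ.comp (gaπ k (p ^ r)) =
      (Algebra.TensorProduct.map (gaπ k (p ^ r)) (gaπ k (p ^ r))).comp (gaComul k))
    {ψ : MvPolynomial ι k →ₐ[k] Polynomial k ⧸ gaI k (p ^ r)}
    (hψΔ : (Algebra.TensorProduct.map ψ ψ).comp comul = ΔQ.comp ψ)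
    {L : MvPolynomial ι k →ₐ[k] Polynomial k}
    (hL : ∀ i, L (MvPolynomial.X i) ∈ Polynomial.degreeLT k (p ^ r) ∧
      gaπ k (p ^ r) (L (MvPolynomial.X i)) = ψ (MvPolynomial.X i)) :
    (∀ x ∈ uLt k ι Λ root htJ p,
      L x ∈ Polynomial.degreeLT k (p ^ r) ∧ gaπ k (p ^ r) (L x) = ψ x) ∧
    ∀ (ι' : Type*) (gens : ι' → MvPolynomial ι k),
      (∀ j, gens j ∈ uLt k ι Λ root htJ p) →
      Function.Surjective
        (MvPolynomial.aeval gens : MvPolynomial ι' k →ₐ[k] MvPolynomial ι k) →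
      ∀ L' : MvPolynomial ι k →ₐ[k] Polynomial k,
        (∀ j, L' (gens j) ∈ Polynomial.degreeLT k (p ^ r) ∧
          gaπ k (p ^ r) (L' (gens j)) = ψ (gens j)) →
        L' = L := by
  obtain ⟨s, rfl⟩ := Nat.exists_eq_add_of_le' hr
  have hdegX (i : ι) : (L (MvPolynomial.X i)).natDegree ≤ rootHt root htJ i * p ^ s := by
    rw [← gaRep_gaπ_of_mem_degreeLT (hL i).1, (hL i).2]
    exact natDegree_gaRep_le_of_mem_uHtLE hp hroot hwt hΔQ hψΔ (X_mem_uHtLE i)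
  have hlift : ∀ x ∈ uLt k ι Λ root htJ p,
      L x ∈ Polynomial.degreeLT k (p ^ (s + 1)) ∧ gaπ k (p ^ (s + 1)) (L x) = ψ x := by
    refine fun x hx => ⟨?_, gaπ_lift (fun i => (hL i).2) x⟩
    rw [pow_succ']
    exact algHom_mem_degreeLT_of_mem_uLt (fun i => zero_le_one.trans (hroot i))
      (pow_pos hp.pos s) hdegX hx
  exact ⟨hlift, fun ι' gens hgens hsurj L' hL' =>
    lift_eq_of_surjective_aeval hsurj (fun j => hlift _ (hgens j)) hL'⟩

theorem stmt_4 [IsAlgClosed k] (p r : ℕ) (hp : p.Prime) [CharP k p] (hr : 1 ≤ r)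
    [Fintype ι]
    (root : ι → Λ) (htJ : Λ →+ ℤ) (hroot : ∀ i, 1 ≤ htJ (root i))
    -- the nilpotence class of `U` (equal to `max ht_J(α)`) is less than `p`:
    (hnil : ∀ i, htJ (root i) < (p : ℤ))
    (comul : MvPolynomial ι k →ₐ[k] MvPolynomial ι k ⊗[k] MvPolynomial ι k)
    (hcul : ∀ f, (TensorProduct.lid k (MvPolynomial ι k))
        ((TensorProduct.map (uCounit k ι).toLinearMap
          (LinearMap.id : MvPolynomial ι k →ₗ[k] MvPolynomial ι k)) (comul f)) = f)
    (hcur : ∀ f, (TensorProduct.rid k (MvPolynomial ι k))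
        ((TensorProduct.map (LinearMap.id : MvPolynomial ι k →ₗ[k] MvPolynomial ι k)
          (uCounit k ι).toLinearMap) (comul f)) = f)
    (hwt : ∀ (lam : Λ), ∀ x ∈ wtSub k ι Λ root lam,
        comul x ∈ ⨆ (pr : Λ × Λ) (_ : pr.1 + pr.2 = lam),
          LinearMap.range (TensorProduct.map (wtSub k ι Λ root pr.1).subtype
            (wtSub k ι Λ root pr.2).subtype))
    (ΔQ : (Polynomial k ⧸ gaI k (p ^ r)) →ₐ[k]
        (Polynomial k ⧸ gaI k (p ^ r)) ⊗[k] (Polynomial k ⧸ gaI k (p ^ r)))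
    (hΔQ : ΔQ.comp (gaπ k (p ^ r)) =
        (Algebra.TensorProduct.map (gaπ k (p ^ r)) (gaπ k (p ^ r))).comp (gaComul k))
    (εQ : (Polynomial k ⧸ gaI k (p ^ r)) →ₐ[k] k)
    (hεQ : εQ.comp (gaπ k (p ^ r)) = gaCounit k)
    (ψ : MvPolynomial ι k →ₐ[k] Polynomial k ⧸ gaI k (p ^ r))
    (hψΔ : (Algebra.TensorProduct.map ψ ψ).comp comul = ΔQ.comp ψ)
    (hψε : εQ.comp ψ = uCounit k ι)
    -- `L = φ*_Y`, the lift of `φ*` with respect to the generators `Y`: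
    (L : MvPolynomial ι k →ₐ[k] Polynomial k)
    (hL : ∀ i : ι, L (MvPolynomial.X i) ∈ Polynomial.degreeLT k (p ^ r) ∧
        gaπ k (p ^ r) (L (MvPolynomial.X i)) = ψ (MvPolynomial.X i)) :
    -- (1) for every `x ∈ k[U]_{<p}`, `L x` is the degree `< p^r` representative of
    --     `φ*(x)`, i.e. `φ*_Y(x) = V ∩ π_r⁻¹(φ*(x))`:
    (∀ x ∈ uLt k ι Λ root htJ p,
        L x ∈ Polynomial.degreeLT k (p ^ r) ∧ gaπ k (p ^ r) (L x) = ψ x) ∧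
    -- (2) if `X = {x_j}` is any other subset of `k[U]_{<p}` on which `k[U]` is free as a
    --     `k`-algebra, then the lift `φ*_X` equals `φ*_Y`:
    (∀ (ι' : Type) (gens : ι' → MvPolynomial ι k),
        (∀ j, gens j ∈ uLt k ι Λ root htJ p) →
        Function.Bijective
          ⇑(MvPolynomial.aeval gens : MvPolynomial ι' k →ₐ[k] MvPolynomial ι k) →
        ∀ L' : MvPolynomial ι k →ₐ[k] Polynomial k,
          (∀ j, L' (gens j) ∈ Polynomial.degreeLT k (p ^ r) ∧
            gaπ k (p ^ r) (L' (gens j)) = ψ (gens j)) →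
          L' = L) := by
  have ⟨hlift, huniq⟩ := stmt_4_general k ι Λ hp hr hroot hwt hΔQ hψΔ hL
  exact ⟨hlift, fun ι' gens hgens hbij => huniq ι' gens hgens hbij.surjective⟩

end Stmt4
end
end

section
/- Assume the nilpotence class of U is less than p. Then for every homomorphism of affine group schemes φ : 𝔾_{a(r)} → U with comorphism φ* : k[U] → k[t]/(t^{p^r}), the lift φ*_Y : k[U] → k[t] is a homomorphism of Hopf algebras. -/
/-!
STATEMENT 5 (Proposition 2.7, first part): same setting as Statement 2, and assume that
the nilpotence class of `U` is less than `p` (equivalently, `ht_J(α_i) < p` for every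
root `α_i` of `U`).  Then for every homomorphism of affine group schemes
`φ : 𝔾_{a(r)} → U`, with comorphism `φ* : k[U] → k[t]/(t^{p^r})`, the lift
`φ*_Y : k[U] → k[t]` (the algebra map sending each generator `Y_α` to the unique
degree `< p^r` representative of `φ*(Y_α)`) is a homomorphism of Hopf algebras, i.e. it
is compatible with the comultiplications and the counits (compatibility with the
antipodes being automatic for bialgebra maps of Hopf algebras).
-/



noncomputable section

open Polynomial MvPolynomial TensorProduct
open scoped TensorProduct

namespace Stmt5

variable (k : Type) [Field k]

/-- The comultiplication of `k[t]`: `Δ t = t ⊗ 1 + 1 ⊗ t`. -/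
def gaComul : Polynomial k →ₐ[k] Polynomial k ⊗[k] Polynomial k :=
  Polynomial.aeval (Polynomial.X ⊗ₜ[k] (1 : Polynomial k) + (1 : Polynomial k) ⊗ₜ[k] Polynomial.X)

/-- The counit of `k[t]`: evaluation at `0`. -/
def gaCounit : Polynomial k →ₐ[k] k := Polynomial.aeval 0

/-- The Hopf ideal `(t^m)` of `k[t]`. -/
def gaI (m : ℕ) : Ideal (Polynomial k) := Ideal.span {Polynomial.X ^ m}

/-- The canonical projection `π : k[t] → k[t]/(t^m)`. -/
def gaπ (m : ℕ) : Polynomial k →ₐ[k] Polynomial k ⧸ gaI k m :=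
  Ideal.Quotient.mkₐ k (gaI k m)

variable (ι Λ : Type) [AddCommGroup Λ]

/-- The `T`-weight space `k[U]_λ`:  `k[U] = k[Y_{α₁},…,Y_{α_n}]` with `Y_{α_i}` of weight
`-α_i`, so `k[U]_λ` is spanned by the monomials of total weight `λ` for the weight
function `i ↦ -root i`. -/
def wtSub (root : ι → Λ) (lam : Λ) : Submodule k (MvPolynomial ι k) :=
  MvPolynomial.weightedHomogeneousSubmodule k (fun i => - root i) lam

/-- The counit (augmentation) of `k[U]`: evaluation at the identity of `U`, i.e. at the
point all of whose root coordinates are `0`. -/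
def uCounit : MvPolynomial ι k →ₐ[k] k := MvPolynomial.aeval (fun _ : ι => (0 : k))

/-- The subspace `k[U]_{<p} = Σ_{|ht_J(λ)| < p} k[U]_λ`. -/
def uLt (root : ι → Λ) (htJ : Λ →+ ℤ) (p : ℕ) : Submodule k (MvPolynomial ι k) :=
  ⨆ (lam : Λ) (_ : (htJ lam).natAbs < p), wtSub k ι Λ root lam

/-!
Give `Y_i` its height `w i`. Comparing coefficients of `t ^ j ⊗ t ^ l` in `Δ (φ Y_i)` and
`(φ ⊗ φ) (Δ Y_i)`, by induction on the height every exponent of `t` in the lift of `φ Y_i` is a sum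
of at most `w i` powers `p ^ v` with `v < r`: an exponent `n` that is not a power of `p` splits as
`j + l` with `p ∤ n.choose j`, and `t ^ j`, `t ^ l` then occur in the images of monomials of smaller
heights adding up to at most `w i`. Since heights are less than `p`, all exponents in the tensor
factors of `(φ ⊗ φ) (Δ Y_i)` are less than `p ^ r`, so that no information is lost modulo
`t ^ (p ^ r)`.
-/

open scoped Pointwise

section PowersLT

/-- The summands `0` and `p ^ v`, `v < r`; the set of sums of at most `h` powers `p ^ v` with
`v < r` is the pointwise multiple `h • powersLT p r`. -/
def powersLT (p r : ℕ) : Set ℕ := insert 0 ((p ^ ·) '' Set.Iio r)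

lemma zero_mem_powersLT (p r : ℕ) : 0 ∈ powersLT p r := Set.mem_insert _ _

lemma pow_mem_powersLT {r v : ℕ} (p : ℕ) (hv : v < r) : p ^ v ∈ powersLT p r :=
  Set.mem_insert_of_mem _ ⟨v, hv, rfl⟩

lemma mul_le_pow_of_mem_powersLT {p r n : ℕ} (hp : 0 < p) (hn : n ∈ powersLT p r) :
    p * n ≤ p ^ r := by
  obtain rfl | ⟨v, hv, rfl⟩ := hn
  · simp
  · simpa only [pow_succ'] using Nat.pow_le_pow_right hp (Nat.succ_le_of_lt hv)

lemma mul_le_mul_pow_of_mem_nsmul_powersLT {p r h n : ℕ} (hp : 0 < p)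
    (hn : n ∈ h • powersLT p r) : p * n ≤ h * p ^ r := by
  induction h generalizing n with
  | zero => simp_all
  | succ h ih =>
    rw [succ_nsmul] at hn
    obtain ⟨a, ha, b, hb, rfl⟩ := hn
    calc p * (a + b) = p * a + p * b := mul_add ..
      _ ≤ h * p ^ r + p ^ r := add_le_add (ih ha) (mul_le_pow_of_mem_powersLT hp hb)
      _ = (h + 1) * p ^ r := (Nat.succ_mul ..).symm

lemma lt_pow_of_mem_nsmul_powersLT {p r h n : ℕ} (hh : h < p) (hn : n ∈ h • powersLT p r) :
    n < p ^ r := by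
  have hp : 0 < p := Nat.zero_lt_of_lt hh
  refine Nat.lt_of_mul_lt_mul_left (a := p) ?_
  calc p * n ≤ h * p ^ r := mul_le_mul_pow_of_mem_nsmul_powersLT hp hn
    _ < p * p ^ r := Nat.mul_lt_mul_of_pos_right hh (pow_pos hp r)

lemma eq_pow_or_exists_not_dvd_choose {p : ℕ} (hp : p.Prime) {n : ℕ} (hn : 0 < n) :
    (∃ v, n = p ^ v) ∨ ∃ j l, 0 < j ∧ 0 < l ∧ j + l = n ∧ ¬ p ∣ n.choose j := by
  have := Fact.mk hp
  by_contra! ⟨hpow, hdvd⟩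
  refine hpow _ (Choose.eq_pow_multiplicity_of_choose_modEq_zero_nat hn fun j hj => ?_)
  rw [Finset.mem_Icc] at hj
  exact Nat.modEq_zero_iff_dvd.2 (hdvd j (n - j) (by omega) (by omega) (by omega))

end PowersLT

section Support

variable {R : Type*} [Semiring R]

lemma lt_of_mem_support_of_mem_degreeLT {f : R[X]} {m n : ℕ} (hf : f ∈ Polynomial.degreeLT R m)
    (hn : n ∈ f.support) : n < m := by
  exact_mod_cast (Polynomial.le_degree_of_mem_supp n hn).trans_lt (Polynomial.mem_degreeLT.1 hf)

lemma support_mul_subset_add {f g : R[X]} {s t : Set ℕ} (hf : ↑f.support ⊆ s)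
    (hg : ↑g.support ⊆ t) : ↑(f * g).support ⊆ s + t := by
  intro n hn
  rw [Finset.mem_coe, Polynomial.mem_support_iff, Polynomial.coeff_mul] at hn
  obtain ⟨⟨a, b⟩, hab, hne⟩ := Finset.exists_ne_zero_of_sum_ne_zero hn
  rw [← Finset.HasAntidiagonal.mem_antidiagonal.1 hab]
  exact Set.add_mem_add (hf (Polynomial.mem_support_iff.2 (left_ne_zero_of_mul hne)))
    (hg (Polynomial.mem_support_iff.2 (right_ne_zero_of_mul hne)))

lemma support_one_subset_zero : ↑(1 : R[X]).support ⊆ (0 : Set ℕ) := by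
  intro n hn
  have hn' : n = 0 ∧ (1 : R) ≠ 0 := by simpa [Polynomial.coeff_one] using hn
  exact hn'.1

lemma support_pow_subset_nsmul {f : R[X]} {s : Set ℕ} (hf : ↑f.support ⊆ s) (m : ℕ) :
    ↑(f ^ m).support ⊆ m • s := by
  induction m with
  | zero => simpa only [pow_zero, zero_nsmul] using support_one_subset_zero
  | succ m ih => simpa only [pow_succ, succ_nsmul] using support_mul_subset_add ih hf

lemma support_map_monomial_subset_nsmul {R σ : Type*} [CommSemiring R] {s : Set ℕ}
    (L : MvPolynomial σ R →ₐ[R] R[X]) (w : σ → ℕ) (d : σ →₀ ℕ)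
    (hd : ∀ i ∈ d.support, ↑(L (MvPolynomial.X i)).support ⊆ w i • s) :
    ↑(L (MvPolynomial.monomial d 1)).support ⊆ Finsupp.weight w d • s := by
  classical
  induction d using Finsupp.induction with
  | zero => simpa using support_one_subset_zero
  | single_add i m d hi hm ih =>
    rw [Finsupp.support_single_add hi hm, Finset.forall_mem_cons] at hd
    rw [MvPolynomial.monomial_single_add, map_mul, map_pow, map_add, Finsupp.weight_single,
      add_nsmul, smul_eq_mul, mul_nsmul']
    exact support_mul_subset_add (support_pow_subset_nsmul hd.1 m) (ih hd.2)

end Support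

section TensorCoeff

variable {R : Type*} [CommSemiring R]

/-- The coefficient of `t ^ j ⊗ t ^ l` in an element of `R[t] ⊗ R[t]`. -/
def tensorCoeff (j l : ℕ) : R[X] ⊗[R] R[X] →ₗ[R] R :=
  LinearMap.mul' R R ∘ₗ TensorProduct.map (Polynomial.lcoeff R j) (Polynomial.lcoeff R l)

@[simp]
lemma tensorCoeff_tmul (j l : ℕ) (f g : R[X]) :
    tensorCoeff j l (f ⊗ₜ g) = f.coeff j * g.coeff l := by
  simp [tensorCoeff]

lemma basisMonomials_tensorProduct_repr (u : R[X] ⊗[R] R[X]) (j l : ℕ) :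
    ((Polynomial.basisMonomials R).tensorProduct (Polynomial.basisMonomials R)).repr u (j, l) =
      tensorCoeff j l u := by
  induction u with
  | zero => simp
  | add u v hu hv => simp [hu, hv]
  | tmul f g =>
    rw [tensorCoeff_tmul, Module.Basis.tensorProduct_repr_tmul_apply, smul_eq_mul, mul_comm]
    rfl

lemma ext_tensorCoeff {u v : R[X] ⊗[R] R[X]}
    (h : ∀ j l, tensorCoeff j l u = tensorCoeff j l v) : u = v := by
  refine ((Polynomial.basisMonomials R).tensorProduct
    (Polynomial.basisMonomials R)).repr.injective (Finsupp.ext fun ⟨j, l⟩ => ?_)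
  rw [basisMonomials_tensorProduct_repr, basisMonomials_tensorProduct_repr, h]

variable (R) in
/-- The comultiplication `t ↦ t ⊗ 1 + 1 ⊗ t` of the additive group over any commutative semiring;
`gaComul` is the case of a field. -/
def addComul : R[X] →ₐ[R] R[X] ⊗[R] R[X] :=
  Polynomial.aeval (Polynomial.X ⊗ₜ[R] (1 : R[X]) + (1 : R[X]) ⊗ₜ[R] Polynomial.X)

lemma addComul_X_pow (n : ℕ) : addComul R (Polynomial.X ^ n) =
    ∑ q ∈ Finset.HasAntidiagonal.antidiagonal n,
      n.choose q.1 • (Polynomial.X ^ q.1 : R[X]) ⊗ₜ[R] (Polynomial.X ^ q.2 : R[X]) := by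
  rw [addComul, map_pow, Polynomial.aeval_X, (Commute.all _ _).add_pow']
  simp only [Algebra.TensorProduct.tmul_pow, one_pow, Algebra.TensorProduct.tmul_mul_tmul, one_mul,
    mul_one]

lemma tensorCoeff_addComul_X_pow (j l n : ℕ) :
    tensorCoeff j l (addComul R (Polynomial.X ^ n)) =
      if j + l = n then (n.choose j : R) else 0 := by
  have hterm (q : ℕ × ℕ) : tensorCoeff j l
      (n.choose q.1 • (Polynomial.X ^ q.1 : R[X]) ⊗ₜ[R] (Polynomial.X ^ q.2 : R[X])) =
      if (j, l) = q then (n.choose q.1 : R) else 0 := by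
    rw [map_nsmul, tensorCoeff_tmul, Polynomial.coeff_X_pow, Polynomial.coeff_X_pow]
    obtain ⟨a, b⟩ := q
    by_cases hj : j = a <;> by_cases hl : l = b <;> simp [hj, hl]
  simp only [addComul_X_pow, map_sum, hterm, Finset.sum_ite_eq,
    Finset.HasAntidiagonal.mem_antidiagonal]

lemma tensorCoeff_addComul (j l : ℕ) (f : R[X]) :
    tensorCoeff j l (addComul R f) = (j + l).choose j * f.coeff (j + l) := by
  induction f using Polynomial.induction_on' with
  | add f g hf hg => simp only [map_add, hf, hg, Polynomial.coeff_add, mul_add]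
  | monomial n a =>
    rw [← mul_one a, ← smul_eq_mul, ← Polynomial.smul_monomial, ← Polynomial.X_pow_eq_monomial,
      map_smul, map_smul, tensorCoeff_addComul_X_pow, Polynomial.coeff_smul, Polynomial.coeff_X_pow]
    split_ifs with h
    · rw [h, smul_eq_mul, smul_eq_mul, mul_one, mul_comm]
    · rw [smul_zero, mul_zero]

end TensorCoeff

section Truncation

variable {R : Type*} [CommRing R] {I : Ideal R[X]} {m : ℕ}

lemma exists_linearMap_mkₐ_eq_coeff (hI : I ≤ Ideal.span {Polynomial.X ^ m}) {j : ℕ} (hj : j < m) :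
    ∃ c : R[X] ⧸ I →ₗ[R] R, ∀ f, c (Ideal.Quotient.mkₐ R I f) = f.coeff j :=
  ⟨(I.restrictScalars R).liftQ (Polynomial.lcoeff R j) fun _ hf =>
    Polynomial.X_pow_dvd_iff.1 (Ideal.mem_span_singleton.1 (hI hf)) j hj, fun _ => rfl⟩

lemma tensorCoeff_eq_of_map_mkₐ_eq (hI : I ≤ Ideal.span {Polynomial.X ^ m}) {j l : ℕ} (hj : j < m)
    (hl : l < m) {u v : R[X] ⊗[R] R[X]}
    (h : Algebra.TensorProduct.map (Ideal.Quotient.mkₐ R I) (Ideal.Quotient.mkₐ R I) u =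
      Algebra.TensorProduct.map (Ideal.Quotient.mkₐ R I) (Ideal.Quotient.mkₐ R I) v) :
    tensorCoeff j l u = tensorCoeff j l v := by
  obtain ⟨c, hc⟩ := exists_linearMap_mkₐ_eq_coeff hI hj
  obtain ⟨c', hc'⟩ := exists_linearMap_mkₐ_eq_coeff hI hl
  have hfactor (z : R[X] ⊗[R] R[X]) : tensorCoeff j l z =
      LinearMap.mul' R R (TensorProduct.map c c' (Algebra.TensorProduct.map
        (Ideal.Quotient.mkₐ R I) (Ideal.Quotient.mkₐ R I) z)) := by
    induction z with
    | zero => simp only [map_zero]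
    | add x y hx hy => simp only [map_add, hx, hy]
    | tmul f g => simp only [tensorCoeff_tmul, Algebra.TensorProduct.map_tmul,
        TensorProduct.map_tmul, hc, hc', LinearMap.mul'_apply]
  rw [hfactor, hfactor, h]

end Truncation

section Weight

variable {R σ : Type*} [CommSemiring R]

variable (R) in
/-- The part of weight at most `h` of `A ⊗ A`, where `A = R[Y_i]` is graded by giving `Y_i` the
weight `w i`. -/
def tensorWeightLE (w : σ → ℕ) (h : ℕ) : Submodule R (MvPolynomial σ R ⊗[R] MvPolynomial σ R) :=
  Submodule.span R {z | ∃ d e : σ →₀ ℕ, Finsupp.weight w d + Finsupp.weight w e ≤ h ∧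
    MvPolynomial.monomial d 1 ⊗ₜ[R] MvPolynomial.monomial e 1 = z}

lemma mem_span_monomial_of_isWeightedHomogeneous {M : Type*} [AddCommMonoid M] {wt : σ → M} {m : M}
    {f : MvPolynomial σ R} (hf : MvPolynomial.IsWeightedHomogeneous wt f m) :
    f ∈ Submodule.span R ((fun d => MvPolynomial.monomial d (1 : R)) ''
      {d : σ →₀ ℕ | Finsupp.weight wt d = m}) := by
  rw [f.as_sum]
  refine Submodule.sum_mem _ fun d hd => ?_
  rw [← mul_one (f.coeff d), ← smul_eq_mul, ← MvPolynomial.smul_monomial]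
  exact Submodule.smul_mem _ _
    (Submodule.subset_span ⟨d, hf (MvPolynomial.mem_support_iff.1 hd), rfl⟩)

lemma map_weight_eq_weight {M : Type*} [AddCommMonoid M] {wt : σ → M} {ht : M →+ ℤ} {w : σ → ℕ}
    (hw : ∀ i, ht (wt i) = w i) (d : σ →₀ ℕ) :
    ht (Finsupp.weight wt d) = Finsupp.weight w d := by
  simp [Finsupp.weight_apply, Finsupp.sum, hw]

lemma iSup_range_map_weightedHomogeneousSubmodule_le {M : Type*} [AddCommMonoid M] {wt : σ → M}
    {ht : M →+ ℤ} {w : σ → ℕ} (hw : ∀ i, ht (wt i) = w i) {m : M} {h : ℕ} (hm : ht m ≤ h) :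
    ⨆ (q : M × M) (_ : q.1 + q.2 = m), LinearMap.range (TensorProduct.map
        (MvPolynomial.weightedHomogeneousSubmodule R wt q.1).subtype
        (MvPolynomial.weightedHomogeneousSubmodule R wt q.2).subtype) ≤
      tensorWeightLE R w h := by
  refine iSup₂_le fun q hq => ?_
  rintro _ ⟨x, rfl⟩
  induction x with
  | zero => simp only [map_zero, zero_mem]
  | add x y hx hy => simpa only [map_add] using add_mem hx hy
  | tmul f g =>
    have hfg := Submodule.apply_mem_map₂ (TensorProduct.mk R _ _)
      (mem_span_monomial_of_isWeightedHomogeneous f.2)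
      (mem_span_monomial_of_isWeightedHomogeneous g.2)
    rw [Submodule.map₂_span_span] at hfg
    refine Submodule.span_mono ?_ hfg
    rintro _ ⟨_, ⟨d, hd, rfl⟩, _, ⟨e, he, rfl⟩, rfl⟩
    refine ⟨d, e, Int.ofNat_le.1 ?_, rfl⟩
    calc ((Finsupp.weight w d + Finsupp.weight w e : ℕ) : ℤ)
        = ht (Finsupp.weight wt d + Finsupp.weight wt e) := by
          rw [map_add, map_weight_eq_weight hw, map_weight_eq_weight hw, Nat.cast_add]
      _ ≤ h := by rwa [hd, he, hq]

lemma exists_monomials_of_tensorCoeff_map_ne_zero {L : MvPolynomial σ R →ₐ[R] R[X]} {w : σ → ℕ}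
    {h j l : ℕ} {z : MvPolynomial σ R ⊗[R] MvPolynomial σ R} (hz : z ∈ tensorWeightLE R w h)
    (hne : tensorCoeff j l (Algebra.TensorProduct.map L L z) ≠ 0) :
    ∃ d e : σ →₀ ℕ, Finsupp.weight w d + Finsupp.weight w e ≤ h ∧
      j ∈ (L (MvPolynomial.monomial d 1)).support ∧
      l ∈ (L (MvPolynomial.monomial e 1)).support := by
  by_contra! hcon
  suffices tensorWeightLE R w h ≤
      LinearMap.ker (tensorCoeff j l ∘ₗ (Algebra.TensorProduct.map L L).toLinearMap) from
    hne (this hz)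
  refine Submodule.span_le.2 ?_
  rintro _ ⟨d, e, hde, rfl⟩
  have hde' := hcon d e hde
  simp only [Polynomial.mem_support_iff, not_not] at hde'
  by_cases hj : (L (MvPolynomial.monomial d 1)).coeff j = 0 <;> simp_all

lemma weight_pos_of_mem_support_map_monomial {L : MvPolynomial σ R →ₐ[R] R[X]} {w : σ → ℕ}
    (hw : ∀ i, 0 < w i) {n : ℕ} (hn : 0 < n) {d : σ →₀ ℕ}
    (hd : n ∈ (L (MvPolynomial.monomial d 1)).support) : 0 < Finsupp.weight w d := by
  obtain rfl | hd0 := eq_or_ne d 0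
  · simp [Polynomial.coeff_one, hn.ne'] at hd
  · obtain ⟨i, hi⟩ := Finsupp.ne_iff.1 hd0
    exact (hw i).trans_le (Finsupp.le_weight_of_ne_zero' w hi)

end Weight

section Lift

variable {R σ : Type*} [CommRing R] {p r : ℕ} {w : σ → ℕ}
  {comul : MvPolynomial σ R →ₐ[R] MvPolynomial σ R ⊗[R] MvPolynomial σ R}
  {L : MvPolynomial σ R →ₐ[R] R[X]}

lemma support_map_X_subset_nsmul_powersLT (hp : p.Prime) [CharP R p] (hw : ∀ i, 0 < w i)
    (hcomul : ∀ i, comul (MvPolynomial.X i) ∈ tensorWeightLE R w (w i))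
    (hdeg : ∀ i, L (MvPolynomial.X i) ∈ Polynomial.degreeLT R (p ^ r))
    (hL : ∀ i, ∀ j < p ^ r, ∀ l < p ^ r,
      tensorCoeff j l (Algebra.TensorProduct.map L L (comul (MvPolynomial.X i))) =
        tensorCoeff j l (addComul R (L (MvPolynomial.X i)))) (i : σ) :
    ↑(L (MvPolynomial.X i)).support ⊆ w i • powersLT p r := by
  induction hi : w i using Nat.strong_induction_on generalizing i with
  | _ h ih =>
  subst hi
  intro n hn
  have hnr : n < p ^ r := lt_of_mem_support_of_mem_degreeLT (hdeg i) hn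
  obtain rfl | hn0 := n.eq_zero_or_pos
  · exact Set.zero_mem_nsmul (zero_mem_powersLT p r)
  obtain ⟨v, rfl⟩ | ⟨j, l, hj, hl, rfl, hdvd⟩ := eq_pow_or_exists_not_dvd_choose hp hn0
  · exact Set.subset_nsmul (zero_mem_powersLT p r) (hw i).ne'
      (pow_mem_powersLT p ((Nat.pow_lt_pow_iff_right hp.one_lt).1 hnr))
  have hne : tensorCoeff j l (Algebra.TensorProduct.map L L (comul (MvPolynomial.X i))) ≠ 0 := by
    rw [hL i j (by omega) l (by omega), tensorCoeff_addComul]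
    exact ((CharP.isUnit_natCast_iff hp).2 hdvd).mul_right_eq_zero.not.2
      (Polynomial.mem_support_iff.1 hn)
  obtain ⟨d, e, hde, hd, he⟩ := exists_monomials_of_tensorCoeff_map_ne_zero (hcomul i) hne
  have hd0 := weight_pos_of_mem_support_map_monomial hw hj hd
  have he0 := weight_pos_of_mem_support_map_monomial hw hl he
  have hsupport (c : σ →₀ ℕ) (hc : Finsupp.weight w c < w i) :=
    support_map_monomial_subset_nsmul L w c fun i' hi' => ih (w i')
      ((Finsupp.le_weight_of_ne_zero' w (Finsupp.mem_support_iff.1 hi')).trans_lt hc) i' rfl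
  refine Set.nsmul_subset_nsmul_right (zero_mem_powersLT p r) hde ?_
  rw [add_nsmul]
  exact Set.add_mem_add (hsupport d (by omega) hd) (hsupport e (by omega) he)

lemma map_comp_comul_eq_addComul_comp (hp : p.Prime) [CharP R p] (hw : ∀ i, 0 < w i)
    (hwp : ∀ i, w i < p) (hcomul : ∀ i, comul (MvPolynomial.X i) ∈ tensorWeightLE R w (w i))
    (hdeg : ∀ i, L (MvPolynomial.X i) ∈ Polynomial.degreeLT R (p ^ r))
    (hL : ∀ i, ∀ j < p ^ r, ∀ l < p ^ r,
      tensorCoeff j l (Algebra.TensorProduct.map L L (comul (MvPolynomial.X i))) =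
        tensorCoeff j l (addComul R (L (MvPolynomial.X i)))) :
    (Algebra.TensorProduct.map L L).comp comul = (addComul R).comp L := by
  refine MvPolynomial.algHom_ext fun i => ext_tensorCoeff fun j l => ?_
  rw [AlgHom.comp_apply, AlgHom.comp_apply]
  by_cases hjl : j < p ^ r ∧ l < p ^ r
  · exact hL i j hjl.1 l hjl.2
  have hright : tensorCoeff j l (addComul R (L (MvPolynomial.X i))) = 0 := by
    rw [tensorCoeff_addComul]
    refine mul_eq_zero_of_right _ (Polynomial.notMem_support_iff.1 fun hmem => hjl ?_)
    have := lt_of_mem_support_of_mem_degreeLT (hdeg i) hmem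
    omega
  rw [hright]
  by_contra hne
  obtain ⟨d, e, hde, hd, he⟩ := exists_monomials_of_tensorCoeff_map_ne_zero (hcomul i) hne
  have hsupport (c : σ →₀ ℕ) := support_map_monomial_subset_nsmul L w c fun i' _ =>
    support_map_X_subset_nsmul_powersLT hp hw hcomul hdeg hL i'
  have hwi := hwp i
  exact hjl ⟨lt_pow_of_mem_nsmul_powersLT (by omega) (hsupport d hd),
    lt_pow_of_mem_nsmul_powersLT (by omega) (hsupport e he)⟩

theorem stmt_5_general (hp : p.Prime) [CharP R p] (hw : ∀ i, 0 < w i) (hwp : ∀ i, w i < p)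
    (hcomul : ∀ i, comul (MvPolynomial.X i) ∈ tensorWeightLE R w (w i))
    {I : Ideal R[X]} (hI : I ≤ Ideal.span {Polynomial.X ^ p ^ r})
    {ΔQ : R[X] ⧸ I →ₐ[R] (R[X] ⧸ I) ⊗[R] (R[X] ⧸ I)}
    (hΔQ : ΔQ.comp (Ideal.Quotient.mkₐ R I) =
      (Algebra.TensorProduct.map (Ideal.Quotient.mkₐ R I) (Ideal.Quotient.mkₐ R I)).comp
        (addComul R))
    {εQ : R[X] ⧸ I →ₐ[R] R} (hεQ : εQ.comp (Ideal.Quotient.mkₐ R I) = Polynomial.aeval 0)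
    {ψ : MvPolynomial σ R →ₐ[R] R[X] ⧸ I}
    (hψΔ : (Algebra.TensorProduct.map ψ ψ).comp comul = ΔQ.comp ψ)
    (hψε : εQ.comp ψ = MvPolynomial.aeval 0)
    (hL : ∀ i, L (MvPolynomial.X i) ∈ Polynomial.degreeLT R (p ^ r) ∧
      Ideal.Quotient.mkₐ R I (L (MvPolynomial.X i)) = ψ (MvPolynomial.X i)) :
    (Algebra.TensorProduct.map L L).comp comul = (addComul R).comp L ∧
      (Polynomial.aeval 0).comp L = (MvPolynomial.aeval 0 : MvPolynomial σ R →ₐ[R] R) := by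
  obtain rfl : (Ideal.Quotient.mkₐ R I).comp L = ψ := MvPolynomial.algHom_ext fun i => (hL i).2
  have hmod : (Algebra.TensorProduct.map (Ideal.Quotient.mkₐ R I) (Ideal.Quotient.mkₐ R I)).comp
        ((Algebra.TensorProduct.map L L).comp comul) =
      (Algebra.TensorProduct.map (Ideal.Quotient.mkₐ R I) (Ideal.Quotient.mkₐ R I)).comp
        ((addComul R).comp L) := by
    rw [← AlgHom.comp_assoc, ← Algebra.TensorProduct.map_comp, hψΔ, ← AlgHom.comp_assoc, hΔQ,
      AlgHom.comp_assoc]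
  constructor
  · exact map_comp_comul_eq_addComul_comp hp hw hwp hcomul (fun i => (hL i).1)
      fun i j hj l hl => tensorCoeff_eq_of_map_mkₐ_eq hI hj hl (AlgHom.congr_fun hmod _)
  · rw [← hεQ, AlgHom.comp_assoc, hψε]

end Lift

theorem stmt_5 [IsAlgClosed k] (p r : ℕ) (hp : p.Prime) [CharP k p] (hr : 1 ≤ r)
    [Fintype ι]
    (root : ι → Λ) (htJ : Λ →+ ℤ) (hroot : ∀ i, 1 ≤ htJ (root i))
    -- the nilpotence class of `U` (equal to `max ht_J(α)`) is less than `p`: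
    (hnil : ∀ i, htJ (root i) < (p : ℤ))
    (comul : MvPolynomial ι k →ₐ[k] MvPolynomial ι k ⊗[k] MvPolynomial ι k)
    (hcul : ∀ f, (TensorProduct.lid k (MvPolynomial ι k))
        ((TensorProduct.map (uCounit k ι).toLinearMap
          (LinearMap.id : MvPolynomial ι k →ₗ[k] MvPolynomial ι k)) (comul f)) = f)
    (hcur : ∀ f, (TensorProduct.rid k (MvPolynomial ι k))
        ((TensorProduct.map (LinearMap.id : MvPolynomial ι k →ₗ[k] MvPolynomial ι k)
          (uCounit k ι).toLinearMap) (comul f)) = f)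
    (hwt : ∀ (lam : Λ), ∀ x ∈ wtSub k ι Λ root lam,
        comul x ∈ ⨆ (pr : Λ × Λ) (_ : pr.1 + pr.2 = lam),
          LinearMap.range (TensorProduct.map (wtSub k ι Λ root pr.1).subtype
            (wtSub k ι Λ root pr.2).subtype))
    (ΔQ : (Polynomial k ⧸ gaI k (p ^ r)) →ₐ[k]
        (Polynomial k ⧸ gaI k (p ^ r)) ⊗[k] (Polynomial k ⧸ gaI k (p ^ r)))
    (hΔQ : ΔQ.comp (gaπ k (p ^ r)) =
        (Algebra.TensorProduct.map (gaπ k (p ^ r)) (gaπ k (p ^ r))).comp (gaComul k))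
    (εQ : (Polynomial k ⧸ gaI k (p ^ r)) →ₐ[k] k)
    (hεQ : εQ.comp (gaπ k (p ^ r)) = gaCounit k)
    (ψ : MvPolynomial ι k →ₐ[k] Polynomial k ⧸ gaI k (p ^ r))
    (hψΔ : (Algebra.TensorProduct.map ψ ψ).comp comul = ΔQ.comp ψ)
    (hψε : εQ.comp ψ = uCounit k ι)
    -- `L = φ*_Y`, the lift of `φ*` with respect to the generators `Y`:
    (L : MvPolynomial ι k →ₐ[k] Polynomial k)
    (hL : ∀ i : ι, L (MvPolynomial.X i) ∈ Polynomial.degreeLT k (p ^ r) ∧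
        gaπ k (p ^ r) (L (MvPolynomial.X i)) = ψ (MvPolynomial.X i)) :
    -- conclusion: `φ*_Y` is a homomorphism of Hopf algebras:
    (Algebra.TensorProduct.map L L).comp comul = (gaComul k).comp L ∧
    (gaCounit k).comp L = uCounit k ι := by
  have hht (i : ι) : (-htJ) (-root i) = (htJ (root i)).toNat := by
    simpa using (Int.toNat_of_nonneg (by linarith [hroot i])).symm
  exact stmt_5_general (w := fun i => (htJ (root i)).toNat) hp
    (fun i => by have := hroot i; omega) (fun i => by have := hroot i; have := hnil i; omega)
    (fun i => iSup_range_map_weightedHomogeneousSubmodule_le hht (hht i).le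
      (hwt _ _ (MvPolynomial.isWeightedHomogeneous_X k _ i))) le_rfl hΔQ hεQ hψΔ hψε hL

end Stmt5
end
end

section
/- Assume the nilpotence class of U is less than p, and let φ : 𝔾_{a(r)} → U be a homomorphism of affine group schemes with comorphism φ*. Then the lifted Hopf algebra homomorphism φ*_Y : k[U] → k[t] is independent both of the chosen total ordering of the positive roots in Φ⁺ \ Φ_J⁺ and of the choice of root homomorphisms u_α : 𝔾_a → G. -/
/-!
STATEMENT 6 (Proposition 2.7, second part): same setting as Statement 5.  A different
choice of total ordering of the roots in `Φ⁺ \ Φ_J⁺` and/or of root homomorphisms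
`u_α : 𝔾_a → G` amounts to a different choice `Y' = {Y'_{α_{τ(1)}},…,Y'_{α_{τ(n)}}}` of
free algebra generators of `k[U]` (for a permutation `τ` of the roots), where `Y'_α`
again has `T`-weight `-α`.  The claim is that the lifted Hopf algebra homomorphism is
unchanged: the lift of `φ*` computed with respect to the generators `Y'` equals the lift
`φ*_Y` computed with respect to `Y`.
-/




noncomputable section

open Polynomial MvPolynomial TensorProduct
open scoped TensorProduct

namespace Stmt6

variable (k : Type) [Field k]

/-- The comultiplication of `k[t]`: `Δ t = t ⊗ 1 + 1 ⊗ t`. -/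
def gaComul : Polynomial k →ₐ[k] Polynomial k ⊗[k] Polynomial k :=
  Polynomial.aeval (Polynomial.X ⊗ₜ[k] (1 : Polynomial k) + (1 : Polynomial k) ⊗ₜ[k] Polynomial.X)

/-- The counit of `k[t]`: evaluation at `0`. -/
def gaCounit : Polynomial k →ₐ[k] k := Polynomial.aeval 0

/-- The Hopf ideal `(t^m)` of `k[t]`. -/
def gaI (m : ℕ) : Ideal (Polynomial k) := Ideal.span {Polynomial.X ^ m}

/-- The canonical projection `π : k[t] → k[t]/(t^m)`. -/
def gaπ (m : ℕ) : Polynomial k →ₐ[k] Polynomial k ⧸ gaI k m :=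
  Ideal.Quotient.mkₐ k (gaI k m)

variable (ι Λ : Type) [AddCommGroup Λ]

/-- The `T`-weight space `k[U]_λ`:  `k[U] = k[Y_{α₁},…,Y_{α_n}]` with `Y_{α_i}` of weight
`-α_i`, so `k[U]_λ` is spanned by the monomials of total weight `λ` for the weight
function `i ↦ -root i`. -/
def wtSub (root : ι → Λ) (lam : Λ) : Submodule k (MvPolynomial ι k) :=
  MvPolynomial.weightedHomogeneousSubmodule k (fun i => - root i) lam

/-- The counit (augmentation) of `k[U]`: evaluation at the identity of `U`, i.e. at the
point all of whose root coordinates are `0`. -/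
def uCounit : MvPolynomial ι k →ₐ[k] k := MvPolynomial.aeval (fun _ : ι => (0 : k))

/-- The subspace `k[U]_{<p} = Σ_{|ht_J(λ)| < p} k[U]_λ`. -/
def uLt (root : ι → Λ) (htJ : Λ →+ ℤ) (p : ℕ) : Submodule k (MvPolynomial ι k) :=
  ⨆ (lam : Λ) (_ : (htJ lam).natAbs < p), wtSub k ι Λ root lam

/-!
Write `q = p^(r-1)`. If `f ∈ k[U]_λ`, the representative of `φ*(f)` of degree less than `p^r` has
degree at most `|ht_J(λ)| q`. Indeed, comparing the coefficients of `t^q ⊗ t^(j-q)` in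
`Δ(φ*(f)) = (φ* ⊗ φ*)(Δ(f))` gives `(j choose q)` times the coefficient of `t^j` in `φ*(f)` on the
left, and the binomial coefficient is nonzero in `k` for `q ≤ j < p^r` by Lucas's theorem. The right
hand side involves `k[U]_μ ⊗ k[U]_ν` with `μ + ν = λ`: either `μ` has height zero, `k[U]_μ` consists
of constants and there is no `t^q`, or `|ht_J(ν)| < |ht_J(λ)|` and induction applies.

In particular `φ*_Y` sends `Y_α` to a polynomial of degree at most `ht_J(α) q`, so by additivity of
degrees and heights it sends all of `k[U]_{<p}` to polynomials of degree less than `p^r`. Hence on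
any other generators contained in `k[U]_{<p}` it already takes the values prescribed for their own
lift.
-/

section ChooseModPrime

theorem choose_prime_pow_modEq_div (p s n : ℕ) [Fact p.Prime] :
    n.choose (p ^ s) ≡ n / p ^ s [ZMOD p] := by
  have hp : 0 < p := (Fact.out : p.Prime).pos
  have lower_digit (i : ℕ) (hi : i ∈ Finset.range s) : p ^ s / p ^ i % p = 0 := by
    have hi : i < s := Finset.mem_range.1 hi
    rw [Nat.pow_div hi.le hp]
    exact Nat.mod_eq_zero_of_dvd (dvd_pow_self p (Nat.sub_ne_zero_of_lt hi))
  have lucas := Choose.choose_modEq_choose_mul_prod_range_choose (n := n) (k := p ^ s) (p := p) s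
  rw [Finset.prod_eq_one fun i hi => by rw [lower_digit i hi, Nat.choose_zero_right],
    Nat.div_self (pow_pos hp s), Nat.choose_one_right] at lucas
  simpa using lucas

theorem cast_choose_prime_pow_ne_zero {R : Type*} [AddMonoidWithOne R] {p : ℕ} [CharP R p]
    (hp : p.Prime) {s n : ℕ} (hle : p ^ s ≤ n) (hlt : n < p ^ (s + 1)) :
    (n.choose (p ^ s) : R) ≠ 0 := by
  have : Fact p.Prime := ⟨hp⟩
  have hpos : 0 < p ^ s := pow_pos hp.pos s
  have digit_pos : 0 < n / p ^ s := Nat.div_pos hle hpos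
  have digit_lt : n / p ^ s < p := Nat.div_lt_of_lt_mul (by rwa [← pow_succ])
  rw [Ne, CharP.cast_eq_zero_iff R p, ← Int.natCast_dvd_natCast,
    (choose_prime_pow_modEq_div p s n).dvd_iff]
  exact_mod_cast Nat.not_dvd_of_pos_of_lt digit_pos digit_lt

end ChooseModPrime

section DualDistrib

variable {R M N M' N' : Type*} [CommSemiring R] [AddCommMonoid M] [AddCommMonoid N]
  [AddCommMonoid M'] [AddCommMonoid N'] [Module R M] [Module R N] [Module R M'] [Module R N']

theorem dualDistrib_tmul_map (a : Module.Dual R M') (b : Module.Dual R N')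
    (f : M →ₗ[R] M') (g : N →ₗ[R] N') (z : M ⊗[R] N) :
    dualDistrib R M' N' (a ⊗ₜ b) (TensorProduct.map f g z) =
      dualDistrib R M N ((a ∘ₗ f) ⊗ₜ (b ∘ₗ g)) z := by
  have hcomp : dualDistrib R M' N' (a ⊗ₜ b) ∘ₗ TensorProduct.map f g =
      dualDistrib R M N ((a ∘ₗ f) ⊗ₜ (b ∘ₗ g)) :=
    TensorProduct.ext' fun x y => by simp
  exact LinearMap.congr_fun hcomp z

theorem dualDistrib_tmul_eq_zero_of_mem_iSup {σ : Type*} {S : σ → Submodule R M}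
    {T : σ → Submodule R N} {P : σ → Prop} {a : Module.Dual R M} {b : Module.Dual R N}
    (hab : ∀ i, P i → (∀ x ∈ S i, a x = 0) ∨ ∀ y ∈ T i, b y = 0) {z : M ⊗[R] N}
    (hz : z ∈ ⨆ (i) (_ : P i),
      LinearMap.range (TensorProduct.map (S i).subtype (T i).subtype)) :
    dualDistrib R M N (a ⊗ₜ b) z = 0 := by
  suffices hle : ⨆ (i) (_ : P i), LinearMap.range (TensorProduct.map (S i).subtype (T i).subtype) ≤
      LinearMap.ker (dualDistrib R M N (a ⊗ₜ b)) from hle hz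
  refine iSup₂_le fun i hi => LinearMap.range_le_ker_iff.2 (TensorProduct.ext' fun x y => ?_)
  have hxy : a x * b y = 0 := (hab i hi).elim
    (fun ha => by rw [ha x x.2, zero_mul]) (fun hb => by rw [hb y y.2, mul_zero])
  simpa using hxy

end DualDistrib

section WeightedDegree

variable {R σ : Type*} [CommSemiring R]

theorem natDegree_algHom_le_weightedTotalDegree_mul (L : MvPolynomial σ R →ₐ[R] R[X])
    (w : σ → ℕ) (N : ℕ) (hL : ∀ i, (L (MvPolynomial.X i)).natDegree ≤ w i * N)
    (f : MvPolynomial σ R) :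
    (L f).natDegree ≤ f.weightedTotalDegree w * N := by
  rw [f.as_sum, map_sum, ← f.as_sum]
  refine natDegree_sum_le_of_forall_le _ _ fun d hd => ?_
  rw [MvPolynomial.monomial_eq, map_mul, ← MvPolynomial.algebraMap_eq, AlgHom.commutes,
    Polynomial.algebraMap_apply, Finsupp.prod, map_prod]
  calc _ ≤ (∏ i ∈ d.support, L (MvPolynomial.X i ^ d i)).natDegree := natDegree_C_mul_le _ _
    _ ≤ ∑ i ∈ d.support, (L (MvPolynomial.X i ^ d i)).natDegree := natDegree_prod_le _ _
    _ ≤ ∑ i ∈ d.support, d i * (w i * N) := Finset.sum_le_sum fun i _ => by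
        rw [map_pow]
        exact natDegree_pow_le_of_le _ (hL i)
    _ = Finsupp.weight w d * N := by
        simp only [Finsupp.weight_apply, Finsupp.sum, Finset.sum_mul, smul_eq_mul, mul_assoc]
    _ ≤ f.weightedTotalDegree w * N :=
        Nat.mul_le_mul_right N (le_weightedTotalDegree w hd)

theorem exists_eq_C_of_weightedTotalDegree_eq_zero {w : σ → ℕ} (hw : ∀ i, w i ≠ 0)
    {f : MvPolynomial σ R} (hf : f.weightedTotalDegree w = 0) :
    ∃ c, f = MvPolynomial.C c := by
  have hdeg : f.totalDegree = 0 := (MvPolynomial.totalDegree_eq_zero_iff _ f).2 <|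
    (weightedTotalDegree_eq_zero_iff (nonTorsionWeight_of hw) f).1 hf
  exact ⟨_, totalDegree_eq_zero_iff_eq_C.1 hdeg⟩

end WeightedDegree

section TruncatedPolynomials

variable {k} {m : ℕ}

theorem gaComul_X_pow (n : ℕ) :
    gaComul k (Polynomial.X ^ n) = ∑ ij ∈ Finset.HasAntidiagonal.antidiagonal n,
      n.choose ij.1 • ((Polynomial.X ^ ij.1 : k[X]) ⊗ₜ[k] (Polynomial.X ^ ij.2 : k[X])) := by
  have hcomm : Commute ((Polynomial.X : k[X]) ⊗ₜ[k] (1 : k[X])) ((1 : k[X]) ⊗ₜ[k] Polynomial.X) :=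
    Commute.all _ _
  rw [map_pow, gaComul, Polynomial.aeval_X, hcomm.add_pow']
  simp only [Algebra.TensorProduct.tmul_pow, Algebra.TensorProduct.tmul_mul_tmul, one_pow, one_mul,
    mul_one]

theorem dualDistrib_lcoeff_gaComul (a b : ℕ) (g : k[X]) :
    dualDistrib k k[X] k[X] (lcoeff k a ⊗ₜ lcoeff k b) (gaComul k g) =
      ((a + b).choose a : k) * g.coeff (a + b) := by
  induction g using Polynomial.induction_on' with
  | add f g hf hg => rw [map_add, map_add, hf, hg, Polynomial.coeff_add, mul_add]
  | monomial n c =>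
    rw [← Polynomial.C_mul_X_pow_eq_monomial, ← Polynomial.smul_eq_C_mul, map_smul, map_smul,
      gaComul_X_pow, map_sum]
    have single_term (ij : ℕ × ℕ) (hne : ij ≠ (a, b)) :
        (if a = ij.1 then (1 : k) else 0) * (if b = ij.2 then 1 else 0) = 0 := by
      grind
    simp only [map_nsmul, dualDistrib_apply, Polynomial.lcoeff_apply, Polynomial.coeff_X_pow,
      Polynomial.coeff_smul]
    rw [Finset.sum_eq_ite (a, b) fun ij _ hne => by rw [single_term ij hne, smul_zero]]
    by_cases hn : a + b = n <;> simp [hn, mul_comm]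

variable (k m) in
/-- The `k`-linear section of `π : k[t] → k[t]/(t^m)` that picks the unique representative of
degree less than `m`. It is division with remainder by `t^m`, through the definitional equality of
`k[t]/(t^m)` with `AdjoinRoot (t^m)`. -/
def gaRep : (k[X] ⧸ gaI k m) →ₗ[k] k[X] :=
  AdjoinRoot.modByMonicHom (monic_X_pow m)

theorem gaRep_gaπ (g : k[X]) : gaRep k m (gaπ k m g) = g %ₘ Polynomial.X ^ m :=
  rfl

theorem gaπ_gaRep (x : k[X] ⧸ gaI k m) : gaπ k m (gaRep k m x) = x :=
  AdjoinRoot.mk_leftInverse (monic_X_pow m) x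

theorem gaRep_mem_degreeLT (x : k[X] ⧸ gaI k m) : gaRep k m x ∈ degreeLT k m := by
  obtain ⟨g, rfl⟩ := Ideal.Quotient.mkₐ_surjective k (gaI k m) x
  exact mem_degreeLT.2 ((degree_modByMonic_lt g (monic_X_pow m)).trans_eq (degree_X_pow m))

theorem gaRep_gaπ_of_mem_degreeLT {g : k[X]} (hg : g ∈ degreeLT k m) :
    gaRep k m (gaπ k m g) = g :=
  (modByMonic_eq_self_iff (monic_X_pow m)).2 ((mem_degreeLT.1 hg).trans_eq (degree_X_pow m).symm)

theorem coeff_gaRep_gaπ {j : ℕ} (hj : j < m) (g : k[X]) :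
    (gaRep k m (gaπ k m g)).coeff j = g.coeff j := by
  have hdvd : Polynomial.X ^ m ∣ gaRep k m (gaπ k m g) - g :=
    Ideal.mem_span_singleton.1 (Ideal.Quotient.eq.1 (gaπ_gaRep (gaπ k m g)))
  simpa only [Polynomial.coeff_sub, sub_eq_zero] using Polynomial.X_pow_dvd_iff.1 hdvd j hj

theorem dualDistrib_lcoeff_gaRep
    {ΔQ : (k[X] ⧸ gaI k m) →ₐ[k] (k[X] ⧸ gaI k m) ⊗[k] (k[X] ⧸ gaI k m)}
    (hΔQ : ΔQ.comp (gaπ k m) = (Algebra.TensorProduct.map (gaπ k m) (gaπ k m)).comp (gaComul k))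
    {a b : ℕ} (hab : a + b < m) (x : k[X] ⧸ gaI k m) :
    dualDistrib k _ _ ((lcoeff k a ∘ₗ gaRep k m) ⊗ₜ (lcoeff k b ∘ₗ gaRep k m)) (ΔQ x) =
      ((a + b).choose a : k) * (gaRep k m x).coeff (a + b) := by
  have lcoeff_comp {j : ℕ} (hj : j < m) :
      (lcoeff k j ∘ₗ gaRep k m) ∘ₗ (gaπ k m).toLinearMap = lcoeff k j :=
    LinearMap.ext (coeff_gaRep_gaπ hj)
  have comul_gaπ : ΔQ x = TensorProduct.map (gaπ k m).toLinearMap (gaπ k m).toLinearMap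
      (gaComul k (gaRep k m x)) := by
    conv_lhs => rw [← gaπ_gaRep x]
    exact AlgHom.congr_fun hΔQ _
  rw [comul_gaπ, dualDistrib_tmul_map, lcoeff_comp (by omega), lcoeff_comp (by omega),
    dualDistrib_lcoeff_gaComul]

end TruncatedPolynomials

section WeightSpaces

variable {k ι Λ} {root : ι → Λ} {htJ : Λ →+ ℤ}

variable (root htJ) in
/-- The heights `ht_J(α_i)` as a grading of `k[U]` by natural numbers, with the sign opposite to
that of the weights `-α_i` of the generators. -/
def natHeight (i : ι) : ℕ := (htJ (root i)).toNat

variable (root) in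
/-- A comultiplication of `k[U]` is a map of `T`-representations, with `T` acting diagonally on
`k[U] ⊗ k[U]`, when it sends each weight space `k[U]_λ` into `⨁_{μ + ν = λ} k[U]_μ ⊗ k[U]_ν`. -/
def PreservesWeights
    (comul : MvPolynomial ι k →ₐ[k] MvPolynomial ι k ⊗[k] MvPolynomial ι k) : Prop :=
  ∀ lam, ∀ x ∈ wtSub k ι Λ root lam,
    comul x ∈ ⨆ (pr : Λ × Λ) (_ : pr.1 + pr.2 = lam),
      LinearMap.range (TensorProduct.map (wtSub k ι Λ root pr.1).subtype
        (wtSub k ι Λ root pr.2).subtype)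

theorem weight_natHeight (hroot : ∀ i, 0 ≤ htJ (root i)) (d : ι →₀ ℕ) :
    (Finsupp.weight (natHeight root htJ) d : ℤ) =
      -htJ (Finsupp.weight (fun i => -root i) d) := by
  simp [Finsupp.weight_apply, Finsupp.sum, natHeight, hroot]

theorem weightedTotalDegree_natHeight_le (hroot : ∀ i, 0 ≤ htJ (root i)) {lam : Λ}
    {f : MvPolynomial ι k} (hf : f ∈ wtSub k ι Λ root lam) :
    f.weightedTotalDegree (natHeight root htJ) ≤ (-htJ lam).toNat := by
  refine Finset.sup_le fun d hd => ?_
  have hd : Finsupp.weight (fun i => -root i) d = lam := hf (MvPolynomial.mem_support_iff.1 hd)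
  have := weight_natHeight hroot d
  rw [hd] at this
  omega

theorem exists_eq_C_of_mem_wtSub (hroot : ∀ i, 0 < htJ (root i)) {lam : Λ}
    (hlam : 0 ≤ htJ lam) {f : MvPolynomial ι k} (hf : f ∈ wtSub k ι Λ root lam) :
    ∃ c, f = MvPolynomial.C c := by
  have natHeight_ne_zero (i : ι) : natHeight root htJ i ≠ 0 := by
    have := hroot i
    rw [natHeight]
    omega
  have hdeg := weightedTotalDegree_natHeight_le (fun i => (hroot i).le) hf
  exact exists_eq_C_of_weightedTotalDegree_eq_zero natHeight_ne_zero (by omega)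

theorem algHom_mem_degreeLT_of_mem_uLt (hroot : ∀ i, 0 ≤ htJ (root i)) {p N : ℕ} (hN : 0 < N)
    {L : MvPolynomial ι k →ₐ[k] k[X]}
    (hL : ∀ i, (L (MvPolynomial.X i)).natDegree ≤ natHeight root htJ i * N)
    {f : MvPolynomial ι k} (hf : f ∈ uLt k ι Λ root htJ p) :
    L f ∈ degreeLT k (p * N) := by
  suffices hle : uLt k ι Λ root htJ p ≤ (degreeLT k (p * N)).comap L.toLinearMap from hle hf
  refine iSup₂_le fun lam hlam f hf => mem_degreeLT.2 <|
    degree_le_natDegree.trans_lt (Nat.cast_lt.2 ?_)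
  calc (L f).natDegree ≤ f.weightedTotalDegree (natHeight root htJ) * N :=
        natDegree_algHom_le_weightedTotalDegree_mul L _ N hL f
    _ ≤ (-htJ lam).toNat * N :=
        Nat.mul_le_mul_right N (weightedTotalDegree_natHeight_le hroot hf)
    _ < p * N := Nat.mul_lt_mul_of_pos_right (by omega) hN

end WeightSpaces

section DegreeBound

variable {k ι Λ} {p m s : ℕ} {root : ι → Λ} {htJ : Λ →+ ℤ}
  {comul : MvPolynomial ι k →ₐ[k] MvPolynomial ι k ⊗[k] MvPolynomial ι k}
  {ΔQ : (k[X] ⧸ gaI k m) →ₐ[k] (k[X] ⧸ gaI k m) ⊗[k] (k[X] ⧸ gaI k m)}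
  {ψ : MvPolynomial ι k →ₐ[k] k[X] ⧸ gaI k m}

theorem natDegree_gaRep_eq_zero (hroot : ∀ i, 0 < htJ (root i))
    (ψ : MvPolynomial ι k →ₐ[k] k[X] ⧸ gaI k m) {lam : Λ} (hlam : 0 ≤ htJ lam)
    {f : MvPolynomial ι k} (hf : f ∈ wtSub k ι Λ root lam) :
    (gaRep k m (ψ f)).natDegree = 0 := by
  obtain ⟨c, rfl⟩ := exists_eq_C_of_mem_wtSub hroot hlam hf
  have ψ_C : ψ (MvPolynomial.C c) = gaπ k m (Polynomial.C c) :=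
    (ψ.commutes c).trans ((gaπ k m).commutes c).symm
  rw [ψ_C, gaRep_gaπ]
  exact Nat.le_zero.1 ((natDegree_modByMonic_le_left ..).trans_eq (Polynomial.natDegree_C c))

theorem choose_mul_coeff_gaRep_eq_zero
    (hwt : PreservesWeights root comul)
    (hΔQ : ΔQ.comp (gaπ k m) = (Algebra.TensorProduct.map (gaπ k m) (gaπ k m)).comp (gaComul k))
    (hψΔ : (Algebra.TensorProduct.map ψ ψ).comp comul = ΔQ.comp ψ)
    {a b : ℕ} (hab : a + b < m) {lam : Λ}
    (hvanish : ∀ pr : Λ × Λ, pr.1 + pr.2 = lam →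
      (∀ x ∈ wtSub k ι Λ root pr.1, (gaRep k m (ψ x)).coeff a = 0) ∨
        ∀ y ∈ wtSub k ι Λ root pr.2, (gaRep k m (ψ y)).coeff b = 0)
    {f : MvPolynomial ι k} (hf : f ∈ wtSub k ι Λ root lam) :
    ((a + b).choose a : k) * (gaRep k m (ψ f)).coeff (a + b) = 0 := by
  have comul_ψ : ΔQ (ψ f) = TensorProduct.map ψ.toLinearMap ψ.toLinearMap (comul f) :=
    (AlgHom.congr_fun hψΔ f).symm
  rw [← dualDistrib_lcoeff_gaRep hΔQ hab, comul_ψ, dualDistrib_tmul_map]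
  exact dualDistrib_tmul_eq_zero_of_mem_iSup hvanish (hwt lam f hf)

theorem natDegree_gaRep_le_of_mem_wtSub [CharP k p] (hp : p.Prime)
    (hm : m ≤ p ^ (s + 1)) (hroot : ∀ i, 0 < htJ (root i))
    (hwt : PreservesWeights root comul)
    (hΔQ : ΔQ.comp (gaπ k m) = (Algebra.TensorProduct.map (gaπ k m) (gaπ k m)).comp (gaComul k))
    (hψΔ : (Algebra.TensorProduct.map ψ ψ).comp comul = ΔQ.comp ψ)
    {lam : Λ} {f : MvPolynomial ι k} (hf : f ∈ wtSub k ι Λ root lam) :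
    (gaRep k m (ψ f)).natDegree ≤ (-htJ lam).toNat * p ^ s := by
  have hpos : 0 < p ^ s := pow_pos hp.pos s
  suffices bound : ∀ h : ℕ, ∀ lam, -htJ lam ≤ h → ∀ f ∈ wtSub k ι Λ root lam,
      (gaRep k m (ψ f)).natDegree ≤ h * p ^ s from
    bound _ lam (Int.self_le_toNat _) f hf
  intro h
  induction h with
  | zero =>
    intro lam hlam f hf
    rw [natDegree_gaRep_eq_zero hroot ψ (by simpa using hlam) hf]
    exact Nat.zero_le _
  | succ h ih =>
    intro lam hlam f hf
    refine natDegree_le_iff_coeff_eq_zero.2 fun j hj => ?_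
    rw [add_mul, one_mul] at hj
    obtain ⟨b, rfl⟩ : ∃ b, j = p ^ s + b := Nat.exists_eq_add_of_le (by omega)
    rcases lt_or_ge (p ^ s + b) m with hlt | hge
    · refine (mul_eq_zero.1 (choose_mul_coeff_gaRep_eq_zero hwt hΔQ hψΔ hlt ?_ hf)).resolve_left
        (cast_choose_prime_pow_ne_zero hp (Nat.le_add_right _ _) (hlt.trans_le hm))
      intro pr hpr
      have hsum : htJ pr.1 + htJ pr.2 = htJ lam := by rw [← map_add, hpr]
      rcases le_or_gt 0 (htJ pr.1) with hnonneg | hneg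
      · exact .inl fun x hx => coeff_eq_zero_of_natDegree_lt <| by
          rwa [natDegree_gaRep_eq_zero hroot ψ hnonneg hx]
      · exact .inr fun y hy => coeff_eq_zero_of_natDegree_lt <|
          (ih pr.2 (by push_cast at hlam; omega) y hy).trans_lt (by omega)
    · exact coeff_eq_zero_of_degree_lt <|
        (mem_degreeLT.1 (gaRep_mem_degreeLT _)).trans_le (by exact_mod_cast hge)

end DegreeBound

theorem stmt_6_general (p r : ℕ) (hp : p.Prime) [CharP k p] (hr : 1 ≤ r)
    (root : ι → Λ) (htJ : Λ →+ ℤ) (hroot : ∀ i, 1 ≤ htJ (root i))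
    (comul : MvPolynomial ι k →ₐ[k] MvPolynomial ι k ⊗[k] MvPolynomial ι k)
    (hwt : PreservesWeights root comul)
    (ΔQ : (k[X] ⧸ gaI k (p ^ r)) →ₐ[k] (k[X] ⧸ gaI k (p ^ r)) ⊗[k] (k[X] ⧸ gaI k (p ^ r)))
    (hΔQ : ΔQ.comp (gaπ k (p ^ r)) =
      (Algebra.TensorProduct.map (gaπ k (p ^ r)) (gaπ k (p ^ r))).comp (gaComul k))
    (ψ : MvPolynomial ι k →ₐ[k] k[X] ⧸ gaI k (p ^ r))
    (hψΔ : (Algebra.TensorProduct.map ψ ψ).comp comul = ΔQ.comp ψ)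
    (L : MvPolynomial ι k →ₐ[k] k[X])
    (hL : ∀ i, L (MvPolynomial.X i) ∈ degreeLT k (p ^ r) ∧
      gaπ k (p ^ r) (L (MvPolynomial.X i)) = ψ (MvPolynomial.X i))
    {κ : Type*} (Y' : κ → MvPolynomial ι k)
    (hY'lt : ∀ i, Y' i ∈ uLt k ι Λ root htJ p)
    (hY'gen : Algebra.adjoin k (Set.range Y') = ⊤)
    (L' : MvPolynomial ι k →ₐ[k] k[X])
    (hL' : ∀ i, L' (Y' i) ∈ degreeLT k (p ^ r) ∧ gaπ k (p ^ r) (L' (Y' i)) = ψ (Y' i)) :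
    L' = L := by
  obtain ⟨s, rfl⟩ := Nat.exists_eq_add_of_le' hr
  have natDegree_L_X (i : ι) : (L (MvPolynomial.X i)).natDegree ≤ natHeight root htJ i * p ^ s := by
    have hX : MvPolynomial.X i ∈ wtSub k ι Λ root (-root i) := isWeightedHomogeneous_X k _ i
    rw [← gaRep_gaπ_of_mem_degreeLT (hL i).1, (hL i).2]
    simpa [natHeight] using natDegree_gaRep_le_of_mem_wtSub hp le_rfl hroot hwt hΔQ hψΔ hX
  have L_Y'_mem (i : κ) : L (Y' i) ∈ degreeLT k (p ^ (s + 1)) := by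
    rw [pow_succ']
    exact algHom_mem_degreeLT_of_mem_uLt (fun i => zero_le_one.trans (hroot i)) (pow_pos hp.pos s)
      natDegree_L_X (hY'lt i)
  have gaπ_L : (gaπ k (p ^ (s + 1))).comp L = ψ := MvPolynomial.algHom_ext fun i => (hL i).2
  refine AlgHom.ext_of_adjoin_eq_top hY'gen (Set.forall_mem_range.2 fun i => ?_)
  rw [← gaRep_gaπ_of_mem_degreeLT (hL' i).1, (hL' i).2, ← gaπ_L, AlgHom.comp_apply,
    gaRep_gaπ_of_mem_degreeLT (L_Y'_mem i)]

theorem stmt_6 [IsAlgClosed k] (p r : ℕ) (hp : p.Prime) [CharP k p] (hr : 1 ≤ r)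
    [Fintype ι]
    (root : ι → Λ) (htJ : Λ →+ ℤ) (hroot : ∀ i, 1 ≤ htJ (root i))
    -- the nilpotence class of `U` (equal to `max ht_J(α)`) is less than `p`:
    (hnil : ∀ i, htJ (root i) < (p : ℤ))
    (comul : MvPolynomial ι k →ₐ[k] MvPolynomial ι k ⊗[k] MvPolynomial ι k)
    (hcul : ∀ f, (TensorProduct.lid k (MvPolynomial ι k))
        ((TensorProduct.map (uCounit k ι).toLinearMap
          (LinearMap.id : MvPolynomial ι k →ₗ[k] MvPolynomial ι k)) (comul f)) = f)
    (hcur : ∀ f, (TensorProduct.rid k (MvPolynomial ι k))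
        ((TensorProduct.map (LinearMap.id : MvPolynomial ι k →ₗ[k] MvPolynomial ι k)
          (uCounit k ι).toLinearMap) (comul f)) = f)
    (hwt : ∀ (lam : Λ), ∀ x ∈ wtSub k ι Λ root lam,
        comul x ∈ ⨆ (pr : Λ × Λ) (_ : pr.1 + pr.2 = lam),
          LinearMap.range (TensorProduct.map (wtSub k ι Λ root pr.1).subtype
            (wtSub k ι Λ root pr.2).subtype))
    (ΔQ : (Polynomial k ⧸ gaI k (p ^ r)) →ₐ[k]
        (Polynomial k ⧸ gaI k (p ^ r)) ⊗[k] (Polynomial k ⧸ gaI k (p ^ r)))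
    (hΔQ : ΔQ.comp (gaπ k (p ^ r)) =
        (Algebra.TensorProduct.map (gaπ k (p ^ r)) (gaπ k (p ^ r))).comp (gaComul k))
    (εQ : (Polynomial k ⧸ gaI k (p ^ r)) →ₐ[k] k)
    (hεQ : εQ.comp (gaπ k (p ^ r)) = gaCounit k)
    (ψ : MvPolynomial ι k →ₐ[k] Polynomial k ⧸ gaI k (p ^ r))
    (hψΔ : (Algebra.TensorProduct.map ψ ψ).comp comul = ΔQ.comp ψ)
    (hψε : εQ.comp ψ = uCounit k ι)
    -- `L = φ*_Y`, the lift of `φ*` with respect to the generators `Y`: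
    (L : MvPolynomial ι k →ₐ[k] Polynomial k)
    (hL : ∀ i : ι, L (MvPolynomial.X i) ∈ Polynomial.degreeLT k (p ^ r) ∧
        gaπ k (p ^ r) (L (MvPolynomial.X i)) = ψ (MvPolynomial.X i))
    -- a new choice of total order (the permutation `τ`) and of root homomorphisms,
    -- giving new free algebra generators `Y'` with `Y'_α` of weight `-α`:
    (τ : Equiv.Perm ι) (Y' : ι → MvPolynomial ι k)
    (hY'wt : ∀ i, Y' i ∈ wtSub k ι Λ root (- root (τ i)))
    (hY'free : Function.Bijective
        ⇑(MvPolynomial.aeval Y' : MvPolynomial ι k →ₐ[k] MvPolynomial ι k))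
    -- `L' = φ*_{Y'}`, the lift of `φ*` with respect to the generators `Y'`:
    (L' : MvPolynomial ι k →ₐ[k] Polynomial k)
    (hL' : ∀ i : ι, L' (Y' i) ∈ Polynomial.degreeLT k (p ^ r) ∧
        gaπ k (p ^ r) (L' (Y' i)) = ψ (Y' i)) :
    -- conclusion: the lift is independent of these choices
    L' = L := by
  have hY'lt (i : ι) : Y' i ∈ uLt k ι Λ root htJ p := by
    have hlt : (htJ (-root (τ i))).natAbs < p := by
      have := hroot (τ i)
      have := hnil (τ i)
      rw [map_neg]
      omega
    exact Submodule.mem_iSup_of_mem _ (Submodule.mem_iSup_of_mem hlt (hY'wt i))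
  have hY'gen : Algebra.adjoin k (Set.range Y') = ⊤ := by
    rw [Algebra.adjoin_range_eq_range_aeval]
    exact (AlgHom.range_eq_top _).2 hY'free.surjective
  exact stmt_6_general k ι Λ p r hp hr root htJ hroot comul hwt ΔQ hΔQ ψ hψΔ L hL Y' hY'lt hY'gen
    L' hL'

end Stmt6
end
end

section
/- Assume the nilpotence class of U is less than p. Then exp^r_U is compatible with the conjugation action of P: for every x ∈ P(k) and every φ ∈ Hom_{gs/k}(𝔾_{a(r)}, U), one has exp^r_U(x · φ) = x · exp^r_U(φ), where x · φ denotes the composition of φ with conjugation by x. -/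
/-!
STATEMENT 10 (Theorem 2.9(3)): setting as in Statements 1, 2 and 9, with the nilpotence
class of `U` less than `p`.  For `x ∈ P(k)` and `φ ∈ Hom_{gs/k}(𝔾_{a(r)}, U)`, the
conjugate `x ⬝ φ` has comorphism `φ* ∘ x*`, where `x* = σ x` is the comorphism of
conjugation by `x` on `U`.  The claim `exp^r_U(x ⬝ φ) = x ⬝ exp^r_U(φ)` says on
comorphisms: the lift of `φ* ∘ σ x` with respect to the generators `Y` equals
`(lift of φ*) ∘ σ x`.
-/

noncomputable section

open Polynomial MvPolynomial TensorProduct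
open scoped TensorProduct

namespace Stmt10

variable (k : Type) [Field k] (ι Λ : Type) [AddCommGroup Λ]
variable (Tg Pg : Type) [Group Tg] [Group Pg]
variable (ιT : Tg →* Pg)
variable (σ : Pg →* (MvPolynomial ι k ≃ₐ[k] MvPolynomial ι k))
variable (χ : Λ → (Tg →* kˣ))

/-- The comultiplication of `k[t]`: `Δ t = t ⊗ 1 + 1 ⊗ t`. -/
def gaComul : Polynomial k →ₐ[k] Polynomial k ⊗[k] Polynomial k :=
  Polynomial.aeval (Polynomial.X ⊗ₜ[k] (1 : Polynomial k) + (1 : Polynomial k) ⊗ₜ[k] Polynomial.X)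

/-- The counit of `k[t]`: evaluation at `0`. -/
def gaCounit : Polynomial k →ₐ[k] k := Polynomial.aeval 0

/-- The Hopf ideal `(t^m)` of `k[t]`. -/
def gaI (m : ℕ) : Ideal (Polynomial k) := Ideal.span {Polynomial.X ^ m}

/-- The canonical projection `π : k[t] → k[t]/(t^m)`. -/
def gaπ (m : ℕ) : Polynomial k →ₐ[k] Polynomial k ⧸ gaI k m :=
  Ideal.Quotient.mkₐ k (gaI k m)

/-- The counit (augmentation) of `k[U]`. -/
def uCounit : MvPolynomial ι k →ₐ[k] k := MvPolynomial.aeval (fun _ : ι => (0 : k))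

/-- The weight space `k[U]_λ`: the `χ λ`-eigenspace of the `T(k)`-action on `k[U]`. -/
def wtSp (lam : Λ) : Submodule k (MvPolynomial ι k) where
  carrier := {f | ∀ s : Tg, σ (ιT s) f = ((χ lam s : kˣ) : k) • f}
  add_mem' := by
    intro a b ha hb s
    rw [map_add, ha s, hb s, smul_add]
  zero_mem' := by
    intro s
    rw [map_zero, smul_zero]
  smul_mem' := by
    intro c f hf s
    rw [map_smul, hf s, smul_comm]

/-!
Weigh the coordinate `Y_α` by `ht_J(α)`. As `ht_J` is nonnegative on the roots of `P`, conjugation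
by `P(k)` does not increase the weighted degree of a function on `U`, and as comultiplication
preserves `T`-weights, it is filtered by the weighted degree. Comparing the coefficients of
`t^{p^(r-1)} ⊗ t^b` in `Δ(φ* f)`, where the binomial coefficient `(p^(r-1) + b).choose p^(r-1)` is
prime to `p`, shows by induction that `φ*` sends weighted degree `m` to `t`-degree at most
`m * p^(r-1)`. Hence the lift of `φ*` sends functions of weighted degree less than `p`, such as the
conjugates of the coordinates, to polynomials of degree less than `p^r`, and such polynomials are
determined by their residues modulo `t^(p^r)`.
-/

section WeightedDegree

variable {R τ M : Type*} [CommSemiring R] [AddCommGroup M]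

/-- The polynomials all of whose monomials have weighted degree at most `m` with respect to the
weights `w`; for `w = 1` this is `MvPolynomial.restrictTotalDegree`. -/
def restrictWeightedDegree (R : Type*) {τ : Type*} [CommSemiring R] (w : τ → ℕ) (m : ℕ) :
    Submodule R (MvPolynomial τ R) :=
  restrictSupport R {d | Finsupp.weight w d ≤ m}

theorem X_mem_restrictWeightedDegree (w : τ → ℕ) (i : τ) :
    (MvPolynomial.X i : MvPolynomial τ R) ∈ restrictWeightedDegree R w (w i) :=
  (monomial_mem_restrictSupport R).2 <| Or.inl <| by simp [Finsupp.weight_single]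

theorem restrictWeightedDegree_zero {w : τ → ℕ} (hw : ∀ i, w i ≠ 0) :
    restrictWeightedDegree R w 0 = 1 := by
  have : Finsupp.NonTorsionWeight ℕ w := Finsupp.nonTorsionWeight_of ℕ w hw
  rw [← restrictSupport_zero, restrictWeightedDegree]
  congr 1
  ext d
  simp [Finsupp.weight_eq_zero_iff_eq_zero]

theorem natDegree_le_of_mem_restrictWeightedDegree {w : τ → ℕ} {q m : ℕ}
    {L : MvPolynomial τ R →ₐ[R] R[X]} (hL : ∀ i, (L (MvPolynomial.X i)).natDegree ≤ w i * q)
    {f : MvPolynomial τ R} (hf : f ∈ restrictWeightedDegree R w m) :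
    (L f).natDegree ≤ m * q := by
  rw [f.as_sum, map_sum]
  refine natDegree_sum_le_of_forall_le _ _ fun d hd => ?_
  rw [MvPolynomial.monomial_eq, map_mul, MvPolynomial.algHom_C, map_finsuppProd,
    Polynomial.algebraMap_eq]
  calc (Polynomial.C (MvPolynomial.coeff d f) *
          d.prod fun i e => L (MvPolynomial.X i ^ e)).natDegree
      ≤ (d.prod fun i e => L (MvPolynomial.X i ^ e)).natDegree := natDegree_C_mul_le _ _
    _ ≤ ∑ i ∈ d.support, (L (MvPolynomial.X i ^ d i)).natDegree := natDegree_prod_le _ _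
    _ ≤ ∑ i ∈ d.support, d i * (w i * q) := Finset.sum_le_sum fun i _ => by
        rw [map_pow]
        exact natDegree_pow_le_of_le _ (hL i)
    _ = Finsupp.weight w d * q := by
        simp only [Finsupp.weight_apply, Finsupp.sum, Finset.sum_mul, smul_eq_mul, mul_assoc]
    _ ≤ m * q := Nat.mul_le_mul_right q (hf hd)

theorem mem_degreeLT_of_mem_restrictWeightedDegree {w : τ → ℕ} {q m n : ℕ}
    {L : MvPolynomial τ R →ₐ[R] R[X]} (hL : ∀ i, (L (MvPolynomial.X i)).natDegree ≤ w i * q)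
    (hmn : m * q < n) {f : MvPolynomial τ R} (hf : f ∈ restrictWeightedDegree R w m) :
    L f ∈ degreeLT R n :=
  mem_degreeLT.2 <| degree_le_natDegree.trans_lt <| Nat.cast_lt.2 <|
    (natDegree_le_of_mem_restrictWeightedDegree hL hf).trans_lt hmn

variable {v : τ → M} {w : τ → ℕ} {h : M →+ ℤ}

theorem map_weight_eq_neg_weight (hvw : ∀ i, h (v i) = -(w i : ℤ)) (d : τ →₀ ℕ) :
    h (Finsupp.weight v d) = -(Finsupp.weight w d : ℤ) := by
  simp [Finsupp.weight_apply, Finsupp.sum, hvw]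

theorem weightedHomogeneousSubmodule_le_restrictWeightedDegree
    (hvw : ∀ i, h (v i) = -(w i : ℤ)) {m : ℕ} {lam : M} (hlam : -(m : ℤ) ≤ h lam) :
    weightedHomogeneousSubmodule R v lam ≤ restrictWeightedDegree R w m := by
  intro f hf d hd
  have hd_weight : Finsupp.weight v d = lam := hf (MvPolynomial.mem_support_iff.1 hd)
  have hd_height := map_weight_eq_neg_weight hvw d
  rw [hd_weight] at hd_height
  rw [Set.mem_ofPred_eq]
  omega

theorem restrictWeightedDegree_eq_iSup (hvw : ∀ i, h (v i) = -(w i : ℤ)) (m : ℕ) :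
    restrictWeightedDegree R w m =
      ⨆ (lam : M) (_ : -(m : ℤ) ≤ h lam), weightedHomogeneousSubmodule R v lam := by
  refine le_antisymm ?_ (iSup₂_le fun lam hlam =>
    weightedHomogeneousSubmodule_le_restrictWeightedDegree hvw hlam)
  rw [restrictWeightedDegree, restrictSupport_eq_span, Submodule.span_le]
  rintro _ ⟨d, hd, rfl⟩
  have hheight : -(m : ℤ) ≤ h (Finsupp.weight v d) := by
    rw [map_weight_eq_neg_weight hvw]
    exact neg_le_neg (Int.ofNat_le.2 hd)
  exact Submodule.mem_iSup_of_mem _ <| Submodule.mem_iSup_of_mem hheight <|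
    isWeightedHomogeneous_monomial v d 1 rfl

theorem exists_height_eq_neg_of_ne_zero (hvw : ∀ i, h (v i) = -(w i : ℤ)) {lam : M}
    {f : MvPolynomial τ R} (hf : f ∈ weightedHomogeneousSubmodule R v lam) (hf0 : f ≠ 0) :
    ∃ n : ℕ, h lam = -(n : ℤ) := by
  obtain ⟨d, hd⟩ := MvPolynomial.ne_zero_iff.1 hf0
  exact ⟨Finsupp.weight w d, by rw [← map_weight_eq_neg_weight hvw, hf hd]⟩

end WeightedDegree

section TensorFiltration

variable {R A : Type*} [CommSemiring R] [AddCommMonoid A] [Module R A]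

/-- The filtration that a filtration `F` of `A` induces on `A ⊗ A`: its `m`-th step is
`∑_{i + j = m} F i ⊗ F j`. A comultiplication is filtered if it maps `F m` into this step. -/
def tensorFiltration (F : ℕ → Submodule R A) (m : ℕ) : Submodule R (A ⊗[R] A) :=
  ⨆ (ij : ℕ × ℕ) (_ : ij.1 + ij.2 = m),
    LinearMap.range (TensorProduct.mapIncl (F ij.1) (F ij.2))

theorem tmul_mem_tensorFiltration {F : ℕ → Submodule R A} {i j : ℕ} {a b : A} (ha : a ∈ F i)
    (hb : b ∈ F j) : a ⊗ₜ[R] b ∈ tensorFiltration F (i + j) :=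
  Submodule.mem_iSup_of_mem (i, j) <|
    Submodule.mem_iSup_of_mem rfl ⟨⟨a, ha⟩ ⊗ₜ ⟨b, hb⟩, rfl⟩

theorem dualDistrib_map {B C D : Type*} [AddCommMonoid B] [Module R B] [AddCommMonoid C]
    [Module R C] [AddCommMonoid D] [Module R D] (α : Module.Dual R C) (β : Module.Dual R D)
    (f : A →ₗ[R] C) (g : B →ₗ[R] D) (z : A ⊗[R] B) :
    TensorProduct.dualDistrib R C D (α ⊗ₜ β) (TensorProduct.map f g z) =
      TensorProduct.dualDistrib R A B ((α ∘ₗ f) ⊗ₜ (β ∘ₗ g)) z := by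
  suffices TensorProduct.dualDistrib R C D (α ⊗ₜ β) ∘ₗ TensorProduct.map f g =
      TensorProduct.dualDistrib R A B ((α ∘ₗ f) ⊗ₜ (β ∘ₗ g)) from DFunLike.congr_fun this z
  exact TensorProduct.ext' fun _ _ => rfl

theorem dualDistrib_eq_zero_of_mem_tensorFiltration {F : ℕ → Submodule R A} {m : ℕ}
    {α β : Module.Dual R A}
    (hαβ : ∀ i j, i + j = m → ∀ a ∈ F i, ∀ b ∈ F j, α a * β b = 0)
    {z : A ⊗[R] A} (hz : z ∈ tensorFiltration F m) :
    TensorProduct.dualDistrib R A A (α ⊗ₜ β) z = 0 := by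
  suffices tensorFiltration F m ≤ LinearMap.ker (TensorProduct.dualDistrib R A A (α ⊗ₜ β)) from
    this hz
  refine iSup₂_le fun ij hij => ?_
  rw [TensorProduct.range_mapIncl, Submodule.map₂_le]
  exact hαβ ij.1 ij.2 hij

end TensorFiltration

theorem restrictWeightedDegree_le_comap_tensorFiltration {R τ M : Type*} [CommSemiring R]
    [AddCommGroup M] {v : τ → M} {w : τ → ℕ} {h : M →+ ℤ} (hvw : ∀ i, h (v i) = -(w i : ℤ))
    {Δ : MvPolynomial τ R →ₗ[R] MvPolynomial τ R ⊗[R] MvPolynomial τ R}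
    (hΔ : ∀ lam, ∀ f ∈ weightedHomogeneousSubmodule R v lam,
      Δ f ∈ ⨆ (pr : M × M) (_ : pr.1 + pr.2 = lam), LinearMap.range (TensorProduct.mapIncl
        (weightedHomogeneousSubmodule R v pr.1) (weightedHomogeneousSubmodule R v pr.2)))
    (m : ℕ) :
    restrictWeightedDegree R w m ≤ (tensorFiltration (restrictWeightedDegree R w) m).comap Δ := by
  rw [restrictWeightedDegree_eq_iSup hvw]
  refine iSup₂_le fun lam hlam f hf => ?_
  suffices _ ≤ tensorFiltration (restrictWeightedDegree R w) m from this (hΔ lam f hf)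
  refine iSup₂_le fun pr hpr => ?_
  rw [TensorProduct.range_mapIncl, Submodule.map₂_le]
  intro a ha b hb
  rcases eq_or_ne a 0 with rfl | ha0
  · simp
  rcases eq_or_ne b 0 with rfl | hb0
  · simp
  obtain ⟨i, hi⟩ := exists_height_eq_neg_of_ne_zero hvw ha ha0
  obtain ⟨j, hj⟩ := exists_height_eq_neg_of_ne_zero hvw hb hb0
  have hheight : h lam = h pr.1 + h pr.2 := by rw [← hpr, map_add]
  obtain ⟨e, rfl⟩ : ∃ e, m = i + e := Nat.exists_eq_add_of_le (by omega)
  exact tmul_mem_tensorFiltration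
    (weightedHomogeneousSubmodule_le_restrictWeightedDegree hvw (by omega) ha)
    (weightedHomogeneousSubmodule_le_restrictWeightedDegree hvw (by omega) hb)

section AdditiveGroup

variable {k} {m : ℕ}

theorem gaComul_X_pow (n : ℕ) :
    gaComul k (Polynomial.X ^ n) = ∑ ij ∈ Finset.HasAntidiagonal.antidiagonal n,
      n.choose ij.1 • ((Polynomial.X ^ ij.1 : k[X]) ⊗ₜ[k] (Polynomial.X ^ ij.2 : k[X])) := by
  rw [gaComul, map_pow, Polynomial.aeval_X, (Commute.all _ _).add_pow']
  simp only [Algebra.TensorProduct.tmul_pow, one_pow, Algebra.TensorProduct.tmul_mul_tmul, one_mul,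
    mul_one]

theorem dualDistrib_lcoeff_gaComul (a b : ℕ) (g : k[X]) :
    TensorProduct.dualDistrib k k[X] k[X] (lcoeff k a ⊗ₜ lcoeff k b) (gaComul k g) =
      ((a + b).choose a : k) * g.coeff (a + b) := by
  induction g using Polynomial.induction_on' with
  | add f g hf hg => rw [map_add, map_add, hf, hg, Polynomial.coeff_add, mul_add]
  | monomial n c =>
    have hterm (ij : ℕ × ℕ) : TensorProduct.dualDistrib k k[X] k[X] (lcoeff k a ⊗ₜ lcoeff k b)
        (n.choose ij.1 • ((Polynomial.X ^ ij.1 : k[X]) ⊗ₜ[k] (Polynomial.X ^ ij.2 : k[X]))) =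
        if (a, b) = ij then (n.choose a : k) else 0 := by
      rw [map_nsmul, TensorProduct.dualDistrib_apply, Polynomial.lcoeff_apply,
        Polynomial.lcoeff_apply, Polynomial.coeff_X_pow, Polynomial.coeff_X_pow]
      grind
    rw [← smul_X_eq_monomial, map_smul, map_smul, gaComul_X_pow, map_sum,
      Finset.sum_congr rfl fun ij _ => hterm ij, Finset.sum_ite_eq, Polynomial.coeff_smul,
      Polynomial.coeff_X_pow]
    simp only [Finset.HasAntidiagonal.mem_antidiagonal, smul_eq_mul]
    split_ifs with hn
    · rw [hn, mul_one, mul_comm]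
    · simp

/-- The `n`-th coefficient as a functional on `k[t]/(t^m)`, for `n < m`. -/
def quotCoeff {n : ℕ} (hn : n < m) : Module.Dual k (k[X] ⧸ gaI k m) :=
  Submodule.liftQ ((gaI k m).restrictScalars k) (lcoeff k n) fun _ hg =>
    X_pow_dvd_iff.1 (Ideal.mem_span_singleton.1 hg) n hn

theorem quotCoeff_gaπ {n : ℕ} (hn : n < m) (g : k[X]) :
    quotCoeff hn (gaπ k m g) = g.coeff n :=
  rfl

theorem quotCoeff_algebraMap {n : ℕ} (hn : n < m) (hn0 : n ≠ 0) (c : k) :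
    quotCoeff hn (algebraMap k (k[X] ⧸ gaI k m) c) = 0 := by
  rw [← (gaπ k m).commutes, quotCoeff_gaπ, Polynomial.algebraMap_eq,
    Polynomial.coeff_C_of_ne_zero hn0]

theorem eq_of_gaπ_eq {f g : k[X]} (hf : f ∈ degreeLT k m) (hg : g ∈ degreeLT k m)
    (hfg : gaπ k m f = gaπ k m g) : f = g := by
  have hdvd : (Polynomial.X : k[X]) ^ m ∣ f - g :=
    Ideal.mem_span_singleton.1 (Ideal.Quotient.eq.1 hfg)
  refine sub_eq_zero.1 (eq_zero_of_dvd_of_degree_lt hdvd ?_)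
  rw [degree_X_pow]
  exact mem_degreeLT.1 (sub_mem hf hg)

variable {ΔQ : (k[X] ⧸ gaI k m) →ₐ[k] (k[X] ⧸ gaI k m) ⊗[k] (k[X] ⧸ gaI k m)}

theorem dualDistrib_quotCoeff
    (hΔQ : ΔQ.comp (gaπ k m) = (Algebra.TensorProduct.map (gaπ k m) (gaπ k m)).comp (gaComul k))
    {a b : ℕ} (ha : a < m) (hb : b < m) (hab : a + b < m) (q : k[X] ⧸ gaI k m) :
    TensorProduct.dualDistrib k _ _ (quotCoeff ha ⊗ₜ quotCoeff hb) (ΔQ q) =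
      ((a + b).choose a : k) * quotCoeff hab q := by
  obtain ⟨g, rfl⟩ : ∃ g, gaπ k m g = q := Ideal.Quotient.mk_surjective q
  have hg : ΔQ (gaπ k m g) = _ := DFunLike.congr_fun hΔQ g
  rw [hg, quotCoeff_gaπ, ← dualDistrib_lcoeff_gaComul]
  exact dualDistrib_map _ _ (gaπ k m).toLinearMap (gaπ k m).toLinearMap (gaComul k g)

theorem choose_mul_quotCoeff {A : Type*} [CommSemiring A] [Algebra k A]
    {comul : A →ₐ[k] A ⊗[k] A} {ψ : A →ₐ[k] k[X] ⧸ gaI k m}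
    (hΔQ : ΔQ.comp (gaπ k m) = (Algebra.TensorProduct.map (gaπ k m) (gaπ k m)).comp (gaComul k))
    (hψ : (Algebra.TensorProduct.map ψ ψ).comp comul = ΔQ.comp ψ)
    {a b : ℕ} (ha : a < m) (hb : b < m) (hab : a + b < m) (f : A) :
    ((a + b).choose a : k) * quotCoeff hab (ψ f) =
      TensorProduct.dualDistrib k A A
        ((quotCoeff ha ∘ₗ ψ.toLinearMap) ⊗ₜ (quotCoeff hb ∘ₗ ψ.toLinearMap)) (comul f) := by
  have hf : _ = ΔQ (ψ f) := DFunLike.congr_fun hψ f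
  rw [← dualDistrib_quotCoeff hΔQ ha hb, ← hf]
  exact dualDistrib_map _ _ ψ.toLinearMap ψ.toLinearMap (comul f)

end AdditiveGroup

theorem not_dvd_choose_prime_pow {p r n : ℕ} (hp : p.Prime) (hrn : p ^ r ≤ n)
    (hn : n < p ^ (r + 1)) : ¬ p ∣ n.choose (p ^ r) := by
  have hlog : Nat.log p n < r + 1 := Nat.log_lt_of_lt_pow (by have := pow_pos hp.pos r; omega) hn
  have hfactorization : (n.choose (p ^ r)).factorization p = 0 := by
    rw [Nat.factorization_choose hp hrn hlog, Finset.card_eq_zero, Finset.filter_eq_empty_iff]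
    intro i hi
    have hmod : p ^ r % p ^ i = 0 :=
      Nat.mod_eq_zero_of_dvd (pow_dvd_pow p (Nat.lt_succ_iff.1 (Finset.mem_Ico.1 hi).2))
    rw [hmod, zero_add, not_le]
    exact Nat.mod_lt _ (pow_pos hp.pos i)
  exact fun hdvd => (hp.factorization_pos_of_dvd (Nat.choose_pos hrn).ne' hdvd).ne' hfactorization

theorem quotCoeff_eq_zero_of_mem_filtration {k : Type} [Field k] {p r : ℕ} (hp : p.Prime)
    [CharP k p] {A : Type*} [CommSemiring A] [Algebra k A] {F : ℕ → Submodule k A}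
    {comul : A →ₐ[k] A ⊗[k] A} (hF0 : F 0 ≤ 1)
    (hF : ∀ m, F m ≤ (tensorFiltration F m).comap comul.toLinearMap)
    {ΔQ : (k[X] ⧸ gaI k (p ^ (r + 1))) →ₐ[k]
      (k[X] ⧸ gaI k (p ^ (r + 1))) ⊗[k] (k[X] ⧸ gaI k (p ^ (r + 1)))}
    (hΔQ : ΔQ.comp (gaπ k (p ^ (r + 1))) =
      (Algebra.TensorProduct.map (gaπ k (p ^ (r + 1))) (gaπ k (p ^ (r + 1)))).comp (gaComul k))
    {ψ : A →ₐ[k] k[X] ⧸ gaI k (p ^ (r + 1))}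
    (hψ : (Algebra.TensorProduct.map ψ ψ).comp comul = ΔQ.comp ψ)
    {m n : ℕ} (hmn : m * p ^ r < n) (hn : n < p ^ (r + 1)) {f : A} (hf : f ∈ F m) :
    quotCoeff hn (ψ f) = 0 := by
  have hconst {n : ℕ} (hn : n < p ^ (r + 1)) (hn0 : n ≠ 0) {f : A} (hf : f ∈ F 0) :
      quotCoeff hn (ψ f) = 0 := by
    obtain ⟨c, rfl⟩ := Submodule.mem_one.1 (hF0 hf)
    rw [ψ.commutes, quotCoeff_algebraMap hn hn0]
  induction n using Nat.strong_induction_on generalizing m f with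
  | _ n ih =>
  obtain rfl | hm := Nat.eq_zero_or_pos m
  · exact hconst hn (by omega) hf
  have hrn : p ^ r ≤ n := (Nat.le_mul_of_pos_left _ hm).trans hmn.le
  obtain ⟨b, rfl⟩ := Nat.exists_eq_add_of_le hrn
  have hchoose : (((p ^ r + b).choose (p ^ r) : ℕ) : k) ≠ 0 := by
    rw [Ne, CharP.cast_eq_zero_iff k p]
    exact not_dvd_choose_prime_pow hp hrn hn
  refine (mul_eq_zero.1 ?_).resolve_left hchoose
  have ha : p ^ r < p ^ (r + 1) := by omega
  have hb : b < p ^ (r + 1) := by omega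
  rw [choose_mul_quotCoeff hΔQ hψ ha hb]
  refine dualDistrib_eq_zero_of_mem_tensorFiltration (fun i j hij u hu v hv => ?_) (hF m hf)
  have hpr : 0 < p ^ r := pow_pos hp.pos r
  obtain rfl | hi := Nat.eq_zero_or_pos i
  · exact mul_eq_zero_of_left (hconst ha hpr.ne' hu) _
  · refine mul_eq_zero_of_right _ (ih b (by omega) ?_ hb hv)
    nlinarith

section Lift

variable {k ι} {m : ℕ}

/-- `L` is the lift `φ*_Y : k[U] → k[t]` of the comorphism `ψ = φ*` with respect to the coordinates
of `U`, where `𝔾_{a(r)}` corresponds to `m = p ^ r`. -/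
def IsLift (ψ : MvPolynomial ι k →ₐ[k] k[X] ⧸ gaI k m) (L : MvPolynomial ι k →ₐ[k] k[X]) : Prop :=
  ∀ i, L (MvPolynomial.X i) ∈ degreeLT k m ∧
    gaπ k m (L (MvPolynomial.X i)) = ψ (MvPolynomial.X i)

theorem IsLift.gaπ_comp {ψ : MvPolynomial ι k →ₐ[k] k[X] ⧸ gaI k m}
    {L : MvPolynomial ι k →ₐ[k] k[X]} (hL : IsLift ψ L) : (gaπ k m).comp L = ψ :=
  MvPolynomial.algHom_ext fun i => (hL i).2

theorem IsLift.eq_comp {ψ : MvPolynomial ι k →ₐ[k] k[X] ⧸ gaI k m}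
    {θ : MvPolynomial ι k →ₐ[k] MvPolynomial ι k} {L L' : MvPolynomial ι k →ₐ[k] k[X]}
    (hL : IsLift (ψ.comp θ) L) (hL' : IsLift ψ L')
    (hθ : ∀ i, L' (θ (MvPolynomial.X i)) ∈ degreeLT k m) : L = L'.comp θ := by
  refine MvPolynomial.algHom_ext fun i => eq_of_gaπ_eq (hL i).1 (hθ i) ?_
  rw [(hL i).2, ← hL'.gaπ_comp]
  rfl

variable {p r : ℕ} [CharP k p] {w : ι → ℕ}
  {comul : MvPolynomial ι k →ₐ[k] MvPolynomial ι k ⊗[k] MvPolynomial ι k}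
  {ΔQ : (k[X] ⧸ gaI k (p ^ (r + 1))) →ₐ[k]
    (k[X] ⧸ gaI k (p ^ (r + 1))) ⊗[k] (k[X] ⧸ gaI k (p ^ (r + 1)))}
  {ψ : MvPolynomial ι k →ₐ[k] k[X] ⧸ gaI k (p ^ (r + 1))} {L : MvPolynomial ι k →ₐ[k] k[X]}

theorem IsLift.natDegree_X_le (hL : IsLift ψ L) (hp : p.Prime) (hw : ∀ i, w i ≠ 0)
    (hcomul : ∀ m, restrictWeightedDegree k w m ≤
      (tensorFiltration (restrictWeightedDegree k w) m).comap comul.toLinearMap)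
    (hΔQ : ΔQ.comp (gaπ k (p ^ (r + 1))) =
      (Algebra.TensorProduct.map (gaπ k (p ^ (r + 1))) (gaπ k (p ^ (r + 1)))).comp (gaComul k))
    (hψ : (Algebra.TensorProduct.map ψ ψ).comp comul = ΔQ.comp ψ) (i : ι) :
    (L (MvPolynomial.X i)).natDegree ≤ w i * p ^ r := by
  refine natDegree_le_iff_coeff_eq_zero.2 fun n hn => ?_
  rcases lt_or_ge n (p ^ (r + 1)) with hlt | hge
  · rw [← quotCoeff_gaπ hlt, (hL i).2]
    exact quotCoeff_eq_zero_of_mem_filtration hp (restrictWeightedDegree_zero hw).le hcomul hΔQ hψ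
      hn hlt (X_mem_restrictWeightedDegree w i)
  · exact coeff_eq_zero_of_degree_lt ((mem_degreeLT.1 (hL i).1).trans_le (by exact_mod_cast hge))

end Lift

section TorusWeights

theorem coeff_algHom_of_X_eq_smul {R τ : Type*} [CommSemiring R]
    {θ : MvPolynomial τ R →ₐ[R] MvPolynomial τ R} {a : τ → R}
    (hθ : ∀ i, θ (MvPolynomial.X i) = a i • MvPolynomial.X i) (d : τ →₀ ℕ)
    (f : MvPolynomial τ R) :
    MvPolynomial.coeff d (θ f) = (d.prod fun i e => a i ^ e) * MvPolynomial.coeff d f := by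
  classical
  induction f using MvPolynomial.induction_on' with
  | add f g hf hg => simp only [map_add, MvPolynomial.coeff_add, hf, hg, mul_add]
  | monomial e c =>
    have hmonomial : θ (MvPolynomial.monomial e c) =
        (e.prod fun i n => a i ^ n) • MvPolynomial.monomial e c := by
      simp only [MvPolynomial.monomial_eq, map_mul, MvPolynomial.algHom_C, Finsupp.prod, map_prod,
        map_pow, hθ, _root_.smul_pow, Finset.prod_smul, mul_smul_comm,
        MvPolynomial.algebraMap_eq]
    rw [hmonomial, MvPolynomial.coeff_smul, smul_eq_mul, MvPolynomial.coeff_monomial]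
    split_ifs with hed
    · rw [hed]
    · simp only [mul_zero]

variable {k ι Λ Tg Pg ιT σ χ}

theorem character_weight (hχadd : ∀ lam mu s, χ (lam + mu) s = χ lam s * χ mu s) (v : ι → Λ)
    (d : ι →₀ ℕ) (s : Tg) :
    χ (Finsupp.weight v d) s = d.prod fun i e => χ (v i) s ^ e := by
  let evalAt : Λ →+ Additive kˣ :=
    AddMonoidHom.mk' (fun lam => Additive.ofMul (χ lam s)) fun lam mu => hχadd lam mu s
  have hsum : evalAt (Finsupp.weight v d) = d.sum fun i e => e • evalAt (v i) := by
    simp only [Finsupp.weight_apply, map_finsuppSum, map_nsmul]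
  exact hsum

theorem wtSp_eq_weightedHomogeneousSubmodule {v : ι → Λ}
    (hχadd : ∀ lam mu s, χ (lam + mu) s = χ lam s * χ mu s)
    (hχinj : ∀ lam mu : Λ, (∀ s, χ lam s = χ mu s) → lam = mu)
    (hgen : ∀ (s : Tg) (i : ι),
      σ (ιT s) (MvPolynomial.X i) = ((χ (v i) s : kˣ) : k) • MvPolynomial.X i) :
    wtSp k ι Λ Tg Pg ιT σ χ = weightedHomogeneousSubmodule k v := by
  have hcoeff (s : Tg) (d : ι →₀ ℕ) (f : MvPolynomial ι k) :
      MvPolynomial.coeff d (σ (ιT s) f) =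
        (χ (Finsupp.weight v d) s : k) * MvPolynomial.coeff d f := by
    rw [character_weight hχadd]
    simpa [Finsupp.prod] using
      coeff_algHom_of_X_eq_smul (θ := (σ (ιT s)).toAlgHom) (hgen s) d f
  ext lam f
  constructor
  · intro hf d hd
    refine hχinj _ _ fun s => Units.ext (mul_right_cancel₀ hd ?_)
    rw [← hcoeff, hf s, MvPolynomial.coeff_smul, smul_eq_mul]
  · intro hf s
    ext d
    rw [hcoeff, MvPolynomial.coeff_smul, smul_eq_mul]
    rcases eq_or_ne (MvPolynomial.coeff d f) 0 with hd | hd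
    · rw [hd, mul_zero, mul_zero]
    · rw [hf hd]

end TorusWeights

section Stability

variable {k ι Λ Tg Pg ιT σ χ}

theorem le_comap_of_closure_eq_top {R A G : Type*} [CommSemiring R] [Semiring A] [Algebra R A]
    [Group G] {ρ : G →* (A ≃ₐ[R] A)} {N : Submodule R A} {S : Set G}
    (hSinv : ∀ g ∈ S, g⁻¹ ∈ S) (hS : Subgroup.closure S = ⊤)
    (hN : ∀ g ∈ S, N ≤ N.comap (ρ g).toLinearMap) (g : G) :
    N ≤ N.comap (ρ g).toLinearMap := by
  have hg : g ∈ Subgroup.closure S := hS ▸ Subgroup.mem_top g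
  induction hg using Subgroup.closure_induction'' with
  | mem g hg => exact hN g hg
  | inv_mem g hg => exact hN g⁻¹ (hSinv g hg)
  | one => exact fun f hf => by simpa using hf
  | mul a b _ _ ha hb =>
    intro f hf
    simpa using ha (hb hf)

theorem iSup_wtSp_le_comap {h : Λ →+ ℤ} {κ : Type*} {proot : κ → Λ}
    (hproot : ∀ j, 0 ≤ h (proot j)) {uelt : κ → Set Pg}
    (huinv : ∀ j, ∀ g ∈ uelt j, g⁻¹ ∈ uelt j)
    (hPgen : Subgroup.closure (Set.range ⇑ιT ∪ ⋃ j, uelt j) = ⊤)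
    (hU : ∀ j, ∀ g ∈ uelt j, ∀ (lam : Λ), ∀ f ∈ wtSp k ι Λ Tg Pg ιT σ χ lam,
      σ g f ∈ ⨆ c : ℕ, wtSp k ι Λ Tg Pg ιT σ χ (lam + c • proot j)) (m : ℤ) (g : Pg) :
    (⨆ (lam : Λ) (_ : m ≤ h lam), wtSp k ι Λ Tg Pg ιT σ χ lam) ≤
      (⨆ (lam : Λ) (_ : m ≤ h lam), wtSp k ι Λ Tg Pg ιT σ χ lam).comap (σ g).toLinearMap := by
  set N := ⨆ (lam : Λ) (_ : m ≤ h lam), wtSp k ι Λ Tg Pg ιT σ χ lam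
  have hle {lam : Λ} (hlam : m ≤ h lam) : wtSp k ι Λ Tg Pg ιT σ χ lam ≤ N :=
    le_iSup₂_of_le lam hlam le_rfl
  refine le_comap_of_closure_eq_top ?_ hPgen ?_ g
  · rintro _ (⟨s, rfl⟩ | hg)
    · exact Or.inl ⟨s⁻¹, map_inv ιT s⟩
    · obtain ⟨j, hj⟩ := Set.mem_iUnion.1 hg
      exact Or.inr (Set.mem_iUnion.2 ⟨j, huinv j _ hj⟩)
  · intro g hg
    refine iSup₂_le fun lam hlam f hf => ?_
    rw [Submodule.mem_comap]
    rcases hg with ⟨s, rfl⟩ | hg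
    · have hfs : σ (ιT s) f = _ := hf s
      exact hfs ▸ N.smul_mem _ (hle hlam hf)
    · obtain ⟨j, hj⟩ := Set.mem_iUnion.1 hg
      suffices _ ≤ N from this (hU j g hj lam f hf)
      refine iSup_le fun c => hle ?_
      rw [map_add, map_nsmul]
      exact le_add_of_le_of_nonneg hlam (nsmul_nonneg (hproot j) c)

theorem stmt_10_general {p r : ℕ} (hp : p.Prime) [CharP k p] (hr : 1 ≤ r)
    {root : ι → Λ} {htJ : Λ →+ ℤ} (hroot : ∀ i, 1 ≤ htJ (root i))
    (hnil : ∀ i, htJ (root i) < (p : ℤ))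
    {comul : MvPolynomial ι k →ₐ[k] MvPolynomial ι k ⊗[k] MvPolynomial ι k}
    (hχadd : ∀ lam mu s, χ (lam + mu) s = χ lam s * χ mu s)
    (hχinj : ∀ lam mu : Λ, (∀ s, χ lam s = χ mu s) → lam = mu)
    (hgen : ∀ (s : Tg) (i : ι),
      σ (ιT s) (MvPolynomial.X i) = ((χ (- root i) s : kˣ) : k) • MvPolynomial.X i)
    {κ : Type*} {proot : κ → Λ} (hproot : ∀ j, 0 ≤ htJ (proot j))
    {uelt : κ → Set Pg} (huinv : ∀ j, ∀ g ∈ uelt j, g⁻¹ ∈ uelt j)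
    (hPgen : Subgroup.closure (Set.range ⇑ιT ∪ ⋃ j, uelt j) = (⊤ : Subgroup Pg))
    (hU : ∀ j, ∀ g ∈ uelt j, ∀ (lam : Λ), ∀ f ∈ wtSp k ι Λ Tg Pg ιT σ χ lam,
      σ g f ∈ ⨆ c : ℕ, wtSp k ι Λ Tg Pg ιT σ χ (lam + c • proot j))
    (hwt : ∀ (lam : Λ), ∀ x ∈ wtSp k ι Λ Tg Pg ιT σ χ lam,
      comul x ∈ ⨆ (pr : Λ × Λ) (_ : pr.1 + pr.2 = lam),
        LinearMap.range (TensorProduct.map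
          (wtSp k ι Λ Tg Pg ιT σ χ pr.1).subtype
          (wtSp k ι Λ Tg Pg ιT σ χ pr.2).subtype))
    {ΔQ : (k[X] ⧸ gaI k (p ^ r)) →ₐ[k] (k[X] ⧸ gaI k (p ^ r)) ⊗[k] (k[X] ⧸ gaI k (p ^ r))}
    (hΔQ : ΔQ.comp (gaπ k (p ^ r)) =
      (Algebra.TensorProduct.map (gaπ k (p ^ r)) (gaπ k (p ^ r))).comp (gaComul k))
    {ψ : MvPolynomial ι k →ₐ[k] k[X] ⧸ gaI k (p ^ r)}
    (hψΔ : (Algebra.TensorProduct.map ψ ψ).comp comul = ΔQ.comp ψ)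
    (x : Pg) {L L' : MvPolynomial ι k →ₐ[k] k[X]}
    (hL : IsLift (ψ.comp (σ x).toAlgHom) L) (hL' : IsLift ψ L') :
    L = L'.comp (σ x).toAlgHom := by
  obtain ⟨r, rfl⟩ := Nat.exists_eq_add_of_le' hr
  obtain ⟨w, hw⟩ : ∃ w : ι → ℕ, ∀ i, htJ (root i) = w i :=
    ⟨fun i => (htJ (root i)).toNat, fun i => (Int.toNat_of_nonneg (by grind)).symm⟩
  have hwtSp := wtSp_eq_weightedHomogeneousSubmodule hχadd hχinj hgen
  have hvw (i : ι) : htJ (-root i) = -(w i : ℤ) := by rw [map_neg, hw]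
  rw [hwtSp] at hwt
  have hcomul := restrictWeightedDegree_le_comap_tensorFiltration (Δ := comul.toLinearMap) hvw hwt
  have hdegree := hL'.natDegree_X_le hp (fun i => by grind) hcomul hΔQ hψΔ
  have hpow (i : ι) : w i * p ^ r < p ^ (r + 1) := by
    rw [pow_succ']
    exact Nat.mul_lt_mul_of_pos_right (by grind) (pow_pos hp.pos r)
  refine hL.eq_comp hL' fun i => mem_degreeLT_of_mem_restrictWeightedDegree hdegree (hpow i) ?_
  have hstable := iSup_wtSp_le_comap hproot huinv hPgen hU (-(w i : ℤ)) x
  simp only [hwtSp, ← restrictWeightedDegree_eq_iSup hvw] at hstable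
  exact hstable (X_mem_restrictWeightedDegree w i)

end Stability

theorem stmt_10 [IsAlgClosed k] (p r : ℕ) (hp : p.Prime) [CharP k p] (hr : 1 ≤ r)
    [Fintype ι]
    -- the roots `α_i` of `U` and the height function `ht_J`
    (root : ι → Λ) (htJ : Λ →+ ℤ) (hroot : ∀ i, 1 ≤ htJ (root i))
    -- the nilpotence class of `U` (equal to `max ht_J(α)`) is less than `p`:
    (hnil : ∀ i, htJ (root i) < (p : ℤ))
    -- the comultiplication of `k[U]` and its counit laws:
    (comul : MvPolynomial ι k →ₐ[k] MvPolynomial ι k ⊗[k] MvPolynomial ι k)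
    (hcul : ∀ f, (TensorProduct.lid k (MvPolynomial ι k))
        ((TensorProduct.map (uCounit k ι).toLinearMap
          (LinearMap.id : MvPolynomial ι k →ₗ[k] MvPolynomial ι k)) (comul f)) = f)
    (hcur : ∀ f, (TensorProduct.rid k (MvPolynomial ι k))
        ((TensorProduct.map (LinearMap.id : MvPolynomial ι k →ₗ[k] MvPolynomial ι k)
          (uCounit k ι).toLinearMap) (comul f)) = f)
    -- `P(k)` acts by automorphisms of the group scheme `U`:
    (hσΔ : ∀ g : Pg, comul.comp (σ g).toAlgHom =
        (Algebra.TensorProduct.map (σ g).toAlgHom (σ g).toAlgHom).comp comul)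
    (hσε : ∀ g : Pg, (uCounit k ι).comp (σ g).toAlgHom = uCounit k ι)
    -- characters of `T(k)` and the weights of the generators:
    (hχadd : ∀ lam mu s, χ (lam + mu) s = χ lam s * χ mu s)
    (hχinj : ∀ lam mu : Λ, (∀ s, χ lam s = χ mu s) → lam = mu)
    (hgen : ∀ (s : Tg) (i : ι),
        σ (ιT s) (MvPolynomial.X i) = ((χ (- root i) s : kˣ) : k) • MvPolynomial.X i)
    -- each generator is a weight vector of weight `-α_i` for the grading used in the
    -- construction of the lift, and the `T`-eigenspace grading:
    (hXwt : ∀ i, MvPolynomial.X i ∈ wtSp k ι Λ Tg Pg ιT σ χ (- root i))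
    -- the roots `α ∈ Φ⁺ ∪ Φ_J` and root subgroups of `P(k)`, generation, and [H, 27.2]:
    (κ : Type) (proot : κ → Λ) (hproot : ∀ j, 0 ≤ htJ (proot j))
    (uelt : κ → Set Pg) (huinv : ∀ j, ∀ g ∈ uelt j, g⁻¹ ∈ uelt j)
    (hPgen : Subgroup.closure (Set.range ⇑ιT ∪ ⋃ j, uelt j) = (⊤ : Subgroup Pg))
    (hU : ∀ j, ∀ g ∈ uelt j, ∀ (lam : Λ), ∀ f ∈ wtSp k ι Λ Tg Pg ιT σ χ lam,
        σ g f ∈ ⨆ c : ℕ, wtSp k ι Λ Tg Pg ιT σ χ (lam + c • proot j))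
    -- `T`-equivariance of the comultiplication on weight spaces:
    (hwt : ∀ (lam : Λ), ∀ x ∈ wtSp k ι Λ Tg Pg ιT σ χ lam,
        comul x ∈ ⨆ (pr : Λ × Λ) (_ : pr.1 + pr.2 = lam),
          LinearMap.range (TensorProduct.map
            (wtSp k ι Λ Tg Pg ιT σ χ pr.1).subtype
            (wtSp k ι Λ Tg Pg ιT σ χ pr.2).subtype))
    -- the induced comultiplication and counit of `k[t]/(t^{p^r})`:
    (ΔQ : (Polynomial k ⧸ gaI k (p ^ r)) →ₐ[k]
        (Polynomial k ⧸ gaI k (p ^ r)) ⊗[k] (Polynomial k ⧸ gaI k (p ^ r)))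
    (hΔQ : ΔQ.comp (gaπ k (p ^ r)) =
        (Algebra.TensorProduct.map (gaπ k (p ^ r)) (gaπ k (p ^ r))).comp (gaComul k))
    (εQ : (Polynomial k ⧸ gaI k (p ^ r)) →ₐ[k] k)
    (hεQ : εQ.comp (gaπ k (p ^ r)) = gaCounit k)
    -- the comorphism `φ*` of `φ : 𝔾_{a(r)} → U`:
    (ψ : MvPolynomial ι k →ₐ[k] Polynomial k ⧸ gaI k (p ^ r))
    (hψΔ : (Algebra.TensorProduct.map ψ ψ).comp comul = ΔQ.comp ψ)
    (hψε : εQ.comp ψ = uCounit k ι)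
    -- the element `x ∈ P(k)`:
    (x : Pg)
    -- `L` is the lift of `(x ⬝ φ)* = φ* ∘ x*` and `L'` is the lift of `φ*`:
    (L L' : MvPolynomial ι k →ₐ[k] Polynomial k)
    (hL : ∀ i : ι, L (MvPolynomial.X i) ∈ Polynomial.degreeLT k (p ^ r) ∧
        gaπ k (p ^ r) (L (MvPolynomial.X i)) = (ψ.comp (σ x).toAlgHom) (MvPolynomial.X i))
    (hL' : ∀ i : ι, L' (MvPolynomial.X i) ∈ Polynomial.degreeLT k (p ^ r) ∧
        gaπ k (p ^ r) (L' (MvPolynomial.X i)) = ψ (MvPolynomial.X i)) :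
    -- conclusion: `exp^r_U(x ⬝ φ) = x ⬝ exp^r_U(φ)`
    L = L'.comp (σ x).toAlgHom := by
  exact stmt_10_general hp hr hroot hnil hχadd hχinj hgen hproot huinv hPgen hU hwt
    hΔQ hψΔ x hL hL'

end Stmt10
end
end
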